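/- arXiv:1007.2391 — 2 statements merged into one kernel-verified Lean document; each statement's English description precedes it below -/
import Mathlib

section
/- Let H ⊂ ℂ^n be a compact convex set with nonempty interior and suppose (H,ν) satisfies the density condition. Then for every continuous Q : H → ℝ (with w = e^{−Q}) and every μ ∈ 𝓜(H), J^Q(μ) = W^Q(μ) = ( inf{ δ̄^{e^{−Q̃}}(H) · exp(∫_H Q̃ dμ) : Q̃ : H → ℝ continuous } ) · exp(−∫_H Q dμ). -/
open MeasureTheory Filter Topology ENNReal

noncomputable section

/-- Points of `ℂⁿ` (with the Euclidean metric). -/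
abbrev Pt (n : ℕ) := EuclideanSpace ℂ (Fin n)

instance Pt.measurableSpace (n : ℕ) : MeasurableSpace (Pt n) := borel _

instance Pt.borelSpace (n : ℕ) : BorelSpace (Pt n) := ⟨rfl⟩

/-- `s(d) = binomial(d+n, n)`, the number of multi-indices `α ∈ ℕⁿ` with `|α| ≤ d`. -/
def sdim (n d : ℕ) : ℕ := (d + n).choose n

lemma sdim_pos (n d : ℕ) : 0 < sdim n d := Nat.choose_pos (Nat.le_add_left n d)

/-- `E` is an enumeration of the multi-indices `α ∈ ℕⁿ` with `|α| ≤ d`. -/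
def IsEnum (n d : ℕ) (E : Fin (sdim n d) → (Fin n → ℕ)) : Prop :=
  Function.Injective E ∧ ∀ α : Fin n → ℕ, ((∑ i, α i) ≤ d ↔ α ∈ Set.range E)

/-- The Vandermonde determinant `VDM_d(a_1, …, a_{s(d)}) = det [a_j^{α_i}]`. -/
def VDM (n d : ℕ) (E : Fin (sdim n d) → (Fin n → ℕ))
    (a : Fin (sdim n d) → Pt n) : ℂ :=
  Matrix.det (Matrix.of fun i j => ∏ k, (a j k) ^ (E i k))

/-- `|VDM_d^Q(a)| = |VDM_d(a)| · w(a_1)^d ⋯ w(a_s)^d` where `w = e^{-Q}`, as a member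
of `ℝ≥0∞`. -/
def absVDMQ (n d : ℕ) (E : Fin (sdim n d) → (Fin n → ℕ)) (H : Set (Pt n)) (Q : H → ℝ)
    (a : Fin (sdim n d) → H) : ℝ≥0∞ :=
  ENNReal.ofReal (‖VDM n d E (fun j => (a j : Pt n))‖ *
    ∏ j, Real.exp (-(d : ℝ) * Q (a j)))

/-- The empirical measure `(1/s) ∑_j δ_{a_j}` of a tuple of points. -/
def emp {X : Type*} [MeasurableSpace X] {s : ℕ} (a : Fin s → X) : Measure X :=
  ((s : ℝ≥0∞))⁻¹ • ∑ j, Measure.dirac (a j)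

lemma emp_univ {X : Type*} [MeasurableSpace X] {s : ℕ} (hs : s ≠ 0) (a : Fin s → X) :
    emp a Set.univ = 1 := by
  have : (emp a) Set.univ = ((s : ℝ≥0∞))⁻¹ * ∑ j : Fin s, (Measure.dirac (a j)) Set.univ := by
    simp [emp, Measure.smul_apply, Measure.finset_sum_apply]
  rw [this]
  simp only [measure_univ, Finset.sum_const, Finset.card_univ, Fintype.card_fin, nsmul_eq_mul,
    mul_one]
  exact ENNReal.inv_mul_cancel (by exact_mod_cast hs) (by simp)

/-- The empirical probability measure `(1/s) ∑_j δ_{a_j}` of a tuple of points. -/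
def empPM {X : Type*} [MeasurableSpace X] {s : ℕ} (hs : s ≠ 0) (a : Fin s → X) :
    ProbabilityMeasure X := ⟨emp a, ⟨emp_univ hs a⟩⟩

/-- `G̃_s(μ)`: the tuples in `H^s` whose empirical measure lies in `G`. -/
def Gtilde {n : ℕ} (d : ℕ) (H : Set (Pt n)) (G : Set (ProbabilityMeasure H)) :
    Set (Fin (sdim n d) → H) :=
  {a | empPM (sdim_pos n d).ne' a ∈ G}

/-- `J_d^Q(μ, G) = (∫_{G̃_s(μ)} |VDM_d^Q(a)|² dν^{⊗s}(a))^{1/(2ds)}`. -/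
def Jd (n d : ℕ) (E : Fin (sdim n d) → (Fin n → ℕ)) (H : Set (Pt n)) (ν : Measure H)
    (Q : H → ℝ) (G : Set (ProbabilityMeasure H)) : ℝ≥0∞ :=
  (∫⁻ a in Gtilde d H G, (absVDMQ n d E H Q a) ^ 2
      ∂(Measure.pi fun _ : Fin (sdim n d) => ν)) ^ (1 / (2 * d * sdim n d) : ℝ)

/-- `W_d^Q(μ, G) = sup { |VDM_d^Q(a)|^{1/(ds)} : a ∈ G̃_s(μ) }`. -/
def Wd (n d : ℕ) (E : Fin (sdim n d) → (Fin n → ℕ)) (H : Set (Pt n))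
    (Q : H → ℝ) (G : Set (ProbabilityMeasure H)) : ℝ≥0∞ :=
  ⨆ a ∈ Gtilde d H G, (absVDMQ n d E H Q a) ^ (1 / (d * sdim n d) : ℝ)

/-- `J^Q(μ) = inf_{G ∋ μ} limsup_{d → ∞} J_d^Q(μ, G)`, the infimum being over all open
neighborhoods `G` of `μ` in `𝓜(H)`. -/
def JQ (n : ℕ) (E : ∀ d, Fin (sdim n d) → (Fin n → ℕ)) (H : Set (Pt n)) (ν : Measure H)
    (Q : H → ℝ) (μ : ProbabilityMeasure H) : ℝ≥0∞ :=
  ⨅ G ∈ {G : Set (ProbabilityMeasure H) | IsOpen G ∧ μ ∈ G},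
    limsup (fun d => Jd n d (E d) H ν Q G) atTop

/-- `W^Q(μ) = inf_{G ∋ μ} limsup_{d → ∞} W_d^Q(μ, G)`, the infimum being over all open
neighborhoods `G` of `μ` in `𝓜(H)`. -/
def WQ (n : ℕ) (E : ∀ d, Fin (sdim n d) → (Fin n → ℕ)) (H : Set (Pt n))
    (Q : H → ℝ) (μ : ProbabilityMeasure H) : ℝ≥0∞ :=
  ⨅ G ∈ {G : Set (ProbabilityMeasure H) | IsOpen G ∧ μ ∈ G},
    limsup (fun d => Wd n d (E d) H Q G) atTop

/-- `δ̄^w(H) = lim sup_d (sup_{a ∈ H^{s(d)}} |VDM_d^Q(a)|)^{1/(d·s(d))}` where `w = e^{-Q}`. -/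
def deltaBar (n : ℕ) (E : ∀ d, Fin (sdim n d) → (Fin n → ℕ)) (H : Set (Pt n))
    (Q : H → ℝ) : ℝ≥0∞ :=
  limsup (fun d => (⨆ a : Fin (sdim n d) → H, absVDMQ n d (E d) H Q a)
    ^ (1 / (d * sdim n d) : ℝ)) atTop

/-- The density condition on `(H, ν)`: there is `T > 0` such that for every `z₀ ∈ H`
there is `r(z₀) > 0` with `ν(B(z₀,r)) ≥ r^T` for all `0 < r < r(z₀)`. -/
def DensityCond {n : ℕ} (H : Set (Pt n)) (ν : Measure H) : Prop :=
  ∃ T : ℝ, 0 < T ∧ ∀ z₀ : H, ∃ r₀ > 0, ∀ r : ℝ, 0 < r → r < r₀ →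
    ENNReal.ofReal (r ^ T) ≤ ν (Metric.ball z₀ r)

/-- The one-dimensional kernel. -/
def kerfun (u : ℝ) : ℝ≥0∞ := ENNReal.ofReal (-Real.log |1 - Real.exp (-u)|)

lemma kerfun_meas : Measurable kerfun := by
  unfold kerfun; fun_prop

lemma kerfun_lintegral : ∫⁻ u, kerfun u < ⊤ := by
  have hI : Integrable (fun u : ℝ => Set.indicator (Set.Ioc (-1) 1) (fun u => |Real.log u| + Real.log 2) u
      + Set.indicator (Set.Ioi 1) (fun u => 2 * Real.exp (-u)) u) := by
    apply Integrable.add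
    · rw [integrable_indicator_iff measurableSet_Ioc]
      apply Integrable.add
      · have : IntervalIntegrable Real.log volume (-1) 1 := intervalIntegral.intervalIntegrable_log'
        rw [intervalIntegrable_iff_integrableOn_Ioc_of_le (by norm_num)] at this
        exact this.abs
      · exact integrableOn_const (by simp)
    · rw [integrable_indicator_iff measurableSet_Ioi]
      exact (exp_neg_integrableOn_Ioi 1 one_pos).const_mul 2 |>.congr (by simp)
  refine lt_of_le_of_lt ?_ hI.lintegral_lt_top
  apply lintegral_mono
  intro u
  apply ENNReal.ofReal_le_ofReal
  by_cases h1 : u ≤ -1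
  · rw [Set.indicator_of_notMem (by simp; intro h; linarith), Set.indicator_of_notMem (by simp; linarith)]
    have : 2 ≤ Real.exp (-u) := by have := Real.add_one_le_exp (-u); linarith
    have h2 : 1 ≤ |1 - Real.exp (-u)| := by rw [abs_of_nonpos (by linarith)]; linarith
    have := Real.log_nonneg h2
    linarith
  push Not at h1
  by_cases h2 : u ≤ 1
  · rw [Set.indicator_of_mem (by simp; exact ⟨h1, h2⟩), Set.indicator_of_notMem (by simp; linarith)]
    by_cases h0 : u = 0
    · subst h0; simp; positivity
    have hlow : |u| / 2 ≤ |1 - Real.exp (-u)| := by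
      rcases le_or_gt u 0 with hu | hu
      · have := Real.add_one_le_exp (-u)
        rw [abs_of_nonpos hu, abs_of_nonpos (by linarith)]; linarith
      · have h3 := Real.add_one_le_exp u
        have h4 : Real.exp (-u) ≤ 1 / (u + 1) := by
          rw [Real.exp_neg, inv_eq_one_div]
          exact one_div_le_one_div_of_le (by linarith) h3
        have h5 : 1 / (u + 1) ≤ 1 - u / 2 := by
          rw [div_le_iff₀ (by linarith)]; nlinarith
        rw [abs_of_pos hu, abs_of_nonneg (by linarith)]; linarith
    have hpos : 0 < |u| / 2 := by positivity
    have := Real.log_le_log hpos hlow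
    rw [Real.log_div (by positivity) (by norm_num), Real.log_abs] at this
    have := neg_abs_le (Real.log u)
    linarith
  · push Not at h2
    rw [Set.indicator_of_notMem (by simp; intro h; linarith), Set.indicator_of_mem (by simp; linarith)]
    have h3 := Real.add_one_le_exp u
    have h4 : Real.exp (-u) ≤ 1 / 2 := by
      rw [Real.exp_neg, inv_eq_one_div]
      exact one_div_le_one_div_of_le (by norm_num) (by linarith)
    have h5 := Real.exp_pos (-u)
    have h6 : 1 - 2 * Real.exp (-u) ≤ 1 := by linarith
    rw [abs_of_nonneg (by linarith)]
    have h7 := Real.one_sub_inv_le_log_of_pos (x := 1 - Real.exp (-u)) (by linarith)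
    have h8 : (1 - Real.exp (-u))⁻¹ ≤ 1 + 2 * Real.exp (-u) := by
      rw [inv_eq_one_div, div_le_iff₀ (by linarith)]; nlinarith
    linarith

/-- Total mass of the kernel, as a real constant. -/
def kc : ℝ := (∫⁻ u, kerfun u).toReal + 1

lemma kc_pos : 0 < kc := by unfold kc; positivity

lemma lint_le_kc : ∫⁻ u, kerfun u ≤ ENNReal.ofReal kc := by
  unfold kc
  rw [ENNReal.ofReal_add (by positivity) (by norm_num), ENNReal.ofReal_toReal kerfun_lintegral.ne]
  exact le_self_add

lemma exists_psi (S : Multiset ℂ) (hS : ∀ z ∈ S, z ≠ 0) : ∃ Ψ : ℝ → ℝ≥0∞, Measurable Ψ ∧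
    ∫⁻ u, Ψ u ≤ S.card * ENNReal.ofReal kc ∧
    ∀ᵐ u : ℝ, ∀ t : ℝ, 0 ≤ t → Ψ u ≤ ENNReal.ofReal t →
      Real.exp (-t) * ‖(S.map (fun z => -z)).prod‖ ≤
        ‖(S.map (fun z => (Real.exp (-u) : ℂ) - z)).prod‖ := by
  induction S using Multiset.induction with
  | empty =>
    refine ⟨fun _ => 0, measurable_const, by simp, ?_⟩
    filter_upwards with u t ht _
    simp [ht]
  | cons z S ih =>
    obtain ⟨Ψ, hm, hinter, hΨ⟩ := ih (fun w hw => hS w (Multiset.mem_cons_of_mem hw))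
    have hz : z ≠ 0 := hS z (Multiset.mem_cons_self z S)
    have hz' : 0 < ‖z‖ := norm_pos_iff.2 hz
    set v := Real.log ‖z‖ with hv
    refine ⟨fun u => kerfun (u + v) + Ψ u, (kerfun_meas.comp (by fun_prop)).add hm, ?_, ?_⟩
    · rw [lintegral_add_right _ hm, lintegral_add_right_eq_self (fun u => kerfun u) v, Multiset.card_cons]
      push_cast
      rw [add_mul, one_mul, add_comm]
      exact add_le_add hinter lint_le_kc
    · have hne : ∀ᵐ u : ℝ, u ≠ -v := by
        simp [ae_iff]
      filter_upwards [hΨ, hne] with u hu hne t ht hle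
      have hk : kerfun (u + v) ≠ ⊤ := by simp [kerfun]
      set a := -Real.log |1 - Real.exp (-(u + v))| with ha
      have hpsi : Ψ u ≠ ⊤ := ne_top_of_le_ne_top ENNReal.ofReal_ne_top (le_trans le_add_self hle)
      set a' := max a 0
      have h1 : kerfun (u + v) = ENNReal.ofReal a' := by
        simp only [kerfun, a', ← ha]
        rcases le_total a 0 with h | h
        · rw [max_eq_right h, ENNReal.ofReal_of_nonpos h, ENNReal.ofReal_zero]
        · rw [max_eq_left h]
      have h2 := hu (Ψ u).toReal ENNReal.toReal_nonneg (by rw [ENNReal.ofReal_toReal hpsi])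
      have h3 : a' + (Ψ u).toReal ≤ t := by
        rw [h1, ← ENNReal.ofReal_toReal hpsi, ← ENNReal.ofReal_add (le_max_right _ _) ENNReal.toReal_nonneg] at hle
        exact (ENNReal.ofReal_le_ofReal_iff ht).1 hle
      have h4 : 0 < |1 - Real.exp (-(u + v))| := by
        apply abs_pos.2
        intro h
        have : Real.exp (-(u+v)) = 1 := by linarith
        rw [Real.exp_eq_one_iff] at this
        apply hne; linarith
      have h5 : Real.exp (-a') ≤ |1 - Real.exp (-(u + v))| := by
        calc Real.exp (-a') ≤ Real.exp (-a) := by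
              apply Real.exp_le_exp.2; have := le_max_left a 0; simp only [a']; linarith
          _ = _ := by rw [ha, neg_neg, Real.exp_log h4]
      have h6 : Real.exp (-a') * ‖z‖ ≤ ‖(Real.exp (-u) : ℂ) - z‖ := by
        have h7 : |1 - Real.exp (-(u + v))| * ‖z‖ = |‖z‖ - Real.exp (-u)| := by
          rw [← abs_of_pos hz', ← abs_mul, abs_of_pos hz', sub_mul, one_mul, neg_add, Real.exp_add, hv,
            Real.exp_neg (Real.log _), Real.exp_log hz', mul_assoc, inv_mul_cancel₀ hz'.ne', mul_one]
        calc _ ≤ |1 - Real.exp (-(u + v))| * ‖z‖ := by gcongr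
          _ = _ := h7
          _ = |‖z‖ - ‖(Real.exp (-u) : ℂ)‖| := by
            rw [Complex.norm_real, Real.norm_of_nonneg (Real.exp_pos _).le]
          _ ≤ ‖z - (Real.exp (-u) : ℂ)‖ := abs_norm_sub_norm_le _ _
          _ = _ := norm_sub_rev _ _
      rw [Multiset.map_cons, Multiset.map_cons, Multiset.prod_cons, Multiset.prod_cons, norm_mul, norm_mul, norm_neg]
      calc Real.exp (-t) * (‖z‖ * ‖(S.map (fun z => -z)).prod‖)
          ≤ Real.exp (-(a' + (Ψ u).toReal)) * (‖z‖ * ‖(S.map (fun z => -z)).prod‖) := by gcongr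
        _ = (Real.exp (-a') * ‖z‖) * (Real.exp (-(Ψ u).toReal) * ‖(S.map (fun z => -z)).prod‖) := by
            rw [neg_add, Real.exp_add]; ring
        _ ≤ _ := by gcongr

/-- One-dimensional Remez-type lemma. -/
lemma remez1 (g : Polynomial ℂ) (d : ℕ) (hg : g.natDegree ≤ d) (ε : ℝ) (hε : 0 < ε) :
    volume {u : ℝ | ‖g.eval (Real.exp (-u) : ℂ)‖ < Real.exp (-(ε * d)) * ‖g.eval 0‖} ≤
      ENNReal.ofReal (kc / ε) := by
  by_cases h0 : g.eval 0 = 0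
  · simp [h0, not_lt.2 (norm_nonneg _)]
  have hg0 : g ≠ 0 := by rintro rfl; simp at h0
  rcases Nat.eq_zero_or_pos d with rfl | hd
  · have : g = Polynomial.C (g.coeff 0) := Polynomial.eq_C_of_natDegree_le_zero hg
    rw [this]; simp
  have hsp : g.Splits := IsAlgClosed.splits g
  have heval : ∀ x : ℂ, g.eval x = g.leadingCoeff * (g.roots.map (fun z => x - z)).prod := by
    intro x
    exact hsp.eval_eq_prod_roots x
  obtain ⟨Ψ, hm, hinter, hΨ⟩ := exists_psi g.roots (by
    rintro z hz rfl
    exact h0 (Polynomial.mem_roots hg0 |>.1 hz))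
  have hcard : (g.roots.card : ℝ≥0∞) ≤ d := by
    exact_mod_cast (Polynomial.card_roots' g).trans hg
  have hae : {u : ℝ | ‖g.eval (Real.exp (-u) : ℂ)‖ < Real.exp (-(ε * d)) * ‖g.eval 0‖} ≤ᵐ[volume]
      {u | ENNReal.ofReal (ε * d) ≤ Ψ u} := by
    filter_upwards [hΨ] with u hu hlt
    by_contra hcon
    have hcon : ¬ (ENNReal.ofReal (ε * d) ≤ Ψ u) := hcon
    have hlt : ‖g.eval (Real.exp (-u) : ℂ)‖ < Real.exp (-(ε * d)) * ‖g.eval 0‖ := hlt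
    push Not at hcon
    have := hu (ε * d) (by positivity) hcon.le
    rw [heval, heval, norm_mul, norm_mul] at hlt
    simp only [zero_sub] at hlt
    have h2 := mul_le_mul_of_nonneg_left this (norm_nonneg g.leadingCoeff)
    linarith
  refine (measure_mono_ae hae).trans ?_
  have hεd : 0 < ε * d := by positivity
  refine (meas_ge_le_lintegral_div hm.aemeasurable (by simpa using hεd) (by simp)).trans ?_
  rw [ENNReal.div_le_iff (by simpa using hεd) (by simp), ← ENNReal.ofReal_mul (by have := kc_pos; positivity)]
  calc _ ≤ (d : ℝ≥0∞) * ENNReal.ofReal kc := hinter.trans (by gcongr)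
    _ = _ := by
      rw [← ENNReal.ofReal_natCast, ← ENNReal.ofReal_mul (by positivity)]
      congr 1; field_simp

/-- Evaluation of a polynomial at a point of `ℂⁿ`. -/
def pe {n : ℕ} (p : MvPolynomial (Fin n) ℂ) (x : Pt n) : ℂ := MvPolynomial.eval (fun i => x i) p

lemma pe_cont {n : ℕ} (p : MvPolynomial (Fin n) ℂ) : Continuous (pe p) := by
  unfold pe
  exact (MvPolynomial.continuous_eval p).comp (by fun_prop)

lemma pe_line {n d : ℕ} (p : MvPolynomial (Fin n) ℂ) (hp : p.totalDegree ≤ d) (a b : Pt n) :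
    ∃ g : Polynomial ℂ, g.natDegree ≤ d ∧ ∀ l : ℂ, g.eval l = pe p (a + l • b) := by
  refine ⟨MvPolynomial.aeval (fun i => Polynomial.C (a i) + Polynomial.X * Polynomial.C (b i)) p, ?_, ?_⟩
  · have := MvPolynomial.aeval_natDegree_le p hp
      (fun i => Polynomial.C (a i) + Polynomial.X * Polynomial.C (b i)) (n := 1) (by
        intro i
        compute_degree)
    simpa using this
  · intro l
    rw [pe, ← Polynomial.coe_evalRingHom, ← MvPolynomial.coe_aeval_eq_eval]
    simp only [MvPolynomial.aeval_def, MvPolynomial.eval₂_eq', map_sum, map_mul, map_prod, map_pow, map_add]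
    simp [MvPolynomial.eval_eq']

lemma pe_line_real {n : ℕ} (a b : Pt n) (r : ℝ) : a + (r : ℂ) • b = a + r • b := by
  simp

/-- Remez along rays. -/
lemma remez_ray {n d : ℕ} (p : MvPolynomial (Fin n) ℂ) (hp : p.totalDegree ≤ d) (a b : Pt n)
    (ε : ℝ) (hε : 0 < ε) :
    volume {u : ℝ | ‖pe p (a + Real.exp (-u) • b)‖ < Real.exp (-(ε * d)) * ‖pe p a‖} ≤
      ENNReal.ofReal (kc / ε) := by
  obtain ⟨g, hg, hgl⟩ := pe_line p hp a b
  have := remez1 g d hg ε hε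
  simpa only [hgl, pe_line_real, zero_smul, add_zero] using this

lemma remez_ray_good {n d : ℕ} (p : MvPolynomial (Fin n) ℂ) (hp : p.totalDegree ≤ d) (a b : Pt n)
    (ε : ℝ) (hε : 0 < ε) :
    ENNReal.ofReal (kc / ε) ≤ volume {u : ℝ | u ∈ Set.Icc 0 (2 * kc / ε) ∧
      Real.exp (-(ε * d)) * ‖pe p a‖ ≤ ‖pe p (a + Real.exp (-u) • b)‖} := by
  set A := {u : ℝ | ‖pe p (a + Real.exp (-u) • b)‖ < Real.exp (-(ε * d)) * ‖pe p a‖} with hA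
  have h1 := remez_ray p hp a b ε hε
  have hsub : Set.Icc 0 (2 * kc / ε) ⊆ {u : ℝ | u ∈ Set.Icc 0 (2 * kc / ε) ∧
      Real.exp (-(ε * d)) * ‖pe p a‖ ≤ ‖pe p (a + Real.exp (-u) • b)‖} ∪ A := by
    intro u hu
    by_cases h : u ∈ A
    · exact Or.inr h
    · exact Or.inl ⟨hu, not_lt.1 h⟩
  have h2 := (measure_mono hsub).trans (measure_union_le (μ := volume) _ _)
  rw [Real.volume_Icc, sub_zero] at h2
  have h3 : ENNReal.ofReal (2 * kc / ε) = ENNReal.ofReal (kc / ε) + ENNReal.ofReal (kc / ε) := by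
    have := kc_pos
    rw [← ENNReal.ofReal_add (by positivity) (by positivity)]; congr 1; ring
  rw [h3] at h2
  have h4 := h2.trans (add_le_add_right h1 _)
  exact (ENNReal.add_le_add_iff_right ENNReal.ofReal_ne_top).1 h4

lemma remez_ray_exists {n d : ℕ} (p : MvPolynomial (Fin n) ℂ) (hp : p.totalDegree ≤ d) (a b : Pt n)
    (ε : ℝ) (hε : 0 < ε) : ∃ u ∈ Set.Icc 0 (2 * kc / ε),
      Real.exp (-(ε * d)) * ‖pe p a‖ ≤ ‖pe p (a + Real.exp (-u) • b)‖ := by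
  have h := remez_ray_good p hp a b ε hε
  by_contra hcon
  push Not at hcon
  have : {u : ℝ | u ∈ Set.Icc 0 (2 * kc / ε) ∧
      Real.exp (-(ε * d)) * ‖pe p a‖ ≤ ‖pe p (a + Real.exp (-u) • b)‖} = ∅ := by
    ext u; simp only [Set.mem_ofPred_eq, Set.mem_empty_iff_false, iff_false, not_and, not_le]
    exact hcon u
  rw [this, measure_empty, nonpos_iff_eq_zero, ENNReal.ofReal_eq_zero] at h
  have := kc_pos
  have : 0 < kc / ε := by positivity
  linarith

/-- Volume Remez inequality on a convex body. -/
lemma remez_vol {n : ℕ} (H : Set (Pt n)) (hc : IsCompact H) (hconv : Convex ℝ H)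
    (m : Measure (Pt n)) [m.IsAddHaarMeasure] (ε : ℝ) (hε : 0 < ε) (t : ℝ) (ht : 0 < t) (ht1 : t ≤ 1)
    (hpos : m H ≠ 0) :
    ∃ c : ℝ≥0∞, 0 < c ∧ ∀ (d : ℕ) (p : MvPolynomial (Fin n) ℂ), p.totalDegree ≤ d → ∀ z₀ ∈ H,
      c ≤ m {z | z ∈ H ∧ (∃ x ∈ H, ∃ l ∈ Set.Icc 0 t, z = z₀ + l • (x - z₀)) ∧
        Real.exp (-(ε * d)) * ‖pe p z₀‖ ≤ ‖pe p z‖} := by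
  set Lm := 2 * kc / ε with hLm
  have hkc := kc_pos
  have hL : 0 < Lm := by positivity
  set N := Module.finrank ℝ (Pt n)
  have hfin : m H ≠ ⊤ := hc.measure_lt_top.ne
  set K : ℝ≥0∞ := ENNReal.ofReal Lm * ENNReal.ofReal (((t * Real.exp (-Lm)) ^ N)⁻¹) with hK
  have hKpos : K ≠ 0 := by
    simp only [hK]; apply mul_ne_zero <;> simp <;> positivity
  have hKtop : K ≠ ⊤ := by
    simp only [hK]; exact ENNReal.mul_ne_top ENNReal.ofReal_ne_top ENNReal.ofReal_ne_top
  refine ⟨ENNReal.ofReal (kc / ε) * m H / K, ?_, ?_⟩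
  · apply ENNReal.div_pos _ hKtop
    apply mul_ne_zero _ hpos
    simp; positivity
  intro d p hp z₀ hz₀
  set S₁ := {z | Real.exp (-(ε * d)) * ‖pe p z₀‖ ≤ ‖pe p z‖} with hS₁
  set S := {z | z ∈ H ∧ (∃ x ∈ H, ∃ l ∈ Set.Icc 0 t, z = z₀ + l • (x - z₀)) ∧
        Real.exp (-(ε * d)) * ‖pe p z₀‖ ≤ ‖pe p z‖} with hS
  have hS₁c : IsClosed S₁ := isClosed_le continuous_const (pe_cont p).norm
  set A : Set (ℝ × Pt n) := {q | q.1 ∈ Set.Icc 0 Lm ∧ q.2 ∈ H ∧ z₀ + Real.exp (-q.1) • (t • (q.2 - z₀)) ∈ S₁} with hA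
  have hAc : IsClosed A := by
    apply IsClosed.inter
    · exact isClosed_Icc.preimage continuous_fst
    apply IsClosed.inter
    · exact hc.isClosed.preimage continuous_snd
    · exact hS₁c.preimage (by fun_prop)
  have hAm : MeasurableSet A := hAc.measurableSet
  have h1 : (volume.prod m) A ≤ K * m S := by
    rw [Measure.prod_apply hAm]
    have hb : ∀ u : ℝ, m (Prod.mk u ⁻¹' A) ≤ (Set.Icc 0 Lm).indicator
        (fun _ => ENNReal.ofReal (((t * Real.exp (-Lm)) ^ N)⁻¹) * m S) u := by
      intro u
      by_cases hu : u ∈ Set.Icc 0 Lm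
      · rw [Set.indicator_of_mem hu]
        have hr : 0 < Real.exp (-u) * t := by positivity
        have hsub : Prod.mk u ⁻¹' A ⊆ (AffineMap.homothety z₀ (Real.exp (-u) * t)) ⁻¹' S := by
          rintro x ⟨_, hx, hxs⟩
          have he1 : Real.exp (-u) ≤ 1 := Real.exp_le_one_iff.2 (by linarith [hu.1])
          have hle : Real.exp (-u) * t ≤ t := by nlinarith
          have heq : (AffineMap.homothety z₀ (Real.exp (-u) * t)) x = z₀ + (Real.exp (-u) * t) • (x - z₀) := by
            rw [AffineMap.homothety_apply]; simp [add_comm]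
          rw [smul_smul] at hxs
          refine ⟨?_, ?_, ?_⟩
          · rw [heq]
            exact hconv.add_smul_sub_mem hz₀ hx ⟨hr.le, by linarith⟩
          · exact ⟨x, hx, _, ⟨hr.le, hle⟩, heq⟩
          · rw [heq]; exact hxs
        have him := (measure_mono (μ := m) (Set.image_mono hsub)).trans
          (measure_mono (Set.image_preimage_subset _ _))
        rw [Measure.addHaar_image_homothety, abs_of_pos (by positivity)] at him
        have hq : ENNReal.ofReal (((Real.exp (-u) * t) ^ N)⁻¹) * ENNReal.ofReal ((Real.exp (-u) * t) ^ N) = 1 := by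
          rw [← ENNReal.ofReal_mul (by positivity), inv_mul_cancel₀ (by positivity), ENNReal.ofReal_one]
        calc m (Prod.mk u ⁻¹' A) = ENNReal.ofReal (((Real.exp (-u) * t) ^ N)⁻¹) *
              (ENNReal.ofReal ((Real.exp (-u) * t) ^ N) * m (Prod.mk u ⁻¹' A)) := by
              rw [← mul_assoc, hq, one_mul]
          _ ≤ ENNReal.ofReal (((Real.exp (-u) * t) ^ N)⁻¹) * m S := by gcongr
          _ ≤ _ := by
            rw [mul_comm t]
            gcongr
            exact hu.2
      · rw [Set.indicator_of_notMem hu]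
        have : Prod.mk u ⁻¹' A = ∅ := by
          ext x; simp only [hA, Set.mem_preimage, Set.mem_ofPred_eq, Set.mem_empty_iff_false, iff_false]
          tauto
        simp [this]
    refine (lintegral_mono hb).trans ?_
    rw [lintegral_indicator measurableSet_Icc, setLIntegral_const, Real.volume_Icc, sub_zero, hK]
    rw [mul_comm, mul_assoc]
  have h2 : ENNReal.ofReal (kc / ε) * m H ≤ (volume.prod m) A := by
    rw [Measure.prod_apply_symm hAm, ← setLIntegral_const, ← lintegral_indicator hc.measurableSet]
    apply lintegral_mono
    intro z
    by_cases hz : z ∈ H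
    · rw [Set.indicator_of_mem hz]
      refine (remez_ray_good p hp z₀ (t • (z - z₀)) ε hε).trans (measure_mono ?_)
      rintro u ⟨hu, hu2⟩
      exact ⟨hu, hz, hu2⟩
    · rw [Set.indicator_of_notMem hz]; exact zero_le
  rw [ENNReal.div_le_iff hKpos hKtop, mul_comm (m S)]
  exact h2.trans h1

/-- Growth of polynomials near a convex body. -/
lemma growth {n : ℕ} (H : Set (Pt n)) (hconv : Convex ℝ H)
    (c : Pt n) (ρ : ℝ) (hρ : 0 < ρ) (hball : Metric.ball c ρ ⊆ H)
    (R : ℝ) (hR : ∀ x ∈ H, ∀ y ∈ H, dist x y ≤ R) (ε : ℝ) (hε : 0 < ε) (t : ℝ) (ht : 0 < t) (ht1 : t ≤ 1) :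
    ∃ η : ℝ, 0 < η ∧ ∀ (d : ℕ) (p : MvPolynomial (Fin n) ℂ), p.totalDegree ≤ d → ∀ z ∈ H, ∀ y : Pt n,
      dist y z < η → ∃ x ∈ H, dist x z ≤ t * R ∧ Real.exp (-(ε * d)) * ‖pe p y‖ ≤ ‖pe p x‖ := by
  set Lm := 2 * kc / ε with hLm
  refine ⟨ρ * t * Real.exp (-Lm), by positivity, ?_⟩
  intro d p hp z hz y hy
  set c' := z + t • (c - z) with hc'
  obtain ⟨u, hu, hpu⟩ := remez_ray_exists p hp y (c' - y) ε hε
  refine ⟨_, ?_, ?_, hpu⟩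
  all_goals
    set l := Real.exp (-u) with hl
    have hl0 : 0 < l := Real.exp_pos _
    have hl1 : l ≤ 1 := Real.exp_le_one_iff.2 (by linarith [hu.1])
    have hlL : Real.exp (-Lm) ≤ l := Real.exp_le_exp.2 (by linarith [hu.2])
    set w := c + ((1 - l) / (l * t)) • (y - z) with hw
    have hwH : w ∈ H := by
      apply hball
      rw [Metric.mem_ball, hw, dist_eq_norm, add_sub_cancel_left, norm_smul, Real.norm_of_nonneg (by
        apply div_nonneg <;> nlinarith), ← dist_eq_norm]
      calc (1 - l) / (l * t) * dist y z ≤ 1 / (l * t) * dist y z := by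
            gcongr; linarith
        _ < 1 / (l * t) * (ρ * t * Real.exp (-Lm)) := by gcongr
        _ ≤ 1 / (l * t) * (ρ * t * l) := by gcongr
        _ = ρ := by field_simp
    have heq : y + l • (c' - y) = z + (l * t) • (w - z) := by
      have : (l * t) • (w - z) = (l * t) • (c - z) + (1 - l) • (y - z) := by
        rw [hw, add_sub_right_comm, smul_add, smul_smul]
        congr 2
        field_simp
      rw [this, hc']
      module
    rw [heq]
  · exact hconv.add_smul_sub_mem hz hwH ⟨by positivity, by nlinarith⟩
  · rw [dist_eq_norm, add_sub_cancel_left, norm_smul, Real.norm_of_nonneg (by positivity), ← dist_eq_norm]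
    have := hR w hwH z hz
    have h0 : 0 ≤ dist w z := dist_nonneg
    calc l * t * dist w z ≤ 1 * t * R := by gcongr
      _ = _ := by ring

lemma pe_diff {n : ℕ} (p : MvPolynomial (Fin n) ℂ) : Differentiable ℂ (pe p) := by
  have : pe p = fun x : Pt n => ∑ m ∈ p.support, p.coeff m * ∏ i, (x i) ^ m i := by
    ext x; rw [pe, MvPolynomial.eval_eq']
  rw [this]
  fun_prop

lemma dens_choose {n : ℕ} (H : Set (Pt n)) (hc : IsCompact H) (ν : Measure H) (T : ℝ)
    (hT : ∀ z₀ : H, ∃ r₀ > 0, ∀ r : ℝ, 0 < r → r < r₀ → ENNReal.ofReal (r ^ T) ≤ ν (Metric.ball z₀ r))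
    (m : Measure (Pt n)) [m.IsAddHaarMeasure] (c : ℝ≥0∞) (hcpos : 0 < c) :
    ∃ k : ℝ, 0 < k ∧ ∀ S : Set (Pt n), S ⊆ H → MeasurableSet S → c ≤ m S →
      ∃ z : H, (z : Pt n) ∈ S ∧ ∀ r : ℝ, 0 < r → r < k → ENNReal.ofReal (r ^ T) ≤ ν (Metric.ball z r) := by
  set A : ℕ → Set H := fun k => {z | ∀ r : ℝ, 0 < r → r < 1 / ((k : ℝ) + 1) →
    ENNReal.ofReal (r ^ T) ≤ ν (Metric.ball z r)} with hA
  set K : ℕ → Set (Pt n) := fun k => Subtype.val '' A k with hK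
  have hmono : Monotone K := by
    intro a b hab
    apply Set.image_mono
    intro z hz r hr hr2
    exact hz r hr (hr2.trans_le (one_div_le_one_div_of_le (by positivity) (by gcongr)))
  have hU : ⋃ k, K k = H := by
    apply Set.Subset.antisymm
    · apply Set.iUnion_subset
      rintro k _ ⟨z, _, rfl⟩
      exact z.2
    · intro z hz
      obtain ⟨r₀, hr₀, h⟩ := hT ⟨z, hz⟩
      obtain ⟨k, hk⟩ := exists_nat_one_div_lt hr₀
      exact Set.mem_iUnion.2 ⟨k, ⟨z, hz⟩, fun r hr hr2 => h r hr (hr2.trans hk), rfl⟩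
  have htend := tendsto_measure_iUnion_atTop (μ := m) hmono
  rw [hU] at htend
  have hfin : m H ≠ ⊤ := hc.measure_lt_top.ne
  by_cases hH0 : m H < c
  · refine ⟨1, one_pos, fun S hS _ hcS => ?_⟩
    exact absurd (hcS.trans (measure_mono hS)) (not_le.2 hH0)
  push Not at hH0
  have hHpos : m H ≠ 0 := (hcpos.trans_le hH0).ne'
  have hlt : m H - c < m H := ENNReal.sub_lt_self hfin hHpos hcpos.ne'
  obtain ⟨k, hk⟩ := (htend.eventually (lt_mem_nhds hlt)).exists
  refine ⟨1 / ((k : ℝ) + 1), by positivity, ?_⟩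
  intro S hS hSm hcS
  by_contra hcon
  push Not at hcon
  have hsub : K k ⊆ H \ S := by
    rintro _ ⟨z, hz, rfl⟩
    refine ⟨z.2, fun hzS => ?_⟩
    obtain ⟨r, hr, hr2, hr3⟩ := hcon z hzS
    exact absurd (hz r hr hr2) (not_le.2 hr3)
  have h1 := measure_mono (μ := m) hsub
  rw [measure_sdiff hS hSm.nullMeasurableSet (measure_ne_top_of_subset hS hfin)] at h1
  exact absurd (h1.trans (tsub_le_tsub_left hcS _)) (not_le.2 hk)

set_option maxHeartbeats 2000000 in
/-- Weighted Bernstein–Markov property. -/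
lemma bernstein_markov {n : ℕ} (H : Set (Pt n)) (hc : IsCompact H) (hconv : Convex ℝ H)
    (hinter : (interior H).Nonempty) (ν : Measure H) [IsFiniteMeasure ν] (hdens : DensityCond H ν)
    (Q : H → ℝ) (hQ : Continuous Q) (ε : ℝ) (hε : 0 < ε) :
    ∃ C : ℝ, 0 < C ∧ ∀ (d : ℕ) (p : MvPolynomial (Fin n) ℂ), p.totalDegree ≤ d → ∀ z₀ : H,
      (‖pe p z₀‖ * Real.exp (-(d : ℝ) * Q z₀)) ^ 2 ≤
        C * Real.exp (ε * d) * ∫ x : H, (‖pe p x‖ * Real.exp (-(d : ℝ) * Q x)) ^ 2 ∂ν := by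
  obtain ⟨T, hT0, hT⟩ := hdens
  haveI : CompactSpace H := isCompact_iff_compactSpace.1 hc
  set e := ε / (4 + 3 * T) with he
  have hepos : 0 < e := by positivity
  obtain ⟨δ, hδ, hδQ⟩ := Metric.uniformContinuous_iff.1
    (CompactSpace.uniformContinuous_of_continuous hQ) e hepos
  obtain ⟨c, hcint⟩ := hinter
  obtain ⟨ρ, hρ, hball⟩ := Metric.isOpen_iff.1 isOpen_interior c hcint
  have hball : Metric.ball c ρ ⊆ H := hball.trans interior_subset
  obtain ⟨R, hR⟩ := Metric.isBounded_iff.1 hc.isBounded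
  have hR : ∀ x ∈ H, ∀ y ∈ H, dist x y ≤ R := fun x hx y hy => hR hx hy
  have hcH : c ∈ H := interior_subset hcint
  have hR0 : 0 ≤ R := dist_nonneg.trans (hR c hcH c hcH)
  set t := min 1 (δ / (4 * (R + 1))) with ht
  have ht0 : 0 < t := lt_min one_pos (by positivity)
  have ht1 : t ≤ 1 := min_le_left _ _
  have htR : t * R ≤ δ / 4 := by
    have : t ≤ δ / (4 * (R + 1)) := min_le_right _ _
    calc t * R ≤ δ / (4 * (R + 1)) * (R + 1) := by gcongr; linarith
      _ = δ / 4 := by field_simp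
  set m : Measure (Pt n) := Measure.addHaar
  have hmpos : m H ≠ 0 := by
    have := Metric.measure_ball_pos m c hρ
    exact (this.trans_le (measure_mono hball)).ne'
  obtain ⟨cv, hcv, hvol⟩ := remez_vol H hc hconv m e hepos t ht0 ht1 hmpos
  obtain ⟨k, hk, hkS⟩ := dens_choose H hc ν T hT m cv hcv
  obtain ⟨η, hη, hgrow⟩ := growth H hconv c ρ hρ hball R hR e hepos t ht0 ht1
  set r0 := min (η / 6) (min (k / 2) (δ / 2)) with hr0
  have hr0pos : 0 < r0 := by positivity
  have hCpos : 0 < 4 / r0 ^ T := by positivity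
  refine ⟨4 / r0 ^ T, hCpos, ?_⟩
  have hr0η : r0 ≤ η / 6 := min_le_left _ _
  have hr0k : r0 ≤ k / 2 := (min_le_right _ _).trans (min_le_left _ _)
  have hr0δ : r0 ≤ δ / 2 := (min_le_right _ _).trans (min_le_right _ _)
  clear_value r0 t m
  intro d p hp z₀
  have hcont : Continuous (fun x : H => ‖pe p x‖ * Real.exp (-(d : ℝ) * Q x)) := by
    have := pe_cont p
    fun_prop
  obtain ⟨zs, -, hzs⟩ := isCompact_univ.exists_isMaxOn ⟨z₀, Set.mem_univ z₀⟩ hcont.continuousOn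
  have hmax : ∀ x : H, ‖pe p x‖ * Real.exp (-(d : ℝ) * Q x) ≤ ‖pe p zs‖ * Real.exp (-(d : ℝ) * Q zs) :=
    fun x => hzs (Set.mem_univ x)
  have hInn : 0 ≤ ∫ x : H, (‖pe p x‖ * Real.exp (-(d : ℝ) * Q x)) ^ 2 ∂ν :=
    integral_nonneg (fun x => by positivity)
  set M := ‖pe p zs‖ with hM
  rcases (norm_nonneg (pe p zs)).eq_or_lt with hM0 | hMpos
  · have h1 := hmax z₀
    rw [hM, ← hM0, zero_mul] at h1
    have h2 : ‖pe p z₀‖ * Real.exp (-(d : ℝ) * Q z₀) = 0 := le_antisymm h1 (by positivity)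
    rw [h2]; simp only [ne_eq, OfNat.ofNat_ne_zero, not_false_eq_true, zero_pow]
    exact mul_nonneg (mul_nonneg hCpos.le (Real.exp_pos _).le) hInn
  rw [← hM] at hMpos
  -- bound near zs
  have hloc : ∀ x : H, dist x zs < δ → ‖pe p x‖ ≤ M * Real.exp (e * d) := by
    intro x hx
    have h1 := hmax x
    have h2 := hδQ hx
    rw [Real.dist_eq, abs_lt] at h2
    have h3 : ‖pe p x‖ ≤ M * Real.exp (-(d : ℝ) * Q zs) * Real.exp ((d : ℝ) * Q x) := by
      calc ‖pe p x‖ = ‖pe p x‖ * Real.exp (-(d : ℝ) * Q x) * Real.exp ((d : ℝ) * Q x) := by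
            rw [mul_assoc, ← Real.exp_add]; simp
        _ ≤ _ := by gcongr
    refine h3.trans ?_
    rw [mul_assoc, ← Real.exp_add]
    gcongr
    have : (0 : ℝ) ≤ d := by positivity
    nlinarith
  set S := {z | z ∈ H ∧ (∃ x ∈ H, ∃ l ∈ Set.Icc 0 t, z = (zs : Pt n) + l • (x - (zs : Pt n))) ∧
        Real.exp (-(e * d)) * ‖pe p zs‖ ≤ ‖pe p z‖} with hS
  have hSm : MeasurableSet S := by
    have hcl : IsClosed {z : Pt n | Real.exp (-(e * d)) * ‖pe p zs‖ ≤ ‖pe p z‖} :=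
      isClosed_le continuous_const (pe_cont p).norm
    have himg : IsCompact {z : Pt n | ∃ x ∈ H, ∃ l ∈ Set.Icc 0 t, z = (zs : Pt n) + l • (x - (zs : Pt n))} := by
      have : {z : Pt n | ∃ x ∈ H, ∃ l ∈ Set.Icc 0 t, z = (zs : Pt n) + l • (x - (zs : Pt n))} =
        (fun q : Pt n × ℝ => (zs : Pt n) + q.2 • (q.1 - (zs : Pt n))) '' (H ×ˢ Set.Icc 0 t) := by
        ext z
        constructor
        · rintro ⟨x, hx, l, hl, rfl⟩
          exact ⟨(x, l), ⟨hx, hl⟩, rfl⟩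
        · rintro ⟨⟨x, l⟩, ⟨hx, hl⟩, rfl⟩
          exact ⟨x, hx, l, hl, rfl⟩
      rw [this]
      exact (hc.prod isCompact_Icc).image (by fun_prop)
    exact hc.measurableSet.inter (himg.measurableSet.inter hcl.measurableSet)
  obtain ⟨z2, ⟨-, ⟨x, hx, l, hl, hzl⟩, hz2⟩, hz2d⟩ := hkS S (fun z hz => hz.1) hSm (hvol d p hp zs zs.2)
  have hd2 : dist z2 zs ≤ δ / 4 := by
    rw [Subtype.dist_eq, hzl, dist_eq_norm, add_sub_cancel_left, norm_smul, Real.norm_of_nonneg hl.1, ← dist_eq_norm]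
    calc l * dist x zs ≤ t * R := by
          have := hR x hx zs zs.2
          have := hl.2
          gcongr
      _ ≤ _ := htR
  set r := r0 * Real.exp (-(3 * e * d)) with hr
  have hrpos : 0 < r := by positivity
  have hrr0 : r ≤ r0 := by
    have : Real.exp (-(3 * e * d)) ≤ 1 := Real.exp_le_one_iff.2 (by
      have : 0 ≤ 3 * e * d := by positivity
      linarith)
    calc r ≤ r0 * 1 := by rw [hr]; gcongr
      _ = r0 := mul_one _
  have hB : ∀ y : Pt n, dist y z2 < η → ‖pe p y‖ ≤ M * Real.exp (2 * e * d) := by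
    intro y hy
    obtain ⟨x, hx, hxd, hxp⟩ := hgrow d p hp z2 z2.2 y hy
    have h1 : dist (⟨x, hx⟩ : H) zs < δ := by
      calc dist (⟨x, hx⟩ : H) zs ≤ dist (⟨x, hx⟩ : H) z2 + dist z2 zs := dist_triangle _ _ _
        _ ≤ δ / 4 + δ / 4 := add_le_add (hxd.trans htR) hd2
        _ < δ := by linarith
    have h2 := hloc ⟨x, hx⟩ h1
    calc ‖pe p y‖ = Real.exp (e * d) * (Real.exp (-(e * d)) * ‖pe p y‖) := by
          rw [← mul_assoc, ← Real.exp_add]; simp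
      _ ≤ Real.exp (e * d) * (M * Real.exp (e * d)) := mul_le_mul_of_nonneg_left (hxp.trans h2) (Real.exp_pos _).le
      _ = _ := by
        rw [mul_left_comm, ← Real.exp_add]; ring_nf
  have hnear : ∀ z : Pt n, dist z z2 < r → M * Real.exp (-(e * d)) / 2 ≤ ‖pe p z‖ := by
    intro z hz
    have hmaps : Set.MapsTo (pe p) (Metric.ball (z2 : Pt n) η)
        (Metric.ball (pe p z2) (3 * (M * Real.exp (2 * e * d)))) := by
      intro y hy
      rw [Metric.mem_ball, dist_eq_norm]
      have h1 := hB y hy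
      have h2 := hB z2 (by simpa using hη)
      have h3 := norm_sub_le (pe p y) (pe p z2)
      have : 0 < M * Real.exp (2 * e * d) := by positivity
      linarith
    have hzη : dist z z2 < η := by linarith
    have := Complex.dist_le_div_mul_dist_of_mapsTo_ball (pe_diff p).differentiableOn
      (hmaps.mono_right Metric.ball_subset_closedBall) hzη
    rw [dist_eq_norm] at this
    have h4 : 3 * (M * Real.exp (2 * e * d)) / η * dist z z2 ≤ M * Real.exp (-(e * d)) / 2 := by
      calc 3 * (M * Real.exp (2 * e * d)) / η * dist z z2
          ≤ 3 * (M * Real.exp (2 * e * d)) / η * (η / 6 * Real.exp (-(3 * e * d))) := by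
            gcongr
            exact hz.le.trans (by rw [hr]; gcongr)
        _ = M * (Real.exp (2 * e * d) * Real.exp (-(3 * e * d))) / 2 := by field_simp; norm_num
        _ = _ := by rw [← Real.exp_add]; ring_nf
    have h5 : ‖pe p z2‖ ≤ ‖pe p z‖ + ‖pe p z - pe p z2‖ := by
      have := norm_sub_norm_le (pe p z2) (pe p z)
      rw [norm_sub_rev] at this
      linarith
    have h6 : Real.exp (-(e * d)) * M ≤ ‖pe p z2‖ := hz2
    linarith
  set a := (M * Real.exp (-(e * d)) / 2 * Real.exp (-(e * d)) * Real.exp (-(d : ℝ) * Q zs)) ^ 2 with ha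
  have hlev : Metric.ball z2 r ⊆ {x : H | a ≤ (‖pe p x‖ * Real.exp (-(d : ℝ) * Q x)) ^ 2} := by
    intro x hx
    rw [Set.mem_ofPred_eq, ha]
    rw [Metric.mem_ball] at hx
    have h1 := hnear x hx
    have h2 : dist x zs < δ := by
      have := dist_triangle x z2 zs
      linarith
    have h3 := hδQ h2
    rw [Real.dist_eq, abs_lt] at h3
    refine pow_le_pow_left₀ (by positivity) ?_ 2
    rw [mul_assoc, ← Real.exp_add]
    have : (0 : ℝ) ≤ d := by positivity
    exact mul_le_mul h1 (Real.exp_le_exp.2 (by nlinarith)) (Real.exp_pos _).le (norm_nonneg _)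
  have hmk := mul_meas_ge_le_integral_of_nonneg (μ := ν) (f := fun x : H => (‖pe p x‖ * Real.exp (-(d : ℝ) * Q x)) ^ 2)
    (Eventually.of_forall (fun x => by positivity))
    ((hcont.pow 2).integrable_of_hasCompactSupport (HasCompactSupport.of_compactSpace _)) a
  have hνr : r ^ T ≤ ν.real {x : H | a ≤ (‖pe p x‖ * Real.exp (-(d : ℝ) * Q x)) ^ 2} := by
    have h1 := (hz2d r hrpos (by linarith)).trans (measure_mono hlev)
    exact (ENNReal.ofReal_le_iff_le_toReal (measure_ne_top _ _)).1 h1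
  have hfin : a * r ^ T ≤ ∫ x : H, (‖pe p x‖ * Real.exp (-(d : ℝ) * Q x)) ^ 2 ∂ν :=
    (mul_le_mul_of_nonneg_left hνr (by positivity)).trans hmk
  have h0 := hmax z₀
  calc (‖pe p z₀‖ * Real.exp (-(d : ℝ) * Q z₀)) ^ 2 ≤ (M * Real.exp (-(d : ℝ) * Q zs)) ^ 2 := by gcongr
    _ = 4 / r0 ^ T * Real.exp (ε * d) * (a * r ^ T) := by
      have hrT : r ^ T = r0 ^ T * Real.exp (-(3 * e * d) * T) := by
        rw [hr, Real.mul_rpow hr0pos.le (Real.exp_pos _).le, ← Real.exp_mul]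
      have hεe : ε = e * (4 + 3 * T) := by rw [he]; field_simp
      rw [hrT, ha]
      have : r0 ^ T ≠ 0 := by positivity
      have hexp : Real.exp (ε * d) * Real.exp (-(e * d)) ^ 4 * Real.exp (-(3 * e * d) * T) = 1 := by
        rw [← Real.exp_nat_mul, ← Real.exp_add, ← Real.exp_add, Real.exp_eq_one_iff, hεe]
        push_cast; ring
      calc (M * Real.exp (-(d : ℝ) * Q zs)) ^ 2 = (M * Real.exp (-(d : ℝ) * Q zs)) ^ 2 *
            (Real.exp (ε * d) * Real.exp (-(e * d)) ^ 4 * Real.exp (-(3 * e * d) * T)) := by rw [hexp, mul_one]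
        _ = _ := by field_simp; norm_num
    _ ≤ _ := by gcongr

section gramsec
open Matrix ComplexOrder

lemma psd_det_le {s : ℕ} (M : Matrix (Fin s) (Fin s) ℂ) (hM : M.PosSemidef) :
    M.det.re ≤ Real.exp (M.trace.re - s) := by
  rw [hM.1.det_eq_prod_eigenvalues, hM.1.trace_eq_sum_eigenvalues]
  have h1 : (∏ i, ((hM.1.eigenvalues i : ℝ) : ℂ)) = ((∏ i, hM.1.eigenvalues i : ℝ) : ℂ) := by
    push_cast; rfl
  have h2 : (∑ i, ((hM.1.eigenvalues i : ℝ) : ℂ)) = ((∑ i, hM.1.eigenvalues i : ℝ) : ℂ) := by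
    push_cast; rfl
  have e1 : (∏ i, ((hM.1.eigenvalues i : ℝ) : ℂ)).re = ∏ i, hM.1.eigenvalues i := by
    rw [h1, Complex.ofReal_re]
  have e2 : (∑ i, ((hM.1.eigenvalues i : ℝ) : ℂ)).re = ∑ i, hM.1.eigenvalues i := by
    rw [h2, Complex.ofReal_re]
  refine e1.le.trans ?_
  refine le_of_le_of_eq ?_ (congrArg (fun t => Real.exp (t - s)) e2.symm)
  have : ∑ i, hM.1.eigenvalues i - (s : ℝ) = ∑ i : Fin s, (hM.1.eigenvalues i - 1) := by
    rw [Finset.sum_sub_distrib]; simp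
  rw [this, Real.exp_sum]
  apply Finset.prod_le_prod
  · intro i _; exact hM.eigenvalues_nonneg i
  · intro i _
    have := Real.add_one_le_exp (hM.1.eigenvalues i - 1)
    linarith

lemma chol {s : ℕ} (G : Matrix (Fin s) (Fin s) ℂ) (hG : G.PosDef) :
    ∃ C : Matrix (Fin s) (Fin s) ℂ, (∀ i j, i < j → C i j = 0) ∧ C * G * Cᴴ = 1 := by
  have hD := LDL.diag_eq_lowerInv_conj hG
  set L := LDL.lowerInv hG with hL
  have hinv : IsUnit L := (isUnit_of_invertible (LDL.lowerInv hG))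
  have hpd : (L * G * Lᴴ).PosDef := by
    apply hG.mul_mul_conjTranspose_same
    exact Matrix.vecMul_injective_of_isUnit hinv
  rw [← hD] at hpd
  have hpos : ∀ i, 0 < LDL.diagEntries hG i := by
    intro i
    have := hpd.diag_pos (i := i)
    simpa [LDL.diag] using this
  set q : Fin s → ℝ := fun i => (Real.sqrt (LDL.diagEntries hG i).re)⁻¹ with hq
  refine ⟨Matrix.diagonal (fun i => (q i : ℂ)) * L, ?_, ?_⟩
  · intro i j hij
    rw [Matrix.diagonal_mul, hL, LDL.lowerInv_triangular hG hij, mul_zero]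
  · rw [Matrix.conjTranspose_mul, Matrix.mul_assoc, Matrix.mul_assoc, ← Matrix.mul_assoc G, ← Matrix.mul_assoc L,
      ← Matrix.mul_assoc L, ← hD, LDL.diag, Matrix.diagonal_conjTranspose, Matrix.diagonal_mul_diagonal, Matrix.diagonal_mul_diagonal,
      ← Matrix.diagonal_one]
    congr 1
    ext i
    have h := hpos i
    rw [Complex.lt_def] at h
    have h1 : LDL.diagEntries hG i = ((LDL.diagEntries hG i).re : ℂ) := by
      apply Complex.ext <;> simp [← h.2]
    have h3 : 0 < (LDL.diagEntries hG i).re := by simpa using h.1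
    have h4 : q i * ((LDL.diagEntries hG i).re * q i) = 1 := by
      rw [hq]
      have := Real.mul_self_sqrt h3.le
      have h5 : 0 < Real.sqrt (LDL.diagEntries hG i).re := Real.sqrt_pos.2 h3
      field_simp
      nlinarith
    rw [h1]
    simp only [Pi.star_apply, Complex.star_def, Complex.conj_ofReal]
    exact_mod_cast h4

variable {X : Type*} [TopologicalSpace X] [CompactSpace X] [MeasurableSpace X] [BorelSpace X]
  [SecondCountableTopology X] (ν : Measure X) [IsFiniteMeasure ν]

/-- Gram matrix of a family of functions with respect to `ρ ν`. -/
def gramM {s : ℕ} (e : Fin s → X → ℂ) (ρ : X → ℝ) : Matrix (Fin s) (Fin s) ℂ :=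
  Matrix.of fun i k => ∫ x, e i x * starRingEnd ℂ (e k x) * ρ x ∂ν

lemma cint {F : Type*} [NormedAddCommGroup F] {f : X → F} (hf : Continuous f) [SecondCountableTopology F] : Integrable f ν := by
  borelize F
  obtain ⟨C, hC⟩ := isCompact_univ.exists_bound_of_continuousOn hf.continuousOn
  exact Integrable.of_bound hf.aestronglyMeasurable C (Eventually.of_forall fun x => hC x (Set.mem_univ x))

lemma andreief {s : ℕ} (e : Fin s → X → ℂ) (he : ∀ i, Continuous (e i)) (ρ : X → ℝ) (hρ : Continuous ρ) :
    ((∫ x : Fin s → X, ‖(Matrix.of fun i j => e i (x j)).det‖ ^ 2 * ∏ j, ρ (x j) ∂(Measure.pi fun _ => ν) : ℝ) : ℂ)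
      = (s.factorial : ℂ) * (gramM ν e ρ).det := by
  rw [← integral_complex_ofReal]
  have h1 : ∀ x : Fin s → X, ((‖(Matrix.of fun i j => e i (x j)).det‖ ^ 2 * ∏ j, ρ (x j) : ℝ) : ℂ) =
      ∑ τ : Equiv.Perm (Fin s), ∑ σ : Equiv.Perm (Fin s), ((Equiv.Perm.sign τ : ℤ) : ℂ) * (((Equiv.Perm.sign σ : ℤ) : ℂ) *
        ∏ j, (e (σ j) (x j) * starRingEnd ℂ (e (τ j) (x j)) * ρ (x j))) := by
    intro x
    push_cast
    rw [← Complex.mul_conj', Matrix.det_apply', map_sum, mul_comm (Finset.sum _ _), Finset.sum_mul_sum, Finset.sum_mul]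
    refine Finset.sum_congr rfl fun τ _ => ?_
    rw [Finset.sum_mul]
    refine Finset.sum_congr rfl fun σ _ => ?_
    rw [map_mul, map_prod, Finset.prod_mul_distrib, Finset.prod_mul_distrib]
    simp only [Matrix.of_apply, map_intCast]
    ring
  simp_rw [h1]
  have hc : ∀ i k, Integrable (fun x => e i x * starRingEnd ℂ (e k x) * (ρ x : ℂ)) ν := by
    intro i k
    apply cint
    have := he i; have := he k
    have h3 : Continuous (fun x => starRingEnd ℂ (e k x)) := Complex.continuous_conj.comp (he k)
    fun_prop
  have hI : ∀ τ σ : Equiv.Perm (Fin s), Integrable (fun x : Fin s → X => ((Equiv.Perm.sign τ : ℤ) : ℂ) * (((Equiv.Perm.sign σ : ℤ) : ℂ) *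
        ∏ j, (e (σ j) (x j) * starRingEnd ℂ (e (τ j) (x j)) * (ρ (x j) : ℂ)))) (Measure.pi fun _ => ν) := by
    intro τ σ
    exact ((Integrable.fintype_prod (f := fun j x => e (σ j) x * starRingEnd ℂ (e (τ j) x) * (ρ x : ℂ)) fun j => hc _ _).const_mul _).const_mul _
  rw [integral_finsetSum _ (fun τ _ => integrable_finsetSum _ fun σ _ => hI τ σ)]
  simp_rw [integral_finsetSum _ (fun σ _ => hI _ σ), integral_const_mul]
  have h2 : ∀ τ : Equiv.Perm (Fin s), ∑ σ : Equiv.Perm (Fin s), ((Equiv.Perm.sign τ : ℤ) : ℂ) * (((Equiv.Perm.sign σ : ℤ) : ℂ) *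
      ∫ x : Fin s → X, ∏ j, (e (σ j) (x j) * starRingEnd ℂ (e (τ j) (x j)) * (ρ (x j) : ℂ)) ∂(Measure.pi fun _ => ν)) = (gramM ν e ρ).det := by
    intro τ
    rw [← Finset.mul_sum]
    have h3 : ∀ σ : Equiv.Perm (Fin s), ∫ x : Fin s → X, ∏ j, (e (σ j) (x j) * starRingEnd ℂ (e (τ j) (x j)) * (ρ (x j) : ℂ)) ∂(Measure.pi fun _ => ν) =
        ∏ j, ((gramM ν e ρ).submatrix id τ) (σ j) j := by
      intro σ
      rw [integral_fintype_prod_eq_prod (f := fun j x => e (σ j) x * starRingEnd ℂ (e (τ j) x) * (ρ x : ℂ))]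
      rfl
    simp_rw [h3]
    rw [← Matrix.det_apply', Matrix.det_permute', ← mul_assoc, ← Int.cast_mul]
    have : ((Equiv.Perm.sign τ : ℤ) * (Equiv.Perm.sign τ : ℤ)) = 1 := by
      rw [← Units.val_mul, Int.units_mul_self]; rfl
    rw [this]; simp
  simp_rw [h2]
  simp [Fintype.card_perm]

lemma gram_conj {s : ℕ} (e : Fin s → X → ℂ) (he : ∀ i, Continuous (e i)) (ρ : X → ℝ) (hρ : Continuous ρ)
    (C : Matrix (Fin s) (Fin s) ℂ) :
    gramM ν (fun i x => ∑ k, C i k * e k x) ρ = C * gramM ν e ρ * Cᴴ := by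
  have hc : ∀ i k, Integrable (fun x => e i x * starRingEnd ℂ (e k x) * (ρ x : ℂ)) ν := by
    intro i k
    apply cint
    have := he i; have := he k
    have h3 : Continuous (fun x => starRingEnd ℂ (e k x)) := Complex.continuous_conj.comp (he k)
    fun_prop
  ext i j
  simp only [gramM, Matrix.of_apply, Matrix.mul_apply, Matrix.conjTranspose_apply]
  have h1 : ∀ x, (∑ k, C i k * e k x) * starRingEnd ℂ (∑ k, C j k * e k x) * (ρ x : ℂ) =
      ∑ l, ∑ k, C i k * (star (C j l) * (e k x * starRingEnd ℂ (e l x) * (ρ x : ℂ))) := by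
    intro x
    rw [map_sum, mul_comm (Finset.sum _ _), Finset.sum_mul_sum, Finset.sum_mul]
    refine Finset.sum_congr rfl fun l _ => ?_
    rw [Finset.sum_mul]
    refine Finset.sum_congr rfl fun k _ => ?_
    rw [map_mul]
    simp only [Complex.star_def]
    ring
  simp_rw [h1]
  have hI : ∀ l k, Integrable (fun x => C i k * (star (C j l) * (e k x * starRingEnd ℂ (e l x) * (ρ x : ℂ)))) ν :=
    fun l k => ((hc k l).const_mul _).const_mul _
  rw [integral_finsetSum _ (fun τ _ => integrable_finsetSum _ fun σ _ => hI τ σ)]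
  simp_rw [integral_finsetSum _ (fun σ _ => hI _ σ), integral_const_mul]
  refine Finset.sum_congr rfl fun l _ => ?_
  rw [Finset.sum_mul]
  refine Finset.sum_congr rfl fun k _ => ?_
  ring

lemma gram_quad {s : ℕ} (e : Fin s → X → ℂ) (he : ∀ i, Continuous (e i)) (ρ : X → ℝ) (hρ : Continuous ρ)
    (y : Fin s → ℂ) :
    star y ⬝ᵥ (gramM ν e ρ) *ᵥ y = ((∫ x, ‖∑ k, star (y k) * e k x‖ ^ 2 * ρ x ∂ν : ℝ) : ℂ) := by
  have hc : ∀ i k, Integrable (fun x => e i x * starRingEnd ℂ (e k x) * (ρ x : ℂ)) ν := by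
    intro i k
    apply cint
    have := he i; have := he k
    have h3 : Continuous (fun x => starRingEnd ℂ (e k x)) := Complex.continuous_conj.comp (he k)
    fun_prop
  rw [← integral_complex_ofReal]
  have h1 : ∀ x, ((‖∑ k, star (y k) * e k x‖ ^ 2 * ρ x : ℝ) : ℂ) =
      ∑ k, ∑ l, star (y k) * (y l * (e k x * starRingEnd ℂ (e l x) * (ρ x : ℂ))) := by
    intro x
    push_cast
    rw [← Complex.mul_conj', map_sum, Finset.sum_mul_sum, Finset.sum_mul]
    refine Finset.sum_congr rfl fun l _ => ?_
    rw [Finset.sum_mul]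
    refine Finset.sum_congr rfl fun k _ => ?_
    rw [map_mul]
    simp only [Complex.star_def, Complex.conj_conj]
    ring
  simp_rw [h1]
  have hI : ∀ l k, Integrable (fun x => star (y l) * (y k * (e l x * starRingEnd ℂ (e k x) * (ρ x : ℂ)))) ν :=
    fun l k => ((hc l k).const_mul _).const_mul _
  rw [integral_finsetSum _ (fun τ _ => integrable_finsetSum _ fun σ _ => hI τ σ)]
  simp_rw [integral_finsetSum _ (fun σ _ => hI _ σ), integral_const_mul]
  simp only [dotProduct, Matrix.mulVec, gramM, Matrix.of_apply, Pi.star_apply]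
  refine Finset.sum_congr rfl fun l _ => ?_
  rw [Finset.mul_sum]
  refine Finset.sum_congr rfl fun k _ => ?_
  ring

lemma gram_herm {s : ℕ} (e : Fin s → X → ℂ) (ρ : X → ℝ) : (gramM ν e ρ).IsHermitian := by
  ext i j
  simp only [gramM, Matrix.conjTranspose_apply, Matrix.of_apply, Complex.star_def]
  rw [← integral_conj]
  congr 1
  ext x
  simp only [map_mul, Complex.conj_conj, Complex.conj_ofReal]
  ring

lemma gram_psd {s : ℕ} (e : Fin s → X → ℂ) (he : ∀ i, Continuous (e i)) (ρ : X → ℝ) (hρ : Continuous ρ)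
    (hρ0 : ∀ x, 0 ≤ ρ x) : (gramM ν e ρ).PosSemidef := by
  refine Matrix.PosSemidef.of_dotProduct_mulVec_nonneg (gram_herm ν e ρ) fun y => ?_
  rw [gram_quad ν e he ρ hρ]
  rw [Complex.zero_le_real]
  exact integral_nonneg fun x => mul_nonneg (by positivity) (hρ0 x)

lemma gram_pd {s : ℕ} (e : Fin s → X → ℂ) (he : ∀ i, Continuous (e i)) (ρ : X → ℝ) (hρ : Continuous ρ)
    (hpos : ∀ y : Fin s → ℂ, y ≠ 0 → 0 < ∫ x, ‖∑ k, y k * e k x‖ ^ 2 * ρ x ∂ν) : (gramM ν e ρ).PosDef := by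
  refine Matrix.PosDef.of_dotProduct_mulVec_pos (gram_herm ν e ρ) fun y hy => ?_
  rw [gram_quad ν e he ρ hρ]
  rw [Complex.zero_lt_real]
  exact hpos (star y) (by simpa using hy)

/-- The weighted integral of the squared determinant. -/
def Zr {s : ℕ} (e : Fin s → X → ℂ) (ρ : X → ℝ) : ℝ :=
  ∫ x : Fin s → X, ‖(Matrix.of fun i j => e i (x j)).det‖ ^ 2 * ∏ j, ρ (x j) ∂(Measure.pi fun _ => ν)

lemma Zr_eq {s : ℕ} (e : Fin s → X → ℂ) (he : ∀ i, Continuous (e i)) (ρ : X → ℝ) (hρ : Continuous ρ) :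
    Zr ν e ρ = s.factorial * (gramM ν e ρ).det.re := by
  have := congrArg Complex.re (andreief ν e he ρ hρ)
  rw [Complex.ofReal_re] at this
  rw [Zr, this]
  rw [← Complex.ofReal_natCast, Complex.re_ofReal_mul]

lemma Zr_pos {s : ℕ} (e : Fin s → X → ℂ) (he : ∀ i, Continuous (e i)) (ρ : X → ℝ) (hρ : Continuous ρ)
    (hpd : (gramM ν e ρ).PosDef) : 0 < Zr ν e ρ := by
  rw [Zr_eq ν e he ρ hρ]
  have := hpd.det_pos
  rw [Complex.lt_def] at this
  have h := this.1
  simp at h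
  positivity

lemma tilt_gen {s : ℕ} (e : Fin s → X → ℂ) (he : ∀ i, Continuous (e i)) (ρ : X → ℝ) (hρ : Continuous ρ)
    (hρ0 : ∀ x, 0 ≤ ρ x) (hpd : (gramM ν e ρ).PosDef) :
    ∃ B : X → ℝ, Continuous B ∧ (∀ x, 0 ≤ B x) ∧ ∫ x, B x ∂ν = s ∧
      ∀ v : X → ℝ, Continuous v → Zr ν e (fun x => ρ x * Real.exp (v x)) ≤
        Zr ν e ρ * Real.exp (∫ x, (Real.exp (v x) - 1) * B x ∂ν) := by
  obtain ⟨C, -, hC⟩ := chol _ hpd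
  set φ : Fin s → X → ℂ := fun i x => ∑ k, C i k * e k x with hφ
  have hφc : ∀ i, Continuous (φ i) := fun i => by rw [hφ]; fun_prop
  set B : X → ℝ := fun x => ∑ i, ‖φ i x‖ ^ 2 * ρ x with hB
  have hBc : Continuous B := by rw [hB]; fun_prop
  have htr : ∀ u : X → ℝ, Continuous u → (gramM ν φ (fun x => ρ x * u x)).trace = ((∫ x, u x * B x ∂ν : ℝ) : ℂ) := by
    intro u hu
    rw [← integral_complex_ofReal]
    simp only [Matrix.trace, Matrix.diag, gramM, Matrix.of_apply]
    rw [← integral_finsetSum]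
    · congr 1
      ext x
      rw [hB]
      push_cast
      rw [Finset.mul_sum]
      refine Finset.sum_congr rfl fun i _ => ?_
      rw [Complex.mul_conj']
      ring
    · intro i _
      apply cint
      have h3 : Continuous (fun x => starRingEnd ℂ (φ i x)) := Complex.continuous_conj.comp (hφc i)
      have := hφc i
      fun_prop
  have hBs : ∫ x, B x ∂ν = s := by
    have := htr (fun _ => 1) continuous_const
    simp only [mul_one, one_mul] at this
    have h2 : gramM ν φ ρ = 1 := by rw [hφ, gram_conj ν e he ρ hρ, hC]
    rw [h2, Matrix.trace_one, Fintype.card_fin] at this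
    exact_mod_cast this.symm
  refine ⟨B, hBc, fun x => Finset.sum_nonneg fun i _ => mul_nonneg (by positivity) (hρ0 x), hBs, ?_⟩
  intro v hv
  have hρ' : Continuous (fun x => ρ x * Real.exp (v x)) := by fun_prop
  have hg' : gramM ν φ (fun x => ρ x * Real.exp (v x)) = C * gramM ν e (fun x => ρ x * Real.exp (v x)) * Cᴴ := by
    rw [hφ, gram_conj ν e he _ hρ']
  have hpsd := gram_psd ν φ hφc (fun x => ρ x * Real.exp (v x)) hρ' (fun x => mul_nonneg (hρ0 x) (Real.exp_pos _).le)
  have h1 := psd_det_le _ hpsd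
  rw [htr (fun x => Real.exp (v x)) (by fun_prop), Complex.ofReal_re] at h1
  have hinter : ∫ x, (Real.exp (v x) - 1) * B x ∂ν = ∫ x, Real.exp (v x) * B x ∂ν - s := by
    rw [← hBs, ← integral_sub]
    · congr 1; ext x; ring
    · exact cint ν (by fun_prop)
    · exact cint ν hBc
  rw [hinter]
  rw [Zr_eq ν e he ρ hρ, Zr_eq ν e he _ hρ']
  have hd : (gramM ν e (fun x => ρ x * Real.exp (v x))).det = (gramM ν φ (fun x => ρ x * Real.exp (v x))).det * (gramM ν e ρ).det := by
    have hdC : C.det * (gramM ν e ρ).det * (Cᴴ).det = 1 := by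
      rw [← Matrix.det_mul, ← Matrix.det_mul, hC, Matrix.det_one]
    rw [hg', Matrix.det_mul, Matrix.det_mul]
    linear_combination (-(gramM ν e (fun x => ρ x * Real.exp (v x))).det) * hdC
  have hdp := hpd.det_pos
  rw [Complex.lt_def] at hdp
  have him : (gramM ν e ρ).det = ((gramM ν e ρ).det.re : ℂ) := by
    apply Complex.ext
    · simp
    · simpa using hdp.2.symm
  rw [hd, him, Complex.re_mul_ofReal, Complex.ofReal_re]
  have hp : 0 < (gramM ν e ρ).det.re := by simpa using hdp.1
  calc (s.factorial : ℝ) * ((gramM ν φ (fun x => ρ x * Real.exp (v x))).det.re * (gramM ν e ρ).det.re)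
      ≤ s.factorial * (Real.exp (∫ x, Real.exp (v x) * B x ∂ν - s) * (gramM ν e ρ).det.re) := by gcongr
    _ = _ := by ring

end gramsec

/-- Multi-index as a finitely supported function. -/
def mi {n : ℕ} (α : Fin n → ℕ) : Fin n →₀ ℕ := Finsupp.equivFunOnFinite.symm α

lemma mi_apply {n : ℕ} (α : Fin n → ℕ) (i : Fin n) : mi α i = α i := rfl

lemma mi_inj {n : ℕ} : Function.Injective (mi (n := n)) := Finsupp.equivFunOnFinite.symm.injective

/-- The degree-lexicographic order. -/
def dl (n : ℕ) : MonomialOrder (Fin n) := MonomialOrder.degLex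

/-- `p` is monic with leading multi-index `α`. -/
def MonicAt {n : ℕ} (α : Fin n → ℕ) (p : MvPolynomial (Fin n) ℂ) : Prop :=
  (dl n).degree p = mi α ∧ (dl n).Monic p

lemma dl_le_degree {n : ℕ} {a b : Fin n →₀ ℕ} (h : (dl n).toSyn a ≤ (dl n).toSyn b) : a.degree ≤ b.degree :=
  Finsupp.DegLex.monotone_degree (MonomialOrder.degLex_le_iff.1 h)

lemma mi_degree {n : ℕ} (α : Fin n → ℕ) : (mi α).degree = ∑ i, α i := by
  rw [Finsupp.degree_eq_sum]; rfl

lemma pe_monomial {n : ℕ} (α : Fin n → ℕ) (c : ℂ) (x : Pt n) :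
    pe (MvPolynomial.monomial (mi α) c) x = c * ∏ k, x k ^ α k := by
  rw [pe, MvPolynomial.eval_monomial, Finsupp.prod_fintype _ _ (by simp)]
  rfl

lemma monicAt_monomial {n : ℕ} (α : Fin n → ℕ) : MonicAt α (MvPolynomial.monomial (mi α) (1 : ℂ)) := by
  classical
  refine ⟨?_, MonomialOrder.monic_monomial_one⟩
  rw [MonomialOrder.degree_monomial]; simp

lemma MonicAt.mul {n : ℕ} {α β : Fin n → ℕ} {p q : MvPolynomial (Fin n) ℂ} (hp : MonicAt α p) (hq : MonicAt β q) :
    MonicAt (α + β) (p * q) := by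
  refine ⟨?_, hp.2.mul hq.2⟩
  rw [MonomialOrder.degree_mul hp.2.ne_zero hq.2.ne_zero, hp.1, hq.1]
  ext i; simp [mi_apply]

lemma MonicAt.pow {n : ℕ} {α : Fin n → ℕ} {p : MvPolynomial (Fin n) ℂ} (hp : MonicAt α p) (m : ℕ) :
    MonicAt (m • α) (p ^ m) := by
  refine ⟨?_, hp.2.pow⟩
  rw [MonomialOrder.degree_pow, hp.1]
  ext i; simp [mi_apply]

lemma MonicAt.mk' {n : ℕ} {α : Fin n → ℕ} {p : MvPolynomial (Fin n) ℂ} (h1 : p.coeff (mi α) = 1)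
    (h2 : ∀ m ∈ p.support, (dl n).toSyn m ≤ (dl n).toSyn (mi α)) : MonicAt α p := by
  have hd : (dl n).degree p = mi α := by
    apply (dl n).toSyn.injective
    apply le_antisymm
    · exact MonomialOrder.degree_le_iff.2 h2
    · apply MonomialOrder.le_degree
      rw [MvPolynomial.mem_support_iff, h1]; exact one_ne_zero
  refine ⟨hd, ?_⟩
  rw [MonomialOrder.Monic, MonomialOrder.leadingCoeff, hd, h1]

lemma MonicAt.totalDegree_le {n : ℕ} {α : Fin n → ℕ} {p : MvPolynomial (Fin n) ℂ} (hp : MonicAt α p) (d : ℕ)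
    (hd : ∑ i, α i ≤ d) : p.totalDegree ≤ d := by
  apply Finset.sup_le
  intro m hm
  have h1 := dl_le_degree (MonomialOrder.le_degree (m := dl n) hm)
  rw [hp.1, mi_degree] at h1
  refine le_trans (le_of_eq ?_) (h1.trans hd)
  rfl

/-- Sorted enumeration. -/
def SortedEnum {n d : ℕ} (E : Fin (sdim n d) → (Fin n → ℕ)) : Prop :=
  ∀ i j, i < j → (dl n).toSyn (mi (E i)) < (dl n).toSyn (mi (E j))

lemma exists_sorted {n d : ℕ} (E : Fin (sdim n d) → (Fin n → ℕ)) (hE : IsEnum n d E) :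
    ∃ σ : Equiv.Perm (Fin (sdim n d)), IsEnum n d (E ∘ σ) ∧ SortedEnum (E ∘ σ) := by
  refine ⟨Tuple.sort (fun i => (dl n).toSyn (mi (E i))), ⟨hE.1.comp (Equiv.injective _), ?_⟩, ?_⟩
  · intro α
    rw [hE.2 α, (Equiv.surjective _).range_comp]
  · intro i j hij
    have h1 := Tuple.monotone_sort (fun i => (dl n).toSyn (mi (E i))) hij.le
    refine lt_of_le_of_ne h1 ?_
    intro h
    have h2 := (Equiv.injective _) (hE.1 (mi_inj ((dl n).toSyn.injective h)))
    exact hij.ne h2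

lemma VDM_perm {n d : ℕ} (E : Fin (sdim n d) → (Fin n → ℕ)) (σ : Equiv.Perm (Fin (sdim n d)))
    (a : Fin (sdim n d) → Pt n) : ‖VDM n d (E ∘ σ) a‖ = ‖VDM n d E a‖ := by
  have : VDM n d (E ∘ σ) a = ((Matrix.of fun i j => ∏ k, (a j k) ^ (E i k)).submatrix σ id).det := rfl
  rw [this, Matrix.det_permute, norm_mul, ← VDM]
  rcases Int.units_eq_one_or (Equiv.Perm.sign σ) with h | h <;> simp [h]

lemma pe_expand {n d : ℕ} (E : Fin (sdim n d) → (Fin n → ℕ)) (hE : IsEnum n d E)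
    (p : MvPolynomial (Fin n) ℂ) (hp : p.totalDegree ≤ d) (x : Pt n) :
    pe p x = ∑ k, p.coeff (mi (E k)) * ∏ l, x l ^ E k l := by
  classical
  rw [pe, MvPolynomial.eval_eq']
  have hsub : p.support ⊆ Finset.univ.image (fun k => mi (E k)) := by
    intro m hm
    have h1 := (MvPolynomial.le_totalDegree hm).trans hp
    have h2 : ∑ i, m i ≤ d := by
      refine le_trans (le_of_eq ?_) h1
      rw [← Finsupp.degree_eq_sum]
      try rfl
    obtain ⟨k, hk⟩ := (hE.2 (fun i => m i)).1 h2
    rw [Finset.mem_image]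
    exact ⟨k, Finset.mem_univ _, by rw [hk]; ext i; rfl⟩
  rw [Finset.sum_subset hsub]
  · rw [Finset.sum_image]
    · rfl
    · intro a _ b _ h
      exact hE.1 (mi_inj h)
  · intro m _ hm
    rw [MvPolynomial.notMem_support_iff.1 hm, zero_mul]

lemma VDM_monic {n d : ℕ} (E : Fin (sdim n d) → (Fin n → ℕ)) (hE : IsEnum n d E) (hs : SortedEnum E)
    (p : Fin (sdim n d) → MvPolynomial (Fin n) ℂ) (hp : ∀ i, MonicAt (E i) (p i)) (a : Fin (sdim n d) → Pt n) :
    VDM n d E a = (Matrix.of fun i j => pe (p i) (a j)).det := by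
  set C : Matrix (Fin (sdim n d)) (Fin (sdim n d)) ℂ := Matrix.of fun i k => (p i).coeff (mi (E k)) with hC
  have h1 : (Matrix.of fun i j => pe (p i) (a j)) = C * (Matrix.of fun i j => ∏ k, (a j k) ^ (E i k)) := by
    ext i j
    rw [Matrix.mul_apply, Matrix.of_apply, pe_expand E hE (p i) ((hp i).totalDegree_le d ((hE.2 _).2 ⟨i, rfl⟩))]
    rfl
  have h2 : C.det = 1 := by
    rw [Matrix.det_of_isLowerTriangular]
    · apply Finset.prod_eq_one
      intro i _
      have := (hp i).2.coeff_degree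
      rw [(hp i).1] at this
      exact this
    · intro i j hij
      apply MonomialOrder.coeff_eq_zero_of_lt (m := dl n)
      rw [(hp i).1]
      exact hs _ _ hij
  rw [h1, Matrix.det_mul, h2, one_mul, VDM]

lemma det_bound {s : ℕ} (A : Matrix (Fin s) (Fin s) ℂ) (M : Fin s → ℝ) (hM : ∀ i j, ‖A i j‖ ≤ M i) :
    ‖A.det‖ ≤ s.factorial * ∏ i, M i := by
  rw [Matrix.det_apply']
  refine (norm_sum_le _ _).trans ?_
  have : ∀ σ : Equiv.Perm (Fin s), ‖((Equiv.Perm.sign σ : ℤ) : ℂ) * ∏ i, A (σ i) i‖ ≤ ∏ i, M i := by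
    intro σ
    have h1 : ‖((Equiv.Perm.sign σ : ℤ) : ℂ)‖ = 1 := by
      rcases Int.units_eq_one_or (Equiv.Perm.sign σ) with h | h <;> simp [h]
    rw [norm_mul, h1, one_mul, norm_prod, ← Equiv.prod_comp σ M]
    exact Finset.prod_le_prod (fun i _ => norm_nonneg _) (fun i _ => hM _ _)
  refine (Finset.sum_le_sum fun σ _ => this σ).trans ?_
  simp [Fintype.card_perm]

lemma vdm_bound {n d : ℕ} (E : Fin (sdim n d) → (Fin n → ℕ)) (hE : IsEnum n d E) (H : Set (Pt n)) (Q : H → ℝ)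
    (p : (Fin n → ℕ) → MvPolynomial (Fin n) ℂ) (hp : ∀ α, ∑ i, α i ≤ d → MonicAt α (p α))
    (M : (Fin n → ℕ) → ℝ) (hM : ∀ α, ∑ i, α i ≤ d → ∀ x : H, ‖pe (p α) x‖ * Real.exp (-(d : ℝ) * Q x) ≤ M α)
    (a : Fin (sdim n d) → H) :
    ‖VDM n d E (fun j => (a j : Pt n))‖ * ∏ j, Real.exp (-(d : ℝ) * Q (a j)) ≤
      (sdim n d).factorial * ∏ i, M (E i) := by
  obtain ⟨σ, hσ, hs⟩ := exists_sorted E hE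
  rw [← VDM_perm E σ, VDM_monic (E ∘ σ) hσ hs (fun i => p ((E ∘ σ) i)) (fun i => hp _ ((hσ.2 _).2 ⟨i, rfl⟩))]
  have h1 : ∏ i, M (E i) = ∏ i, M ((E ∘ σ) i) := (Equiv.prod_comp σ (fun i => M (E i))).symm
  rw [h1]
  have h2 : ‖(Matrix.of fun i j => pe (p ((E ∘ σ) i)) (a j : Pt n)).det‖ * ∏ j, Real.exp (-(d : ℝ) * Q (a j)) =
      ‖(Matrix.of fun i j => ((Real.exp (-(d : ℝ) * Q (a j)) : ℝ) : ℂ) * pe (p ((E ∘ σ) i)) (a j : Pt n)).det‖ := by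
    have := Matrix.det_mul_row (fun j => ((Real.exp (-(d : ℝ) * Q (a j)) : ℝ) : ℂ)) (Matrix.of fun i j => pe (p ((E ∘ σ) i)) (a j : Pt n))
    simp only [Matrix.of_apply] at this
    rw [this, norm_mul, mul_comm, norm_prod]
    congr 1
    refine Finset.prod_congr rfl fun j _ => ?_
    rw [Complex.norm_real, Real.norm_of_nonneg (Real.exp_pos _).le]
  rw [h2]
  apply det_bound
  intro i j
  rw [Matrix.of_apply, norm_mul, Complex.norm_real, Real.norm_of_nonneg (Real.exp_pos _).le, mul_comm]
  exact hM _ ((hσ.2 _).2 ⟨i, rfl⟩) _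

/-- Monomials as functions on `H`. -/
def eH {n d : ℕ} (E : Fin (sdim n d) → (Fin n → ℕ)) (H : Set (Pt n)) (i : Fin (sdim n d)) (x : H) : ℂ :=
  ∏ k, (x : Pt n) k ^ E i k

lemma eH_cont {n d : ℕ} (E : Fin (sdim n d) → (Fin n → ℕ)) (H : Set (Pt n)) (i : Fin (sdim n d)) :
    Continuous (eH E H i) := by
  unfold eH; fun_prop

lemma exists_ne_zero {n : ℕ} (H : Set (Pt n)) (hinter : (interior H).Nonempty) (p : MvPolynomial (Fin n) ℂ)
    (hp : p ≠ 0) : ∃ x : H, pe p x ≠ 0 := by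
  by_contra hcon
  push Not at hcon
  apply hp
  obtain ⟨c, hc⟩ := hinter
  have hopen : IsOpen (WithLp.toLp 2 ⁻¹' (interior H) : Set (Fin n → ℂ)) :=
    isOpen_interior.preimage (PiLp.continuous_toLp 2 _)
  obtain ⟨r, hr, hb⟩ := Metric.isOpen_iff.1 hopen (fun i => c i) (by simpa using hc)
  apply MvPolynomial.funext_set (fun i => Metric.ball (c i) r)
  · intro i
    exact (infinite_of_mem_nhds (c i) (Metric.ball_mem_nhds _ hr))
  · intro x hx
    have h1 : x ∈ Metric.ball (fun i => c i) r := by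
      rw [Metric.mem_ball, dist_pi_lt_iff hr]
      intro i
      exact hx i (Set.mem_univ i)
    have h2 := interior_subset (hb h1)
    have := hcon ⟨_, h2⟩
    rw [map_zero]
    exact this

/-- Polynomial with given coefficients. -/
def polyOf {n d : ℕ} (E : Fin (sdim n d) → (Fin n → ℕ)) (y : Fin (sdim n d) → ℂ) : MvPolynomial (Fin n) ℂ :=
  ∑ k, MvPolynomial.monomial (mi (E k)) (y k)

lemma polyOf_deg {n d : ℕ} (E : Fin (sdim n d) → (Fin n → ℕ)) (hE : IsEnum n d E) (y : Fin (sdim n d) → ℂ) :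
    (polyOf E y).totalDegree ≤ d := by
  apply MvPolynomial.totalDegree_finsetSum_le
  intro k _
  refine (MvPolynomial.totalDegree_monomial_le _ _).trans ?_
  refine le_trans (le_of_eq ?_) ((hE.2 (E k)).2 ⟨k, rfl⟩)
  rw [← mi_degree]
  rfl

lemma polyOf_pe {n d : ℕ} (E : Fin (sdim n d) → (Fin n → ℕ)) (y : Fin (sdim n d) → ℂ) (x : Pt n) :
    pe (polyOf E y) x = ∑ k, y k * ∏ l, x l ^ E k l := by
  rw [pe, polyOf, map_sum]
  exact Finset.sum_congr rfl fun k _ => pe_monomial _ _ _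

lemma polyOf_coeff {n d : ℕ} (E : Fin (sdim n d) → (Fin n → ℕ)) (hE : IsEnum n d E) (y : Fin (sdim n d) → ℂ) (k : Fin (sdim n d)) :
    (polyOf E y).coeff (mi (E k)) = y k := by
  classical
  rw [polyOf, MvPolynomial.coeff_sum, Finset.sum_eq_single k]
  · simp
  · intro j _ hj
    rw [MvPolynomial.coeff_monomial, if_neg]
    exact fun h => hj (hE.1 (mi_inj h))
  · simp

/-- Weight. -/
def rho {n : ℕ} (d : ℕ) (H : Set (Pt n)) (Q : H → ℝ) (x : H) : ℝ := Real.exp (-(d : ℝ) * Q x) ^ 2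

lemma rho_cont {n : ℕ} (d : ℕ) (H : Set (Pt n)) (Q : H → ℝ) (hQ : Continuous Q) : Continuous (rho d H Q) := by
  unfold rho; fun_prop

open ComplexOrder in
lemma gram_posDef {n : ℕ} (H : Set (Pt n)) (hc : IsCompact H) (hconv : Convex ℝ H)
    (hinter : (interior H).Nonempty) (ν : Measure H) [IsFiniteMeasure ν] (hdens : DensityCond H ν)
    (Q : H → ℝ) (hQ : Continuous Q) (d : ℕ) (E : Fin (sdim n d) → (Fin n → ℕ)) (hE : IsEnum n d E) :
    (gramM ν (eH E H) (rho d H Q)).PosDef := by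
  have : CompactSpace H := isCompact_iff_compactSpace.1 hc
  apply gram_pd ν _ (eH_cont E H) _ (rho_cont d H Q hQ)
  intro y hy
  obtain ⟨C, hC, hBM⟩ := bernstein_markov H hc hconv hinter ν hdens Q hQ 1 one_pos
  have hp : polyOf E y ≠ 0 := by
    intro h
    apply hy
    ext k
    rw [← polyOf_coeff E hE y k, h]; simp
  obtain ⟨x, hx⟩ := exists_ne_zero H hinter _ hp
  have h1 := hBM d _ (polyOf_deg E hE y) x
  have h2 : 0 < (‖pe (polyOf E y) x‖ * Real.exp (-(d : ℝ) * Q x)) ^ 2 := by positivity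
  have h3 : ∫ x : H, (‖pe (polyOf E y) x‖ * Real.exp (-(d : ℝ) * Q x)) ^ 2 ∂ν =
      ∫ x : H, ‖∑ k, y k * eH E H k x‖ ^ 2 * rho d H Q x ∂ν := by
    congr 1
    ext x
    rw [polyOf_pe, mul_pow]
    rfl
  rw [h3] at h1
  exact pos_of_mul_pos_right (h2.trans_le h1) (by positivity)

/-- The partition function. -/
def ZZ {n : ℕ} (d : ℕ) (E : Fin (sdim n d) → (Fin n → ℕ)) (H : Set (Pt n)) (ν : Measure H) (Q : H → ℝ) : ℝ :=
  Zr ν (eH E H) (rho d H Q)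

lemma ZZ_eq {n : ℕ} (d : ℕ) (E : Fin (sdim n d) → (Fin n → ℕ)) (H : Set (Pt n)) (ν : Measure H) (Q : H → ℝ) :
    ZZ d E H ν Q = ∫ a : Fin (sdim n d) → H, (‖VDM n d E (fun j => (a j : Pt n))‖ * ∏ j, Real.exp (-(d : ℝ) * Q (a j))) ^ 2
      ∂(Measure.pi fun _ => ν) := by
  unfold ZZ Zr
  congr 1
  ext a
  rw [mul_pow, ← Finset.prod_pow]
  rfl

lemma ZZ_perm {n : ℕ} (d : ℕ) (E : Fin (sdim n d) → (Fin n → ℕ)) (σ : Equiv.Perm (Fin (sdim n d))) (H : Set (Pt n)) (ν : Measure H) (Q : H → ℝ) :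
    ZZ d (E ∘ σ) H ν Q = ZZ d E H ν Q := by
  rw [ZZ_eq, ZZ_eq]
  simp_rw [VDM_perm]

lemma monic_min {n : ℕ} (H : Set (Pt n)) (hc : IsCompact H) (hconv : Convex ℝ H)
    (hinter : (interior H).Nonempty) (ν : Measure H) [IsFiniteMeasure ν] (hdens : DensityCond H ν)
    (Q : H → ℝ) (hQ : Continuous Q) (ε : ℝ) (hε : 0 < ε) :
    ∃ C : ℝ, 0 < C ∧ ∀ (d : ℕ) (E : Fin (sdim n d) → (Fin n → ℕ)), IsEnum n d E →
      ∃ (p : (Fin n → ℕ) → MvPolynomial (Fin n) ℂ) (M : (Fin n → ℕ) → ℝ),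
        (∀ α, ∑ i, α i ≤ d → MonicAt α (p α)) ∧ (∀ α, 0 < M α) ∧
        (∀ α, ∑ i, α i ≤ d → ∀ x : H, ‖pe (p α) x‖ * Real.exp (-(d : ℝ) * Q x) ≤ M α) ∧
        ∏ i, M (E i) ^ 2 ≤ (C * Real.exp (ε * d)) ^ (sdim n d) * ZZ d E H ν Q := by
  have : CompactSpace H := isCompact_iff_compactSpace.1 hc
  obtain ⟨C, hC, hBM⟩ := bernstein_markov H hc hconv hinter ν hdens Q hQ ε hε
  refine ⟨C, hC, fun d E hE => ?_⟩
  obtain ⟨σ, hσ, hs⟩ := exists_sorted E hE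
  set E' := E ∘ σ with hE'
  have hpd := gram_posDef H hc hconv hinter ν hdens Q hQ d E' hσ
  obtain ⟨L, hL, hLG⟩ := chol _ hpd
  have hdet : L.det * (gramM ν (eH E' H) (rho d H Q)).det * starRingEnd ℂ L.det = 1 := by
    have := congrArg Matrix.det hLG
    rw [Matrix.det_mul, Matrix.det_mul, Matrix.det_conjTranspose, Matrix.det_one] at this
    exact this
  have hLd : L.det = ∏ i, L i i := by
    rw [Matrix.det_of_isLowerTriangular]
    intro i j hij
    exact hL _ _ hij
  have hLd0 : L.det ≠ 0 := by
    intro h; rw [h] at hdet; simp at hdet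
  have hLii : ∀ i, L i i ≠ 0 := by
    rw [hLd] at hLd0
    intro i
    exact Finset.prod_ne_zero_iff.1 hLd0 i (Finset.mem_univ i)
  set lam := C * Real.exp (ε * d) with hlam
  have hlam0 : 0 < lam := by positivity
  set p' : Fin (sdim n d) → MvPolynomial (Fin n) ℂ := fun i => polyOf E' (fun k => L i k / L i i) with hp'
  set M' : Fin (sdim n d) → ℝ := fun i => Real.sqrt lam / ‖L i i‖ with hM'
  have hM'0 : ∀ i, 0 < M' i := fun i => div_pos (Real.sqrt_pos.2 hlam0) (norm_pos_iff.2 (hLii i))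
  have hmon : ∀ i, MonicAt (E' i) (p' i) := by
    intro i
    apply MonicAt.mk'
    · rw [hp', polyOf_coeff E' hσ, div_self (hLii i)]
    · intro m hm
      rw [MvPolynomial.mem_support_iff] at hm
      have : ∃ k, (MvPolynomial.monomial (mi (E' k)) (L i k / L i i)).coeff m ≠ 0 := by
        by_contra hcon
        push Not at hcon
        apply hm
        rw [hp']
        simp only [polyOf, MvPolynomial.coeff_sum]
        exact Finset.sum_eq_zero fun k _ => hcon k
      obtain ⟨k, hk⟩ := this
      classical
      rw [MvPolynomial.coeff_monomial] at hk
      split_ifs at hk with h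
      · rw [← h]
        rcases lt_trichotomy k i with hki | hki | hki
        · exact (hs _ _ hki).le
        · rw [hki]
        · exact absurd (by rw [hL _ _ hki, zero_div]) hk
      · exact absurd rfl hk
  have hnorm : ∀ i, ∫ x : H, (‖pe (p' i) x‖ * Real.exp (-(d : ℝ) * Q x)) ^ 2 ∂ν = 1 / ‖L i i‖ ^ 2 := by
    intro i
    have h1 := congrFun (congrFun (gram_conj ν (eH E' H) (eH_cont E' H) (rho d H Q) (rho_cont d H Q hQ) L) i) i
    rw [hLG, Matrix.one_apply_eq] at h1
    simp only [gramM, Matrix.of_apply] at h1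
    have h2 : ((∫ x : H, ‖∑ k, L i k * eH E' H k x‖ ^ 2 * rho d H Q x ∂ν : ℝ) : ℂ) = 1 := by
      rw [← integral_complex_ofReal, ← h1]
      congr 1
      ext x
      push_cast
      rw [← Complex.mul_conj']
    have h3 : ∫ x : H, ‖∑ k, L i k * eH E' H k x‖ ^ 2 * rho d H Q x ∂ν = 1 := by exact_mod_cast h2
    rw [← h3, ← integral_div]
    congr 1
    ext x
    rw [hp', polyOf_pe, mul_pow]
    have : ∑ k, L i k / L i i * ∏ l, (x : Pt n) l ^ E' k l = (∑ k, L i k * eH E' H k x) / L i i := by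
      rw [Finset.sum_div]
      refine Finset.sum_congr rfl fun k _ => ?_
      rw [eH]; ring
    rw [this, norm_div, div_pow, rho]
    ring
  have hbd : ∀ i, ∀ x : H, ‖pe (p' i) x‖ * Real.exp (-(d : ℝ) * Q x) ≤ M' i := by
    intro i x
    have h1 := hBM d (p' i) (polyOf_deg E' hσ _) x
    rw [hnorm i] at h1
    have h2 : M' i ^ 2 = lam * (1 / ‖L i i‖ ^ 2) := by
      rw [hM', div_pow, Real.sq_sqrt hlam0.le]; ring
    rw [← hlam, ← h2] at h1
    exact (pow_le_pow_iff_left₀ (by positivity) (hM'0 i).le two_ne_zero).1 h1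
  have : Nonempty (Fin (sdim n d)) := ⟨⟨0, sdim_pos n d⟩⟩
  have hinv := Function.leftInverse_invFun hσ.1
  refine ⟨fun α => p' (Function.invFun E' α), fun α => M' (Function.invFun E' α), ?_, fun α => hM'0 _, ?_, ?_⟩
  · intro α hα
    obtain ⟨i, rfl⟩ := (hσ.2 α).1 hα
    simp only [hinv i]
    exact hmon i
  · intro α hα x
    exact hbd _ x
  · have h1 : ∏ i, M' (Function.invFun E' (E i)) ^ 2 = ∏ i, M' i ^ 2 := by
      rw [← Equiv.prod_comp σ]
      refine Finset.prod_congr rfl fun i _ => ?_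
      have : E (σ i) = E' i := rfl
      rw [this, hinv i]
    rw [h1]
    have h2 : ∏ i, M' i ^ 2 = lam ^ (sdim n d) * (1 / ‖L.det‖ ^ 2) := by
      have : ∀ i, M' i ^ 2 = lam * (1 / ‖L i i‖ ^ 2) := by
        intro i
        rw [hM', div_pow, Real.sq_sqrt hlam0.le]; ring
      simp_rw [this]
      rw [Finset.prod_mul_distrib, Finset.prod_const, hLd, norm_prod, ← Finset.prod_pow]
      simp
    rw [h2]
    gcongr
    rw [← ZZ_perm d E σ, ZZ, Zr_eq ν _ (eH_cont _ H) _ (rho_cont d H Q hQ)]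
    have h3 : (gramM ν (eH E' H) (rho d H Q)).det = ((1 / ‖L.det‖ ^ 2 : ℝ) : ℂ) := by
      have h4 : L.det * starRingEnd ℂ L.det = ((‖L.det‖ ^ 2 : ℝ) : ℂ) := by
        push_cast; rw [Complex.mul_conj']
      have h5 : ((‖L.det‖ ^ 2 : ℝ) : ℂ) ≠ 0 := by
        have : ‖L.det‖ ≠ 0 := norm_ne_zero_iff.2 hLd0
        exact_mod_cast pow_ne_zero 2 this
      rw [Complex.ofReal_div, Complex.ofReal_one, eq_div_iff h5, ← h4, ← hdet]
      ring
    rw [← hE', h3, Complex.ofReal_re]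
    have h6 : (1 : ℝ) ≤ (sdim n d).factorial := by exact_mod_cast Nat.one_le_iff_ne_zero.2 (Nat.factorial_ne_zero _)
    have h7 : 0 ≤ 1 / ‖L.det‖ ^ 2 := by positivity
    nlinarith

lemma count_div {n d0 d m : ℕ} (hm : 1 ≤ m) (hd : m * (d0 + n) ≤ d)
    (E0 : Fin (sdim n d0) → (Fin n → ℕ)) (hE0 : IsEnum n d0 E0)
    (E : Fin (sdim n d) → (Fin n → ℕ)) (hE : IsEnum n d E) (h : (Fin n → ℕ) → ℝ) :
    ∑ i, (if ∑ l, E i l / m ≤ d0 then h (fun l => E i l / m) else 0) = (m : ℝ) ^ n * ∑ j, h (E0 j) := by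
  have h1 : (m : ℝ) ^ n * ∑ j, h (E0 j) = ∑ q : Fin (sdim n d0) × (Fin n → Fin m), h (E0 q.1) := by
    rw [Fintype.sum_prod_type]
    simp [Finset.mul_sum]
  rw [h1, ← Finset.sum_filter]
  symm
  have hex : ∀ q : Fin (sdim n d0) × (Fin n → Fin m), ∃ i, E i = fun l => m * E0 q.1 l + (q.2 l : ℕ) := by
    intro q
    apply (hE.2 _).1
    have h2 : ∑ l, E0 q.1 l ≤ d0 := (hE0.2 _).2 ⟨q.1, rfl⟩
    have h3 : ∑ l, ((q.2 l : ℕ)) ≤ n * m := by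
      calc ∑ l, ((q.2 l : ℕ)) ≤ ∑ l : Fin n, m := Finset.sum_le_sum fun l _ => (q.2 l).2.le
        _ = n * m := by simp
    rw [Finset.sum_add_distrib, ← Finset.mul_sum]
    nlinarith
  choose f hf using hex
  have hdiv : ∀ q l, E (f q) l / m = E0 q.1 l := by
    intro q l
    rw [hf q]
    show (m * E0 q.1 l + (q.2 l : ℕ)) / m = E0 q.1 l
    rw [Nat.mul_add_div (by omega), Nat.div_eq_of_lt (q.2 l).2, add_zero]
  have hmod : ∀ q l, E (f q) l % m = (q.2 l : ℕ) := by
    intro q l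
    rw [hf q]
    show (m * E0 q.1 l + (q.2 l : ℕ)) % m = (q.2 l : ℕ)
    rw [Nat.mul_add_mod, Nat.mod_eq_of_lt (q.2 l).2]
  apply Finset.sum_bij (fun q _ => f q)
  · intro q _
    rw [Finset.mem_filter]
    refine ⟨Finset.mem_univ _, ?_⟩
    simp_rw [hdiv]
    exact (hE0.2 _).2 ⟨q.1, rfl⟩
  · intro q _ q' _ hqq
    apply Prod.ext
    · apply hE0.1
      ext l
      rw [← hdiv q l, ← hdiv q' l, hqq]
    · ext l
      rw [← hmod q l, ← hmod q' l, hqq]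
  · intro i hi
    rw [Finset.mem_filter] at hi
    obtain ⟨j, hj⟩ := (hE0.2 _).1 hi.2
    refine ⟨(j, fun l => ⟨E i l % m, Nat.mod_lt _ (by omega)⟩), Finset.mem_univ _, ?_⟩
    apply hE.1
    rw [hf]
    ext l
    show m * E0 j l + E i l % m = E i l
    rw [hj]
    exact Nat.div_add_mod _ _
  · intro q _
    congr 1
    ext l
    rw [hdiv]

lemma exists_K {n : ℕ} (H : Set (Pt n)) (hc : IsCompact H) (Q : H → ℝ) (hQ : Continuous Q) (k0 : ℝ) :
    ∃ k : ℝ, 0 ≤ k ∧ k0 ≤ k ∧ (∀ x : H, |Q x| ≤ k) ∧ ∀ (x : H) (α : Fin n → ℕ), ‖∏ l, (x : Pt n) l ^ α l‖ ≤ Real.exp (k * ∑ l, (α l : ℝ)) := by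
  have : CompactSpace H := isCompact_iff_compactSpace.1 hc
  obtain ⟨R, hR⟩ := hc.isBounded.exists_norm_le
  obtain ⟨q, hq⟩ := isCompact_univ.exists_bound_of_continuousOn hQ.continuousOn
  refine ⟨max 0 (max k0 (max R q)), le_max_left _ _, (le_max_left _ _).trans (le_max_right _ _), ?_, ?_⟩
  · intro x
    refine (hq x (Set.mem_univ x)).trans ?_
    exact (le_max_right _ _).trans ((le_max_right _ _).trans (le_max_right _ _))
  · intro x α
    set k := max 0 (max k0 (max R q))
    have hRk : R ≤ k := (le_max_left _ _).trans ((le_max_right _ _).trans (le_max_right _ _))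
    rw [norm_prod, Finset.mul_sum, Real.exp_sum]
    apply Finset.prod_le_prod (fun _ _ => norm_nonneg _)
    intro l _
    rw [norm_pow, mul_comm, Real.exp_nat_mul]
    gcongr
    have h1 : ‖(x : Pt n) l‖ ≤ ‖(x : Pt n)‖ := PiLp.norm_apply_le _ _
    have h2 := hR x x.2
    have h3 := Real.add_one_le_exp k
    linarith

lemma zah {n : ℕ} (H : Set (Pt n)) (Q : H → ℝ) (k : ℝ) (hk : 0 ≤ k) (hkQ : ∀ x : H, |Q x| ≤ k)
    (hkx : ∀ (x : H) (α : Fin n → ℕ), ‖∏ l, (x : Pt n) l ^ α l‖ ≤ Real.exp (k * ∑ l, (α l : ℝ)))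
    {d0 d m : ℕ} (hm : 1 ≤ m) (hd : m * (d0 + n) ≤ d)
    (E0 : Fin (sdim n d0) → (Fin n → ℕ)) (hE0 : IsEnum n d0 E0)
    (E : Fin (sdim n d) → (Fin n → ℕ)) (hE : IsEnum n d E)
    (p : (Fin n → ℕ) → MvPolynomial (Fin n) ℂ) (M : (Fin n → ℕ) → ℝ)
    (hp : ∀ α, ∑ i, α i ≤ d0 → MonicAt α (p α)) (hM0 : ∀ α, 0 < M α)
    (hM : ∀ α, ∑ i, α i ≤ d0 → ∀ x : H, ‖pe (p α) x‖ * Real.exp (-(d0 : ℝ) * Q x) ≤ M α)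
    (a : Fin (sdim n d) → H) :
    ‖VDM n d E (fun j => (a j : Pt n))‖ * ∏ j, Real.exp (-(d : ℝ) * Q (a j)) ≤
      (sdim n d).factorial * Real.exp ((m : ℝ) ^ (n + 1) * ∑ j, Real.log (M (E0 j)) +
        2 * k * (d * sdim n d - (m : ℝ) ^ (n + 1) * (d0 * sdim n d0))) := by
  classical
  set P : (Fin n → ℕ) → MvPolynomial (Fin n) ℂ := fun α =>
    if ∑ l, α l / m ≤ d0 then p (fun l => α l / m) ^ m * MvPolynomial.monomial (mi (fun l => α l % m)) 1
    else MvPolynomial.monomial (mi α) 1 with hP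
  set h : (Fin n → ℕ) → ℝ := fun β => m * Real.log (M β) - 2 * k * (m * d0) with hh
  set g : (Fin n → ℕ) → ℝ := fun α => 2 * k * d + (if ∑ l, α l / m ≤ d0 then h (fun l => α l / m) else 0) with hg
  have hPm : ∀ α, ∑ i, α i ≤ d → MonicAt α (P α) := by
    intro α _
    rw [hP]
    dsimp only
    split_ifs with hα
    · have := ((hp _ hα).pow m).mul (monicAt_monomial (fun l => α l % m))
      convert this using 1
      ext l
      simp [Nat.div_add_mod]
    · exact monicAt_monomial α
  have hPM : ∀ α, ∑ i, α i ≤ d → ∀ x : H, ‖pe (P α) x‖ * Real.exp (-(d : ℝ) * Q x) ≤ Real.exp (g α) := by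
    intro α hαd x
    have hQx := abs_le.1 (hkQ x)
    have hd0 : (0 : ℝ) ≤ d := by positivity
    rw [hP, hg]
    dsimp only
    split_ifs with hα
    · have e1 : pe (p (fun l => α l / m) ^ m * MvPolynomial.monomial (mi (fun l => α l % m)) 1) x
          = pe (p (fun l => α l / m)) x ^ m * ∏ l, (x : Pt n) l ^ (α l % m) := by
        have := pe_monomial (fun l => α l % m) 1 (x : Pt n)
        rw [one_mul] at this
        rw [← this]
        simp only [pe, map_mul, map_pow]
      rw [e1, norm_mul, norm_pow]
      have h1 := hM _ hα x
      have h2 := hkx x (fun l => α l % m)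
      have hdr : (m : ℝ) * (d0 + n) ≤ d := by exact_mod_cast hd
      have h3 : ∑ l, ((α l % m : ℕ) : ℝ) ≤ d - m * d0 := by
        have : ∑ l, ((α l % m : ℕ) : ℝ) ≤ ∑ l : Fin n, (m : ℝ) :=
          Finset.sum_le_sum fun l _ => by exact_mod_cast (Nat.mod_lt _ (by omega)).le
        simp at this
        push_cast at *
        linarith
      have h4 : Real.exp (-(d : ℝ) * Q x) = Real.exp (-(d0 : ℝ) * Q x) ^ m * Real.exp (-((d : ℝ) - m * d0) * Q x) := by
        rw [← Real.exp_nat_mul, ← Real.exp_add]; ring_nf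
      have h5 : Real.exp (-((d : ℝ) - m * d0) * Q x) ≤ Real.exp (k * (d - m * d0)) := by
        apply Real.exp_le_exp.2
        have : (0 : ℝ) ≤ d - m * d0 := by
          have : (0 : ℝ) ≤ m * n := by positivity
          linarith
        nlinarith
      have h6 : Real.exp (k * ∑ l, ((α l % m : ℕ) : ℝ)) ≤ Real.exp (k * (d - m * d0)) :=
        Real.exp_le_exp.2 (mul_le_mul_of_nonneg_left h3 hk)
      calc _ = (‖pe (p (fun l => α l / m)) x‖ * Real.exp (-(d0 : ℝ) * Q x)) ^ m * ‖∏ l, (x : Pt n) l ^ (α l % m)‖ *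
              Real.exp (-((d : ℝ) - m * d0) * Q x) := by rw [h4]; ring
        _ ≤ M (fun l => α l / m) ^ m * Real.exp (k * (d - m * d0)) * Real.exp (k * (d - m * d0)) := by
            have := h2.trans h6
            have hMl := (hM0 (fun l => α l / m)).le
            gcongr
        _ = _ := by
            rw [hh]
            dsimp only
            have : M (fun l => α l / m) ^ m = Real.exp (m * Real.log (M (fun l => α l / m))) := by
              rw [Real.exp_nat_mul, Real.exp_log (hM0 _)]
            rw [this, ← Real.exp_add, ← Real.exp_add]
            ring_nf
    · rw [pe_monomial, one_mul]
      have h2 := hkx x α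
      have h3 : ∑ l, (α l : ℝ) ≤ d := by exact_mod_cast hαd
      calc _ ≤ Real.exp (k * ∑ l, (α l : ℝ)) * Real.exp (-(d : ℝ) * Q x) := by gcongr
        _ ≤ _ := by
          rw [← Real.exp_add]
          apply Real.exp_le_exp.2
          nlinarith
  have := vdm_bound E hE H Q P hPm (fun α => Real.exp (g α)) hPM a
  refine this.trans (le_of_eq ?_)
  congr 1
  rw [← Real.exp_sum]
  congr 1
  rw [hg, Finset.sum_add_distrib, count_div hm hd E0 hE0 E hE h, hh, Finset.sum_sub_distrib]
  have hs : ∑ j, (m : ℝ) * Real.log (M (E0 j)) = m * ∑ j, Real.log (M (E0 j)) := (Finset.mul_sum ..).symm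
  rw [hs]
  simp
  ring

lemma sdim_upper (n d : ℕ) : (sdim n d : ℝ) ≤ ((d : ℝ) + n) ^ n / n.factorial := by
  have := Nat.choose_le_pow_div (α := ℝ) n (d + n)
  push_cast at this
  exact this

lemma sdim_lower (n d : ℕ) : (d : ℝ) ^ n / n.factorial ≤ sdim n d := by
  have := Nat.pow_le_choose (α := ℝ) n (d + n)
  refine le_trans ?_ this
  have h : d + n + 1 - n = d + 1 := by omega
  rw [h]
  push_cast
  gcongr
  linarith

lemma sdim_le_exp (n : ℕ) {ε : ℝ} (hε : 0 < ε) : ∀ᶠ d : ℕ in atTop, (sdim n d : ℝ) ≤ Real.exp (ε * d) := by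
  have h := (isLittleO_pow_exp_pos_mul_atTop n hε).bound (c := Real.exp (-(ε * n))) (Real.exp_pos _)
  have h2 : Tendsto (fun d : ℕ => (d : ℝ) + n) atTop atTop :=
    tendsto_atTop_add_const_right _ _ tendsto_natCast_atTop_atTop
  filter_upwards [h2.eventually h] with d hd
  rw [Real.norm_of_nonneg (by positivity), Real.norm_of_nonneg (Real.exp_pos _).le, ← Real.exp_add] at hd
  refine (sdim_upper n d).trans ((div_le_self (by positivity) ?_).trans (hd.trans (le_of_eq ?_)))
  · exact_mod_cast Nat.one_le_iff_ne_zero.2 (Nat.factorial_ne_zero n)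
  · congr 1; ring

lemma logfact_le (n : ℕ) {ε : ℝ} (hε : 0 < ε) :
    ∀ᶠ d : ℕ in atTop, ((sdim n d).factorial : ℝ) ≤ Real.exp (ε * (d * sdim n d)) := by
  filter_upwards [sdim_le_exp n hε] with d hd
  have h1 : ((sdim n d).factorial : ℝ) ≤ (sdim n d : ℝ) ^ (sdim n d) := by
    exact_mod_cast Nat.factorial_le_pow _
  refine h1.trans ((pow_le_pow_left₀ (by positivity) hd _).trans (le_of_eq ?_))
  rw [← Real.exp_nat_mul]
  congr 1; ring

lemma A_bound (n : ℕ) {δ : ℝ} (hδ : 0 < δ) : ∀ᶠ d0 : ℕ in atTop, ∀ᶠ d : ℕ in atTop,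
    1 ≤ d / (d0 + n) ∧
    (1 - δ) * (d * sdim n d) ≤ ((d / (d0 + n) : ℕ) : ℝ) ^ (n + 1) * (d0 * sdim n d0) := by
  have hlim : ∀ c : ℝ, Tendsto (fun d : ℕ => ((d : ℝ)) / ((d : ℝ) + c)) atTop (𝓝 1) :=
    fun c => tendsto_natCast_div_add_atTop c
  have h1 : Tendsto (fun d : ℕ => (((d : ℝ)) / ((d : ℝ) + n)) ^ (n + 1)) atTop (𝓝 1) := by
    simpa using (hlim n).pow (n + 1)
  filter_upwards [h1.eventually (lt_mem_nhds (show 1 - δ < 1 by linarith)), eventually_ge_atTop 1] with d0 hd0 hd01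
  have h2 : Tendsto (fun d : ℕ => ((d0 : ℝ) / (d0 + n) * ((d : ℝ) / (d + n) - (d0 + n) / ((d : ℝ) + n))) ^ (n + 1)) atTop
      (𝓝 (((d0 : ℝ) / (d0 + n) * (1 - 0)) ^ (n + 1))) := by
    refine (((hlim n).sub ?_).const_mul _).pow _
    apply Tendsto.div_atTop tendsto_const_nhds
    exact tendsto_atTop_add_const_right _ _ tendsto_natCast_atTop_atTop
  rw [sub_zero, mul_one] at h2
  filter_upwards [h2.eventually (lt_mem_nhds hd0), eventually_ge_atTop (d0 + n)] with d hd hdn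
  have hpos : 0 < d0 + n := by omega
  set m := d / (d0 + n) with hm
  have hm1 : 1 ≤ m := (Nat.one_le_div_iff hpos).2 hdn
  refine ⟨hm1, ?_⟩
  have hd0' : (0 : ℝ) < d0 := by exact_mod_cast hd01
  have hd' : (0 : ℝ) < d := by exact_mod_cast (by omega : 0 < d)
  have hmd : (d : ℝ) - (d0 + n) ≤ m * (d0 + n) := by
    have := Nat.lt_div_mul_add (a := d) hpos
    rw [← hm] at this
    have : (d : ℝ) < m * (d0 + n) + (d0 + n) := by exact_mod_cast this
    linarith
  have hdn' : (0 : ℝ) ≤ (d : ℝ) - (d0 + n) := by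
    have : ((d0 + n : ℕ) : ℝ) ≤ d := by exact_mod_cast hdn
    push_cast at this
    linarith
  have e : (d0 : ℝ) / (d0 + n) * ((d : ℝ) / (d + n) - (d0 + n) / ((d : ℝ) + n)) ≤ m * d0 / (d + n) := by
    rw [← sub_div, div_mul_div_comm, div_le_div_iff₀ (by positivity) (by positivity)]
    have : (d0 : ℝ) * (d - (d0 + n)) ≤ d0 * (m * (d0 + n)) := by gcongr
    have := mul_le_mul_of_nonneg_right this (show (0 : ℝ) ≤ d + n by positivity)
    linarith
  have e2 : (1 - δ) ≤ (m * d0 / (d + n)) ^ (n + 1) := by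
    refine hd.le.trans (pow_le_pow_left₀ ?_ e _)
    rw [← sub_div]
    positivity
  have u := sdim_upper n d
  have l := sdim_lower n d0
  calc (1 - δ) * (d * sdim n d) ≤ (m * d0 / (d + n)) ^ (n + 1) * (d * sdim n d) := by gcongr
    _ ≤ (m * d0 / (d + n)) ^ (n + 1) * ((d + n) * (((d : ℝ) + n) ^ n / n.factorial)) := by
        gcongr
        linarith [(Nat.cast_nonneg n : (0 : ℝ) ≤ n)]
    _ = m ^ (n + 1) * (d0 * ((d0 : ℝ) ^ n / n.factorial)) := by
        rw [div_pow, mul_pow]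
        have : ((d : ℝ) + n) ≠ 0 := by positivity
        field_simp
        ring
    _ ≤ _ := by gcongr

lemma freq_of_lt {n : ℕ} (E : ∀ d, Fin (sdim n d) → (Fin n → ℕ)) (H : Set (Pt n)) (Q : H → ℝ) (c : ℝ)
    (h : ENNReal.ofReal (Real.exp c) < deltaBar n E H Q) :
    ∃ᶠ d : ℕ in atTop, ∃ a : Fin (sdim n d) → H, Real.exp (c * (d * sdim n d)) <
      ‖VDM n d (E d) (fun j => (a j : Pt n))‖ * ∏ j, Real.exp (-(d : ℝ) * Q (a j)) := by
  have h1 := (frequently_lt_of_lt_limsup (by isBoundedDefault) h).and_eventually (eventually_ge_atTop 1)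
  refine h1.mono ?_
  rintro d ⟨hd, hd1⟩
  have hs := sdim_pos n d
  have hpos : (0 : ℝ) < d * sdim n d := by
    have : (0 : ℝ) < d := by exact_mod_cast hd1
    have : (0 : ℝ) < sdim n d := by exact_mod_cast hs
    positivity
  rw [one_div, ENNReal.lt_rpow_inv_iff hpos, ENNReal.ofReal_rpow_of_pos (Real.exp_pos _), lt_iSup_iff] at hd
  obtain ⟨a, ha⟩ := hd
  refine ⟨a, ?_⟩
  rw [absVDMQ, ENNReal.ofReal_lt_ofReal_iff_of_nonneg (by positivity), ← Real.exp_mul] at ha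
  exact ha

lemma ZZ_pos {n : ℕ} (H : Set (Pt n)) (hc : IsCompact H) (hconv : Convex ℝ H) (hinter : (interior H).Nonempty)
    (ν : Measure H) [IsFiniteMeasure ν] (hdens : DensityCond H ν) (Q : H → ℝ) (hQ : Continuous Q)
    (d : ℕ) (E : Fin (sdim n d) → (Fin n → ℕ)) (hE : IsEnum n d E) : 0 < ZZ d E H ν Q := by
  have : CompactSpace H := isCompact_iff_compactSpace.1 hc
  exact Zr_pos ν (eH E H) (eH_cont E H) _ (rho_cont d H Q hQ) (gram_posDef H hc hconv hinter ν hdens Q hQ d E hE)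

lemma bz {n : ℕ} (E : ∀ d, Fin (sdim n d) → (Fin n → ℕ)) (hE : ∀ d, IsEnum n d (E d))
    (H : Set (Pt n)) (hc : IsCompact H) (hconv : Convex ℝ H) (hinter : (interior H).Nonempty)
    (ν : Measure H) [IsFiniteMeasure ν] (hdens : DensityCond H ν) (Q : H → ℝ) (hQ : Continuous Q) (c : ℝ)
    (h : ENNReal.ofReal (Real.exp c) < deltaBar n E H Q) (ε : ℝ) (hε : 0 < ε) :
    ∀ᶠ d : ℕ in atTop, (c - 3 * ε) * (2 * (d * sdim n d)) ≤ Real.log (ZZ d (E d) H ν Q) := by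
  obtain ⟨k, hk, hck, hkQ, hkx⟩ := exists_K H hc Q hQ c
  obtain ⟨C, hC, hmin⟩ := monic_min H hc hconv hinter ν hdens Q hQ ε hε
  have hD : 0 < 2 * k - c + 2 * ε := by linarith
  set D := 2 * k - c + 2 * ε with hDdef
  have hCl : ∀ᶠ d : ℕ in atTop, Real.log C ≤ ε * d := by
    have := (tendsto_natCast_atTop_atTop (R := ℝ)).const_mul_atTop hε
    exact this.eventually_ge_atTop _
  filter_upwards [A_bound n (div_pos hε hD), hCl, eventually_ge_atTop 1] with d0 hA hCd hd0
  obtain ⟨p, M, hp, hM0, hM, hprod⟩ := hmin d0 (E d0) (hE d0)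
  obtain ⟨d, ⟨a, ha⟩, ⟨hm1, hAd⟩, hfact, hd1⟩ :=
    ((freq_of_lt E H Q c h).and_eventually (hA.and ((logfact_le n hε).and (eventually_ge_atTop 1)))).exists
  set m := d / (d0 + n) with hmdef
  have hz := zah H Q k hk hkQ hkx hm1 (Nat.div_mul_le_self d (d0 + n)) (E d0) (hE d0) (E d) (hE d) p M hp hM0 hM a
  have hZ := ZZ_pos H hc hconv hinter ν hdens Q hQ d0 (E d0) (hE d0)
  set L := ∑ j, Real.log (M (E d0 j)) with hL
  have hs0 : (0 : ℝ) < sdim n d0 := by exact_mod_cast sdim_pos n d0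
  have hs : (0 : ℝ) < sdim n d := by exact_mod_cast sdim_pos n d
  have hd0' : (0 : ℝ) < d0 := by exact_mod_cast hd0
  have hd' : (0 : ℝ) < d := by exact_mod_cast hd1
  have hL2 : 2 * L ≤ sdim n d0 * (Real.log C + ε * d0) + Real.log (ZZ d0 (E d0) H ν Q) := by
    have h1 := Real.log_le_log (Finset.prod_pos fun i _ => pow_pos (hM0 (E d0 i)) 2) hprod
    rw [Real.log_prod (fun i _ => (pow_pos (hM0 (E d0 i)) 2).ne'), Real.log_mul (by positivity) hZ.ne',
      Real.log_pow, Real.log_mul hC.ne' (Real.exp_pos _).ne', Real.log_exp] at h1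
    simp only [Real.log_pow] at h1
    rw [← Finset.mul_sum] at h1
    exact_mod_cast h1
  by_contra hcon
  push Not at hcon
  set N := (d : ℝ) * sdim n d with hN
  set N0 := (d0 : ℝ) * sdim n d0 with hN0
  have hN0p : 0 < N0 := by positivity
  have hNp : 0 < N := by positivity
  set u := (m : ℝ) ^ (n + 1) with hu
  have hu0 : 0 ≤ u := by positivity
  have h3 : c * N < ε * N + (u * L + 2 * k * (N - u * N0)) := by
    have : Real.exp (c * N) < Real.exp (ε * N) * Real.exp (u * L + 2 * k * (N - u * N0)) :=
      ha.trans_le (hz.trans (by gcongr))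
    rw [← Real.exp_add] at this
    exact Real.exp_lt_exp.1 this
  have h4 : L ≤ N0 * (c - 2 * ε) := by
    have : sdim n d0 * (Real.log C + ε * d0) ≤ 2 * ε * N0 := by
      rw [hN0]
      have := mul_le_mul_of_nonneg_left hCd hs0.le
      linarith
    linarith
  have h5 := mul_le_mul_of_nonneg_left h4 hu0
  have h6 : ε * N < D * (N - u * N0) := by
    rw [hDdef]; linarith
  have h7 : N - u * N0 ≤ ε / D * N := by linarith
  have h8 := mul_le_mul_of_nonneg_left h7 hD.le
  have h9 : D * (ε / D * N) = ε * N := by field_simp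
  linarith

lemma ZZ_le {n : ℕ} (H : Set (Pt n)) (hc : IsCompact H)
    (ν : Measure H) (hν : ν Set.univ ≤ 1) (Q : H → ℝ) (hQ : Continuous Q) :
    ∃ K : ℝ, ∀ d (E : Fin (sdim n d) → (Fin n → ℕ)), IsEnum n d E →
      ZZ d E H ν Q ≤ ((sdim n d).factorial * Real.exp (K * (d * sdim n d))) ^ 2 := by
  have : CompactSpace H := isCompact_iff_compactSpace.1 hc
  have : IsFiniteMeasure ν := ⟨hν.trans_lt ENNReal.one_lt_top⟩
  obtain ⟨k, hk, -, hkQ, hkx⟩ := exists_K H hc Q hQ 0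
  refine ⟨2 * k, fun d E hE => ?_⟩
  rw [ZZ_eq]
  have hb : ∀ a : Fin (sdim n d) → H, ‖VDM n d E (fun j => (a j : Pt n))‖ * ∏ j, Real.exp (-(d : ℝ) * Q (a j)) ≤
      (sdim n d).factorial * Real.exp (2 * k * (d * sdim n d)) := by
    intro a
    have := vdm_bound E hE H Q (fun α => MvPolynomial.monomial (mi α) 1) (fun α _ => monicAt_monomial α)
      (fun α => Real.exp (2 * k * d)) (fun α hα x => by
        rw [pe_monomial, one_mul]
        have h2 := hkx x α
        have h3 : ∑ l, (α l : ℝ) ≤ d := by exact_mod_cast hα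
        have hQx := abs_le.1 (hkQ x)
        have hd0 : (0 : ℝ) ≤ d := by positivity
        calc _ ≤ Real.exp (k * ∑ l, (α l : ℝ)) * Real.exp (-(d : ℝ) * Q x) := by gcongr
          _ ≤ _ := by
            rw [← Real.exp_add]
            apply Real.exp_le_exp.2
            nlinarith) a
    refine this.trans (le_of_eq ?_)
    rw [Finset.prod_const, ← Real.exp_nat_mul]
    rw [Finset.card_univ, Fintype.card_fin]
    ring_nf
  set B := (sdim n d).factorial * Real.exp (2 * k * (d * sdim n d))
  have hB : 0 ≤ B := by positivity
  have h1 : (Measure.pi fun _ : Fin (sdim n d) => ν).real Set.univ ≤ 1 := by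
    rw [Measure.real, Measure.pi_univ]
    apply ENNReal.toReal_le_of_le_ofReal zero_le_one
    rw [ENNReal.ofReal_one]
    exact Finset.prod_le_one (fun _ _ => zero_le) (fun _ _ => hν)
  calc _ ≤ ∫ a, B ^ 2 ∂(Measure.pi fun _ : Fin (sdim n d) => ν) := by
        apply integral_mono_of_nonneg
        · exact Eventually.of_forall fun a => by dsimp only; positivity
        · exact integrable_const _
        · exact Eventually.of_forall fun a => pow_le_pow_left₀ (by positivity) (hb a) 2
    _ ≤ B ^ 2 := by
        rw [integral_const, smul_eq_mul]
        nlinarith [sq_nonneg B]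

/-- The real number `|VDM_d^Q(a)|`. -/
def VV {n : ℕ} (d : ℕ) (E : Fin (sdim n d) → (Fin n → ℕ)) (H : Set (Pt n)) (Q : H → ℝ)
    (a : Fin (sdim n d) → H) : ℝ :=
  ‖VDM n d E (fun j => (a j : Pt n))‖ * ∏ j, Real.exp (-(d : ℝ) * Q (a j))

lemma VV_nonneg {n : ℕ} (d : ℕ) (E : Fin (sdim n d) → (Fin n → ℕ)) (H : Set (Pt n)) (Q : H → ℝ)
    (a : Fin (sdim n d) → H) : 0 ≤ VV d E H Q a := by unfold VV; positivity

lemma VV_cont {n : ℕ} (d : ℕ) (E : Fin (sdim n d) → (Fin n → ℕ)) (H : Set (Pt n)) (Q : H → ℝ)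
    (hQ : Continuous Q) : Continuous (VV d E H Q) := by
  unfold VV VDM
  refine Continuous.mul (Continuous.norm (Continuous.matrix_det ?_)) (by fun_prop)
  refine continuous_matrix fun i j => ?_
  simp only [Matrix.of_apply]
  fun_prop

lemma VV_change {n : ℕ} (d : ℕ) (E : Fin (sdim n d) → (Fin n → ℕ)) (H : Set (Pt n)) (Q Q' : H → ℝ)
    (a : Fin (sdim n d) → H) :
    VV d E H Q' a = VV d E H Q a * Real.exp (d * ∑ j, (Q (a j) - Q' (a j))) := by
  unfold VV
  rw [mul_assoc, ← Real.exp_sum, ← Real.exp_sum, ← Real.exp_add, Finset.mul_sum, ← Finset.sum_add_distrib]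
  congr 2
  apply Finset.sum_congr rfl
  intro j _
  ring

lemma VV_change_sq {n : ℕ} (d : ℕ) (E : Fin (sdim n d) → (Fin n → ℕ)) (H : Set (Pt n)) (Q Q' : H → ℝ)
    (a : Fin (sdim n d) → H) :
    VV d E H Q' a ^ 2 = VV d E H Q a ^ 2 * Real.exp (2 * d * ∑ j, (Q (a j) - Q' (a j))) := by
  rw [VV_change d E H Q Q' a, mul_pow, ← Real.exp_nat_mul]
  congr 2
  push_cast
  ring

lemma ZZ_VV {n : ℕ} (d : ℕ) (E : Fin (sdim n d) → (Fin n → ℕ)) (H : Set (Pt n)) (ν : Measure H) (Q : H → ℝ) :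
    ZZ d E H ν Q = ∫ a, VV d E H Q a ^ 2 ∂(Measure.pi fun _ => ν) := ZZ_eq d E H ν Q

lemma pi_int {n s : ℕ} (H : Set (Pt n)) (hc : IsCompact H) (ν : Measure H) [IsFiniteMeasure ν]
    {f : (Fin s → H) → ℝ} (hf : Continuous f) : Integrable f (Measure.pi fun _ => ν) := by
  have : CompactSpace H := isCompact_iff_compactSpace.1 hc
  exact cint _ hf

lemma ZZ_lip {n : ℕ} (d : ℕ) (E : Fin (sdim n d) → (Fin n → ℕ)) (H : Set (Pt n)) (hc : IsCompact H) (ν : Measure H)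
    [IsFiniteMeasure ν] (Q Q' : H → ℝ) (hQ : Continuous Q) (hQ' : Continuous Q') (η : ℝ) (h : ∀ x, Q x - Q' x ≤ η) :
    ZZ d E H ν Q' ≤ ZZ d E H ν Q * Real.exp (2 * (d * sdim n d) * η) := by
  rw [ZZ_VV, ZZ_VV, ← integral_mul_const]
  apply integral_mono (pi_int H hc ν ((VV_cont d E H Q' hQ').pow 2))
    (pi_int H hc ν (((VV_cont d E H Q hQ).pow 2).mul continuous_const))
  intro a
  show VV d E H Q' a ^ 2 ≤ VV d E H Q a ^ 2 * Real.exp (2 * (d * sdim n d) * η)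
  rw [VV_change_sq d E H Q Q' a]
  apply mul_le_mul_of_nonneg_left _ (sq_nonneg _)
  apply Real.exp_le_exp.2
  have : ∑ j, (Q (a j) - Q' (a j)) ≤ ∑ j : Fin (sdim n d), η := Finset.sum_le_sum fun j _ => h _
  rw [Finset.sum_const, Finset.card_univ, Fintype.card_fin, nsmul_eq_mul] at this
  calc _ ≤ 2 * (d : ℝ) * (sdim n d * η) := by gcongr
    _ = _ := by ring

lemma exp_sub_one_le {v : ℝ} (hv : |v| ≤ 1) : Real.exp v - 1 ≤ v + v ^ 2 := by
  have := Real.abs_exp_sub_one_sub_id_le hv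
  have := (abs_le.1 this).2
  linarith

/-- Exponential moment bound. -/
lemma tilt {n : ℕ} (d : ℕ) (E : Fin (sdim n d) → (Fin n → ℕ)) (hE : IsEnum n d E) (H : Set (Pt n))
    (hc : IsCompact H) (hconv : Convex ℝ H) (hinter : (interior H).Nonempty) (ν : Measure H)
    [IsFiniteMeasure ν] (hdens : DensityCond H ν) (Q : H → ℝ) (hQ : Continuous Q) :
    ∃ b : (H → ℝ) → ℝ, ∀ (f : H → ℝ) (K θ : ℝ), Continuous f → (∀ x, |f x| ≤ K) → |θ| * K ≤ 1 →
      ∫ a, VV d E H Q a ^ 2 * Real.exp (θ * ∑ j, f (a j)) ∂(Measure.pi fun _ => ν) ≤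
        ZZ d E H ν Q * Real.exp (sdim n d * (θ * b f + θ ^ 2 * K ^ 2)) := by
  have : CompactSpace H := isCompact_iff_compactSpace.1 hc
  obtain ⟨B, hB, hB0, hBs, hBv⟩ := tilt_gen ν (eH E H) (eH_cont E H) (rho d H Q) (rho_cont d H Q hQ)
    (fun x => by unfold rho; positivity) (gram_posDef H hc hconv hinter ν hdens Q hQ d E hE)
  have hs : (0 : ℝ) < sdim n d := by exact_mod_cast sdim_pos n d
  refine ⟨fun f => (∫ x, f x * B x ∂ν) / sdim n d, fun f K θ hf hfK hθ => ?_⟩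
  have h1 := hBv (fun x => θ * f x) (by fun_prop)
  have h2 : (Zr ν (eH E H) fun x => rho d H Q x * Real.exp (θ * f x)) =
      ∫ a, VV d E H Q a ^ 2 * Real.exp (θ * ∑ j, f (a j)) ∂(Measure.pi fun _ => ν) := by
    unfold Zr
    congr 1
    ext a
    rw [Finset.prod_mul_distrib, ← mul_assoc, ← Real.exp_sum, ← Finset.mul_sum]
    congr 1
    unfold VV
    rw [mul_pow, ← Finset.prod_pow]
    rfl
  rw [← h2]
  refine h1.trans (mul_le_mul_of_nonneg_left (Real.exp_le_exp.2 ?_) ?_)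
  · calc ∫ x, (Real.exp (θ * f x) - 1) * B x ∂ν ≤ ∫ x, (θ * (f x * B x) + θ ^ 2 * K ^ 2 * B x) ∂ν := by
          apply integral_mono (cint ν (by fun_prop)) (cint ν (by fun_prop))
          intro x
          dsimp only
          have hv : |θ * f x| ≤ 1 := by
            rw [abs_mul]
            exact (mul_le_mul_of_nonneg_left (hfK x) (abs_nonneg _)).trans hθ
          have h3 := exp_sub_one_le hv
          have h4 : f x ^ 2 ≤ K ^ 2 := sq_le_sq' (by linarith [(abs_le.1 (hfK x)).1]) (abs_le.1 (hfK x)).2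
          have h5 : (θ * f x) ^ 2 ≤ θ ^ 2 * K ^ 2 := by
            rw [mul_pow]; exact mul_le_mul_of_nonneg_left h4 (sq_nonneg _)
          have h6 := mul_le_mul_of_nonneg_right (h3.trans (add_le_add_right h5 _)) (hB0 x)
          linarith
      _ = θ * ∫ x, f x * B x ∂ν + θ ^ 2 * K ^ 2 * sdim n d := by
          rw [integral_add (cint ν (by fun_prop)) (cint ν (by fun_prop)), integral_const_mul, integral_const_mul, hBs]
      _ = _ := by field_simp
  · have := ZZ_pos H hc hconv hinter ν hdens Q hQ d E hE
    exact this.le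

/-- Concentration. -/
lemma conc {n : ℕ} (d : ℕ) (E : Fin (sdim n d) → (Fin n → ℕ)) (hE : IsEnum n d E) (H : Set (Pt n))
    (hc : IsCompact H) (hconv : Convex ℝ H) (hinter : (interior H).Nonempty) (ν : Measure H)
    [IsFiniteMeasure ν] (hdens : DensityCond H ν) (Q : H → ℝ) (hQ : Continuous Q)
    {ι : Type*} [Fintype ι] (f : ι → H → ℝ) (hf : ∀ i, Continuous (f i)) (K : ℝ) (hK : 1 ≤ K)
    (hfK : ∀ i x, |f i x| ≤ K) (ε : ℝ) (hε : 0 < ε) (hε1 : ε ≤ 1)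
    (b : (H → ℝ) → ℝ) (hb : ∀ (f : H → ℝ) (K θ : ℝ), Continuous f → (∀ x, |f x| ≤ K) → |θ| * K ≤ 1 →
      ∫ a, VV d E H Q a ^ 2 * Real.exp (θ * ∑ j, f (a j)) ∂(Measure.pi fun _ => ν) ≤
        ZZ d E H ν Q * Real.exp (sdim n d * (θ * b f + θ ^ 2 * K ^ 2)))
    (hlarge : 4 * (Fintype.card ι : ℝ) * Real.exp (-(sdim n d * (ε ^ 2 / (4 * K ^ 2)))) ≤ 1) :
    ZZ d E H ν Q / 2 ≤ ∫ a in {a | ∀ i, |∑ j, f i (a j) - sdim n d * b (f i)| ≤ sdim n d * ε}, VV d E H Q a ^ 2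
      ∂(Measure.pi fun _ => ν) := by
  set s : ℝ := ((sdim n d : ℕ) : ℝ) with hs
  set U : Set (Fin (sdim n d) → H) := {a | ∀ i, |∑ j, f i (a j) - s * b (f i)| ≤ s * ε} with hU
  have hUc : IsClosed U := by
    rw [hU, Set.ofPred_forall]
    refine isClosed_iInter fun i => isClosed_le ?_ continuous_const
    have := hf i
    fun_prop
  set θ := ε / (2 * K ^ 2) with hθ
  have hK0 : 0 < K := by linarith
  have hθ0 : 0 < θ := by positivity
  have hθK : θ * K ≤ 1 := by
    rw [hθ, div_mul_eq_mul_div, div_le_one (by positivity)]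
    nlinarith
  set Z := ZZ d E H ν Q with hZ
  have hZ0 : 0 < Z := ZZ_pos H hc hconv hinter ν hdens Q hQ d E hE
  set r := Real.exp (-(s * (ε ^ 2 / (4 * K ^ 2)))) with hr
  -- one-sided terms
  have key : ∀ i (σ : ℝ), |σ| = 1 →
      ∫ a, VV d E H Q a ^ 2 * Real.exp (σ * θ * ∑ j, f i (a j) - θ * (σ * (s * b (f i)) + s * ε))
        ∂(Measure.pi fun _ => ν) ≤ Z * r := by
    intro i σ hσ
    have h1 := hb (f i) K (σ * θ) (hf i) (hfK i) (by rw [abs_mul, hσ, abs_of_pos hθ0, one_mul]; exact hθK)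
    have hσ2 : σ ^ 2 = 1 := by rw [← sq_abs, hσ]; norm_num
    calc _ = Real.exp (-(θ * (σ * (s * b (f i)) + s * ε))) *
          ∫ a, VV d E H Q a ^ 2 * Real.exp (σ * θ * ∑ j, f i (a j)) ∂(Measure.pi fun _ => ν) := by
            rw [← integral_const_mul]
            congr 1
            ext a
            rw [sub_eq_add_neg, Real.exp_add]
            ring
      _ ≤ Real.exp (-(θ * (σ * (s * b (f i)) + s * ε))) * (Z * Real.exp (s * (σ * θ * b (f i) + (σ * θ) ^ 2 * K ^ 2))) :=
            mul_le_mul_of_nonneg_left h1 (Real.exp_pos _).le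
      _ = Z * r := by
            rw [mul_left_comm, ← Real.exp_add, hr]
            congr 2
            rw [mul_pow, hσ2, hθ]
            field_simp
            ring
  have hcont : ∀ i (σ : ℝ), Continuous fun a : Fin (sdim n d) → H =>
      VV d E H Q a ^ 2 * Real.exp (σ * θ * ∑ j, f i (a j) - θ * (σ * (s * b (f i)) + s * ε)) := by
    intro i σ
    have := hf i
    have := VV_cont d E H Q hQ
    fun_prop
  have hVc := (VV_cont d E H Q hQ).pow 2
  have hVi := pi_int H hc ν hVc
  set g : (Fin (sdim n d) → H) → ℝ := fun a => ∑ i,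
    (VV d E H Q a ^ 2 * Real.exp (1 * θ * ∑ j, f i (a j) - θ * (1 * (s * b (f i)) + s * ε)) +
     VV d E H Q a ^ 2 * Real.exp (-1 * θ * ∑ j, f i (a j) - θ * (-1 * (s * b (f i)) + s * ε))) with hg
  have hgi : Integrable g (Measure.pi fun _ => ν) := by
    apply integrable_finsetSum
    intro i _
    exact (pi_int H hc ν (hcont i 1)).add (pi_int H hc ν (hcont i (-1)))
  have hgint : ∫ a, g a ∂(Measure.pi fun _ => ν) ≤ Z / 2 := by
    rw [hg, integral_finsetSum]
    · calc _ ≤ ∑ i : ι, (Z * r + Z * r) := by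
            apply Finset.sum_le_sum
            intro i _
            rw [integral_add (pi_int H hc ν (hcont i 1)) (pi_int H hc ν (hcont i (-1)))]
            exact add_le_add (key i 1 (by simp)) (key i (-1) (by simp))
        _ = Z * (4 * (Fintype.card ι : ℝ) * r) / 2 := by
            rw [Finset.sum_const, Finset.card_univ, nsmul_eq_mul]; ring
        _ ≤ Z * 1 / 2 := by gcongr
        _ = Z / 2 := by ring
    · intro i _
      exact (pi_int H hc ν (hcont i 1)).add (pi_int H hc ν (hcont i (-1)))
  have hpt : ∀ a, VV d E H Q a ^ 2 - g a ≤ U.indicator (fun a => VV d E H Q a ^ 2) a := by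
    intro a
    have hg0 : ∀ i, 0 ≤ (VV d E H Q a ^ 2 * Real.exp (1 * θ * ∑ j, f i (a j) - θ * (1 * (s * b (f i)) + s * ε)) +
     VV d E H Q a ^ 2 * Real.exp (-1 * θ * ∑ j, f i (a j) - θ * (-1 * (s * b (f i)) + s * ε))) := fun i => by positivity
    by_cases ha : a ∈ U
    · rw [Set.indicator_of_mem ha]
      have : 0 ≤ g a := Finset.sum_nonneg fun i _ => hg0 i
      linarith
    · rw [Set.indicator_of_notMem ha]
      rw [hU, Set.mem_ofPred_eq] at ha
      push Not at ha
      obtain ⟨i, hi⟩ := ha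
      have h1 := Finset.single_le_sum (fun i _ => hg0 i) (Finset.mem_univ i)
      have h2 : VV d E H Q a ^ 2 ≤ g a := by
        refine le_trans ?_ h1
        have hV0 := sq_nonneg (VV d E H Q a)
        rcases lt_abs.1 hi with h | h
        · have : 1 ≤ Real.exp (1 * θ * ∑ j, f i (a j) - θ * (1 * (s * b (f i)) + s * ε)) := by
            apply Real.one_le_exp
            nlinarith
          nlinarith [mul_nonneg hV0 (Real.exp_pos (-1 * θ * ∑ j, f i (a j) - θ * (-1 * (s * b (f i)) + s * ε))).le]
        · have : 1 ≤ Real.exp (-1 * θ * ∑ j, f i (a j) - θ * (-1 * (s * b (f i)) + s * ε)) := by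
            apply Real.one_le_exp
            nlinarith
          nlinarith [mul_nonneg hV0 (Real.exp_pos (1 * θ * ∑ j, f i (a j) - θ * (1 * (s * b (f i)) + s * ε))).le]
      linarith
  rw [← integral_indicator hUc.measurableSet]
  calc Z / 2 ≤ ∫ a, VV d E H Q a ^ 2 ∂(Measure.pi fun _ => ν) - ∫ a, g a ∂(Measure.pi fun _ => ν) := by
        rw [← ZZ_VV]; linarith
    _ = ∫ a, (VV d E H Q a ^ 2 - g a) ∂(Measure.pi fun _ => ν) := (integral_sub hVi hgi).symm
    _ ≤ _ := integral_mono (hVi.sub hgi) (hVi.indicator hUc.measurableSet) hpt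

lemma emp_int {n s : ℕ} (H : Set (Pt n)) (hs : s ≠ 0) (a : Fin s → H) (f : H → ℝ) :
    ∫ x, f x ∂(empPM hs a : Measure H) = (∑ j, f (a j)) / s := by
  show ∫ x, f x ∂(emp a) = _
  unfold emp
  rw [integral_smul_measure, integral_finsetSum_measure]
  · simp [div_eq_inv_mul]
  · intro j _
    exact integrable_dirac (by simp)

lemma nbhd_basis {X : Type*} [TopologicalSpace X] [MeasurableSpace X] [OpensMeasurableSpace X]
    (μ : ProbabilityMeasure X) (G : Set (ProbabilityMeasure X)) (hG : IsOpen G) (hμ : μ ∈ G) :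
    ∃ (I : Finset (BoundedContinuousFunction X ℝ)) (ε : ℝ), 0 < ε ∧ ∀ σ : ProbabilityMeasure X,
      (∀ f ∈ I, |∫ x, f x ∂(σ : Measure X) - ∫ x, f x ∂(μ : Measure X)| < ε) → σ ∈ G := by
  set F : Filter (ProbabilityMeasure X) := ⨅ f : BoundedContinuousFunction X ℝ,
    comap (fun σ : ProbabilityMeasure X => ∫ x, f x ∂(σ : Measure X)) (𝓝 (∫ x, f x ∂(μ : Measure X))) with hF
  have h1 : Tendsto id F (𝓝 μ) := by
    rw [ProbabilityMeasure.tendsto_iff_forall_integral_tendsto]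
    intro f
    exact tendsto_iff_comap.2 (iInf_le _ f)
  have h2 : G ∈ F := h1 (hG.mem_nhds hμ)
  have hb := HasBasis.iInf' (fun f : BoundedContinuousFunction X ℝ =>
    (Metric.nhds_basis_ball (x := ∫ x, f x ∂(μ : Measure X))).comap
      (fun σ : ProbabilityMeasure X => ∫ x, f x ∂(σ : Measure X)))
  obtain ⟨⟨I, e⟩, ⟨hI, he⟩, hsub⟩ := hb.mem_iff.1 h2
  have : ∃ ε > 0, ∀ f ∈ I, ε ≤ e f := by
    rcases I.eq_empty_or_nonempty with h | h
    · exact ⟨1, one_pos, by simp [h]⟩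
    · obtain ⟨f, hf, hmin⟩ := Set.exists_min_image I e hI h
      exact ⟨e f, he f hf, hmin⟩
  obtain ⟨ε, hε, hle⟩ := this
  refine ⟨hI.toFinset, ε, hε, fun σ hσ => hsub ?_⟩
  simp only [Set.mem_iInter]
  intro f hf
  simp only [Set.mem_preimage, Metric.mem_ball, Real.dist_eq]
  exact (hσ f (hI.mem_toFinset.2 hf)).trans_le (hle f hf)

lemma first_order {x M r : ℝ} (hr : 0 < r) (h : ∀ τ : ℝ, |τ| ≤ r → 0 ≤ τ * x + M * τ ^ 2) : x = 0 := by
  by_contra hx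
  have hx' : 0 < |x| := abs_pos.2 hx
  set u := min (r / |x|) (1 / (2 * (|M| + 1))) with hu
  have hM := abs_nonneg M
  have hu0 : 0 < u := lt_min (by positivity) (by positivity)
  have h1 : u * |x| ≤ r := by
    have := min_le_left (r / |x|) (1 / (2 * (|M| + 1)))
    rw [← hu] at this
    exact (le_div_iff₀ hx').1 this
  have h2 : u * (2 * (|M| + 1)) ≤ 1 := by
    have := min_le_right (r / |x|) (1 / (2 * (|M| + 1)))
    rw [← hu] at this
    exact (le_div_iff₀ (by positivity)).1 this
  have h3 := h (-(u * x)) (by rw [abs_neg, abs_mul, abs_of_pos hu0]; exact h1)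
  have h4 : M * u ≤ 1 / 2 := by nlinarith [le_abs_self M]
  have h5 : 0 < u * x ^ 2 := by positivity
  nlinarith

lemma unif_box {ι : Type*} [Fintype ι] (g : ℕ → (ι → ℝ) → ℝ) (L : ℝ) (hL : 0 ≤ L)
    (hg : ∀ᶠ d in atTop, ∀ t t', g d t ≤ g d t' + L * dist t t') (κ : ℝ)
    (hp : ∀ t, ∀ ε > 0, ∀ᶠ d in atTop, κ - ε ≤ g d t) (S : Set (ι → ℝ)) (hS : IsCompact S) (ε : ℝ) (hε : 0 < ε) :
    ∀ᶠ d in atTop, ∀ t ∈ S, κ - ε ≤ g d t := by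
  set r := ε / (2 * (L + 1)) with hr
  have hr0 : 0 < r := by positivity
  obtain ⟨T, -, hT⟩ := hS.elim_nhds_subcover (fun t => Metric.ball t r) (fun t _ => Metric.ball_mem_nhds t hr0)
  have h1 : ∀ᶠ d in atTop, ∀ t ∈ T, κ - ε / 2 ≤ g d t :=
    (eventually_all_finset T).2 fun t _ => hp t _ (by positivity)
  filter_upwards [h1, hg] with d h1 hg t ht
  obtain ⟨t0, ht0, hd⟩ := Set.mem_iUnion₂.1 (hT ht)
  have h2 := h1 t0 ht0
  have h3 := hg t0 t
  rw [Metric.mem_ball, dist_comm] at hd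
  have h4 : L * dist t0 t ≤ L * r := by gcongr
  have h5 : L * r ≤ ε / 2 := by
    rw [hr, mul_div_assoc', div_le_div_iff₀ (by positivity) (by positivity)]
    nlinarith
  linarith

/-- The perturbed weight. -/
def Qp {X ι : Type*} [Fintype ι] (Q : X → ℝ) (f : ι → X → ℝ) (t : ι → ℝ) (x : X) : ℝ := Q x + ∑ i, t i * f i x

lemma Qp_cont {X ι : Type*} [TopologicalSpace X] [Fintype ι] (Q : X → ℝ) (hQ : Continuous Q) (f : ι → X → ℝ)
    (hf : ∀ i, Continuous (f i)) (t : ι → ℝ) : Continuous (Qp Q f t) := by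
  unfold Qp; fun_prop

lemma Qp_lip {X ι : Type*} [Fintype ι] (Q : X → ℝ) (f : ι → X → ℝ) (K : ℝ) (hfK : ∀ i x, |f i x| ≤ K)
    (t t' : ι → ℝ) (x : X) : Qp Q f t x - Qp Q f t' x ≤ Fintype.card ι * K * dist t t' := by
  unfold Qp
  calc _ = ∑ i, (t i - t' i) * f i x := by
        simp only [sub_mul, Finset.sum_sub_distrib]; ring
    _ ≤ ∑ i : ι, dist t t' * K := by
        apply Finset.sum_le_sum
        intro i _
        calc _ ≤ |t i - t' i| * |f i x| := by rw [← abs_mul]; exact le_abs_self _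
          _ ≤ dist t t' * K := mul_le_mul (dist_le_pi_dist t t' i) (hfK i x) (abs_nonneg _) dist_nonneg
    _ = _ := by rw [Finset.sum_const, Finset.card_univ, nsmul_eq_mul]; ring

/-- The functional to be minimised. -/
def gg {n : ℕ} {ι : Type*} [Fintype ι] (d : ℕ) (E : Fin (sdim n d) → (Fin n → ℕ)) (H : Set (Pt n)) (ν : Measure H)
    (Q : H → ℝ) (f : ι → H → ℝ) (c : ι → ℝ) (t : ι → ℝ) : ℝ :=
  Real.log (ZZ d E H ν (Qp Q f t)) / (2 * (d * sdim n d)) + ∑ i, t i * c i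

lemma gg_lip {n : ℕ} {ι : Type*} [Fintype ι] (d : ℕ) (hd : 1 ≤ d) (E : Fin (sdim n d) → (Fin n → ℕ)) (hE : IsEnum n d E)
    (H : Set (Pt n)) (hc : IsCompact H) (hconv : Convex ℝ H) (hinter : (interior H).Nonempty) (ν : Measure H)
    [IsFiniteMeasure ν] (hdens : DensityCond H ν) (Q : H → ℝ) (hQ : Continuous Q)
    (f : ι → H → ℝ) (hf : ∀ i, Continuous (f i)) (K : ℝ) (hfK : ∀ i x, |f i x| ≤ K)
    (c : ι → ℝ) (hcK : ∀ i, |c i| ≤ K) (t t' : ι → ℝ) :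
    gg d E H ν Q f c t ≤ gg d E H ν Q f c t' + 2 * (Fintype.card ι * K) * dist t t' := by
  have hN : (0 : ℝ) < d * sdim n d := by
    have h1 : (0 : ℝ) < d := by exact_mod_cast hd
    have h2 : (0 : ℝ) < sdim n d := by exact_mod_cast sdim_pos n d
    positivity
  have h1 := ZZ_lip d E H hc ν (Qp Q f t') (Qp Q f t) (Qp_cont Q hQ f hf t') (Qp_cont Q hQ f hf t)
    (Fintype.card ι * K * dist t t') (fun x => by rw [dist_comm]; exact Qp_lip Q f K hfK t' t x)
  have hZ := ZZ_pos H hc hconv hinter ν hdens _ (Qp_cont Q hQ f hf t) d E hE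
  have hZ' := ZZ_pos H hc hconv hinter ν hdens _ (Qp_cont Q hQ f hf t') d E hE
  have h2 := Real.log_le_log hZ h1
  rw [Real.log_mul hZ'.ne' (Real.exp_pos _).ne', Real.log_exp] at h2
  have h3 := Qp_lip (X := Unit) (fun _ => 0) (fun i _ => c i) K (fun i _ => hcK i) t t' ()
  unfold Qp at h3
  unfold gg
  have h4 : Real.log (ZZ d E H ν (Qp Q f t)) / (2 * (d * sdim n d)) ≤
      Real.log (ZZ d E H ν (Qp Q f t')) / (2 * (d * sdim n d)) + Fintype.card ι * K * dist t t' := by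
    rw [div_le_iff₀ (by positivity), add_mul, div_mul_cancel₀ _ (by positivity)]
    linarith
  linarith

lemma vary {n : ℕ} {ι : Type*} [Fintype ι] (d : ℕ) (hd : 1 ≤ d) (E : Fin (sdim n d) → (Fin n → ℕ)) (hE : IsEnum n d E)
    (H : Set (Pt n)) (hc : IsCompact H) (hconv : Convex ℝ H) (hinter : (interior H).Nonempty) (ν : Measure H)
    [IsFiniteMeasure ν] (hdens : DensityCond H ν) (Q : H → ℝ) (hQ : Continuous Q)
    (f : ι → H → ℝ) (hf : ∀ i, Continuous (f i)) (K : ℝ) (hK : 1 ≤ K) (hfK : ∀ i x, |f i x| ≤ K)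
    (c : ι → ℝ) (hcK : ∀ i, |c i| ≤ K) (R η κ C0 : ℝ) (hR : 0 < R) (hη : 0 < η)
    (hbox : ∀ t ∈ Metric.closedBall (0 : ι → ℝ) R, κ ≤ gg d E H ν Q f c t)
    (h0 : gg d E H ν Q f c 0 ≤ C0) (hbig : C0 - κ < η * R ^ 2) :
    ∃ t ∈ Metric.closedBall (0 : ι → ℝ) R, (∀ i, η * t i ^ 2 ≤ C0 - κ) ∧
      ∃ b : (H → ℝ) → ℝ, (∀ (F : H → ℝ) (K' θ : ℝ), Continuous F → (∀ x, |F x| ≤ K') → |θ| * K' ≤ 1 →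
      ∫ a, VV d E H (Qp Q f t) a ^ 2 * Real.exp (θ * ∑ j, F (a j)) ∂(Measure.pi fun _ => ν) ≤
        ZZ d E H ν (Qp Q f t) * Real.exp (sdim n d * (θ * b F + θ ^ 2 * K' ^ 2))) ∧
      ∀ i, b (f i) = c i + 2 * η * t i := by
  classical
  have hd' : (0 : ℝ) < d := by exact_mod_cast hd
  have hs' : (0 : ℝ) < sdim n d := by exact_mod_cast sdim_pos n d
  have hK0 : 0 < K := by linarith
  set φ : (ι → ℝ) → ℝ := fun t => gg d E H ν Q f c t + η * ∑ i, t i ^ 2 with hφ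
  have hgc : Continuous (gg d E H ν Q f c) := by
    have hlip : LipschitzWith (Real.toNNReal (2 * (Fintype.card ι * K))) (gg d E H ν Q f c) := by
      apply LipschitzWith.of_le_add_mul
      intro t t'
      rw [Real.coe_toNNReal _ (by positivity)]
      exact gg_lip d hd E hE H hc hconv hinter ν hdens Q hQ f hf K hfK c hcK t t'
    exact hlip.continuous
  have hφc : Continuous φ := by rw [hφ]; fun_prop
  obtain ⟨t, ht, hmin⟩ := (isCompact_closedBall (0 : ι → ℝ) R).exists_isMinOn
    ⟨0, Metric.mem_closedBall_self hR.le⟩ hφc.continuousOn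
  have hmin' : ∀ t' ∈ Metric.closedBall (0 : ι → ℝ) R, φ t ≤ φ t' := fun t' h => hmin h
  have h1 := hmin' 0 (Metric.mem_closedBall_self hR.le)
  have h2 := hbox t ht
  have hsum : η * ∑ i, t i ^ 2 ≤ C0 - κ := by
    simp only [hφ, Pi.zero_apply] at h1
    simp at h1
    linarith
  have hti : ∀ i, η * t i ^ 2 ≤ C0 - κ := by
    intro i
    refine le_trans (mul_le_mul_of_nonneg_left ?_ hη.le) hsum
    exact Finset.single_le_sum (f := fun i => t i ^ 2) (fun i _ => sq_nonneg _) (Finset.mem_univ i)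
  have htR : ∀ i, |t i| < R := by
    intro i
    have h3 : t i ^ 2 < R ^ 2 := lt_of_mul_lt_mul_left ((hti i).trans_lt hbig) hη.le
    exact abs_lt_of_sq_lt_sq h3 hR.le
  refine ⟨t, ht, hti, ?_⟩
  have hQt := Qp_cont Q hQ f hf t
  obtain ⟨b, hb⟩ := tilt d E hE H hc hconv hinter ν hdens (Qp Q f t) hQt
  refine ⟨b, hb, fun i => ?_⟩
  have hZ := ZZ_pos H hc hconv hinter ν hdens _ hQt d E hE
  have hfo := first_order (x := c i - b (f i) + 2 * η * t i) (M := 2 * d * K ^ 2 + η)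
    (r := min (R - |t i|) (1 / (2 * d * K))) (lt_min (by linarith [htR i]) (by positivity)) (by
      intro τ hτ
      have hτ1 : |τ| ≤ R - |t i| := hτ.trans (min_le_left _ _)
      have hτ2 : |τ| * (2 * d * K) ≤ 1 := (le_div_iff₀ (by positivity)).1 (hτ.trans (min_le_right _ _))
      set t' := Function.update t i (t i + τ) with ht'
      have ht'b : t' ∈ Metric.closedBall (0 : ι → ℝ) R := by
        rw [mem_closedBall_zero_iff, pi_norm_le_iff_of_nonneg hR.le]
        intro l
        rw [ht', Function.update_apply]
        split_ifs with h
        · have := abs_add_le (t i) τ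
          rw [Real.norm_eq_abs]; linarith
        · exact (htR l).le
      have hup : ∀ (g : ι → ℝ), ∑ l, t' l * g l = ∑ l, t l * g l + τ * g i := by
        intro g
        have : ∀ l, t' l * g l = t l * g l + if l = i then τ * g i else 0 := by
          intro l
          rw [ht', Function.update_apply]
          split_ifs with h
          · rw [h]; ring
          · ring
        rw [Finset.sum_congr rfl fun l _ => this l, Finset.sum_add_distrib]
        simp
      have hup2 : ∑ l, t' l ^ 2 = ∑ l, t l ^ 2 + (2 * τ * t i + τ ^ 2) := by
        have : ∀ l, t' l ^ 2 = t l ^ 2 + if l = i then (2 * τ * t i + τ ^ 2) else 0 := by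
          intro l
          rw [ht', Function.update_apply]
          split_ifs with h
          · rw [h]; ring
          · ring
        rw [Finset.sum_congr rfl fun l _ => this l, Finset.sum_add_distrib]
        simp
      have hQ' : ∀ x, Qp Q f t' x = Qp Q f t x + τ * f i x := by
        intro x
        unfold Qp
        rw [hup fun l => f l x]
        ring
      have h3 := hb (f i) K (-(2 * d * τ)) (hf i) (hfK i) (by
        rw [abs_neg, abs_mul, abs_of_pos (by positivity : (0 : ℝ) < 2 * d)]
        linarith)
      have h4 : ∫ a, VV d E H (Qp Q f t) a ^ 2 * Real.exp (-(2 * d * τ) * ∑ j, f i (a j)) ∂(Measure.pi fun _ => ν) =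
          ZZ d E H ν (Qp Q f t') := by
        rw [ZZ_VV]
        congr 1
        ext a
        rw [VV_change_sq d E H (Qp Q f t) (Qp Q f t') a]
        congr 2
        simp only [hQ']
        rw [Finset.mul_sum, Finset.mul_sum]
        apply Finset.sum_congr rfl
        intro j _
        ring
      rw [h4] at h3
      have hZ' := ZZ_pos H hc hconv hinter ν hdens _ (Qp_cont Q hQ f hf t') d E hE
      have h5 := Real.log_le_log hZ' h3
      rw [Real.log_mul hZ.ne' (Real.exp_pos _).ne', Real.log_exp] at h5
      have h6 := hmin' t' ht'b
      simp only [hφ, gg] at h6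
      rw [hup, hup2] at h6
      have h7 : Real.log (ZZ d E H ν (Qp Q f t')) / (2 * (d * sdim n d)) ≤
          Real.log (ZZ d E H ν (Qp Q f t)) / (2 * (d * sdim n d)) + (-(τ * b (f i)) + 2 * d * τ ^ 2 * K ^ 2) := by
        rw [div_le_iff₀ (by positivity), add_mul, div_mul_cancel₀ _ (by positivity)]
        refine h5.trans (le_of_eq ?_)
        ring
      linarith)
  linarith

lemma sdim_tendsto {n : ℕ} (hn : 1 ≤ n) : Tendsto (fun d : ℕ => (sdim n d : ℝ)) atTop atTop := by
  have h : Tendsto (fun d : ℕ => (d : ℝ) ^ n / n.factorial) atTop atTop :=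
    (Tendsto.comp (tendsto_pow_atTop (by omega)) tendsto_natCast_atTop_atTop).atTop_div_const (by positivity)
  exact tendsto_atTop_mono (fun d => sdim_lower n d) h

lemma ofReal_VV {n : ℕ} (d : ℕ) (E : Fin (sdim n d) → (Fin n → ℕ)) (H : Set (Pt n)) (Q : H → ℝ)
    (a : Fin (sdim n d) → H) : absVDMQ n d E H Q a = ENNReal.ofReal (VV d E H Q a) := rfl

set_option maxHeartbeats 1000000 in
lemma lower {n : ℕ} (hn : 1 ≤ n) (E : ∀ d, Fin (sdim n d) → (Fin n → ℕ)) (hE : ∀ d, IsEnum n d (E d))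
    (H : Set (Pt n)) (hc : IsCompact H) (hconv : Convex ℝ H) (hinter : (interior H).Nonempty)
    (ν : Measure H) (hν : ν Set.univ ≤ 1) (hdens : DensityCond H ν) (Q : H → ℝ) (hQ : Continuous Q)
    (μ : ProbabilityMeasure H) (κ : ℝ)
    (hκ : ∀ Qt : H → ℝ, Continuous Qt → ∀ ε > 0, ∀ᶠ d : ℕ in atTop,
      (κ - ∫ z, Qt z ∂(μ : Measure H) - ε) * (2 * (d * sdim n d)) ≤ Real.log (ZZ d (E d) H ν Qt))
    (G : Set (ProbabilityMeasure H)) (hG : IsOpen G) (hμG : μ ∈ G) (ε : ℝ) (hε : 0 < ε) :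
    ∀ᶠ d : ℕ in atTop, ENNReal.ofReal (Real.exp (2 * (d * sdim n d) * (κ - ∫ z, Q z ∂(μ : Measure H) - 3 * ε))) ≤
      ∫⁻ a in Gtilde d H G, (absVDMQ n d (E d) H Q a) ^ 2 ∂(Measure.pi fun _ : Fin (sdim n d) => ν) := by
  have : CompactSpace H := isCompact_iff_compactSpace.1 hc
  have : IsFiniteMeasure ν := ⟨hν.trans_lt ENNReal.one_lt_top⟩
  obtain ⟨I, ε0, hε0, hI⟩ := nbhd_basis μ G hG hμG
  set f : I → H → ℝ := fun i => (i : BoundedContinuousFunction H ℝ) with hfdef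
  have hf : ∀ i, Continuous (f i) := fun i => i.1.continuous
  set K : ℝ := 1 + ∑ g ∈ I, ‖g‖ with hKdef
  have hK : 1 ≤ K := by
    have : 0 ≤ ∑ g ∈ I, ‖g‖ := Finset.sum_nonneg fun _ _ => norm_nonneg _
    linarith
  have hK0 : 0 < K := by linarith
  have hfK : ∀ i x, |f i x| ≤ K := by
    intro i x
    have h1 := i.1.norm_coe_le_norm x
    have h2 := Finset.single_le_sum (f := fun g : BoundedContinuousFunction H ℝ => ‖g‖)
      (fun _ _ => norm_nonneg _) i.2
    rw [Real.norm_eq_abs] at h1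
    show |i.1 x| ≤ _
    linarith
  set c : I → ℝ := fun i => ∫ x, f i x ∂(μ : Measure H) with hcdef
  have hcK : ∀ i, |c i| ≤ K := by
    intro i
    have := norm_integral_le_of_norm_le_const (μ := (μ : Measure H)) (f := f i) (C := K)
      (Eventually.of_forall (fun x => hfK i x))
    simpa using this
  set q := ∫ z, Q z ∂(μ : Measure H) with hq
  have hqt : ∀ t, ∫ z, Qp Q f t z ∂(μ : Measure H) = q + ∑ i, t i * c i := by
    intro t
    unfold Qp
    rw [integral_add (cint _ hQ) (cint _ (by fun_prop)), integral_finsetSum]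
    · simp only [integral_const_mul]; rfl
    · intro i _
      exact cint _ (by fun_prop)
  obtain ⟨K1, hK1⟩ := ZZ_le H hc ν hν Q hQ
  set κ1 := κ - q with hκ1
  set C0 := max (1 + K1) (κ1 - ε) with hC0
  set Γ := C0 - (κ1 - ε) with hΓ
  have hΓ0 : 0 ≤ Γ := by
    have := le_max_right (1 + K1) (κ1 - ε)
    linarith
  set η := ε0 ^ 2 / (16 * (Γ + 1)) with hη
  have hη0 : 0 < η := by positivity
  set R := Γ / η + 1 with hR
  have hR0 : 0 < R := by positivity
  have hbig : C0 - (κ1 - ε) < η * R ^ 2 := by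
    have h1 : η * R = Γ + η := by rw [hR]; field_simp
    have h2 : 1 ≤ R := by
      have : 0 ≤ Γ / η := by positivity
      linarith
    nlinarith
  have hηΓ : 4 * η * Γ < (ε0 / 2) ^ 2 := by
    rw [hη]
    have : 4 * (ε0 ^ 2 / (16 * (Γ + 1))) * Γ = (ε0 / 2) ^ 2 * (Γ / (Γ + 1)) := by
      field_simp; ring
    rw [this]
    have h2 : Γ / (Γ + 1) < 1 := (div_lt_one (by linarith)).2 (by linarith)
    have h3 : 0 < (ε0 / 2) ^ 2 := by positivity
    nlinarith
  set m : ℝ := ((Fintype.card I : ℕ) : ℝ) with hm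
  have hm0 : 0 ≤ m := by positivity
  set ε2 := min 1 (min (ε0 / 2) (ε / (m * R + 1))) with hε2
  have hε20 : 0 < ε2 := lt_min one_pos (lt_min (by positivity) (by positivity))
  have hε21 : ε2 ≤ 1 := min_le_left _ _
  have hε22 : ε2 ≤ ε0 / 2 := (min_le_right _ _).trans (min_le_left _ _)
  have hε23 : m * R * ε2 ≤ ε := by
    have h1 : ε2 ≤ ε / (m * R + 1) := (min_le_right _ _).trans (min_le_right _ _)
    rw [le_div_iff₀ (by positivity)] at h1
    nlinarith
  have ev1 : ∀ᶠ d : ℕ in atTop, ∀ t ∈ Metric.closedBall (0 : I → ℝ) R, κ1 - ε ≤ gg d (E d) H ν Q f c t := by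
    apply unif_box (fun d => gg d (E d) H ν Q f c) (2 * (m * K)) (by positivity) _ κ1 _ _ (isCompact_closedBall _ _) ε hε
    · filter_upwards [eventually_ge_atTop 1] with d hd t t'
      exact gg_lip d hd (E d) (hE d) H hc hconv hinter ν hdens Q hQ f hf K hfK c hcK t t'
    · intro t ε' hε'
      filter_upwards [hκ (Qp Q f t) (Qp_cont Q hQ f hf t) ε' hε', eventually_ge_atTop 1] with d h1 hd
      have hd' : (0 : ℝ) < d := by exact_mod_cast hd
      have hs' : (0 : ℝ) < sdim n d := by exact_mod_cast sdim_pos n d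
      rw [hqt, ← le_div_iff₀ (by positivity)] at h1
      unfold gg
      linarith
  have ev2 : ∀ᶠ d : ℕ in atTop, 4 * m * Real.exp (-(sdim n d * (ε2 ^ 2 / (4 * K ^ 2)))) ≤ 1 := by
    have h1 : Tendsto (fun d : ℕ => 4 * m * Real.exp (-(sdim n d * (ε2 ^ 2 / (4 * K ^ 2))))) atTop (𝓝 (4 * m * 0)) := by
      apply Filter.Tendsto.const_mul
      apply Real.tendsto_exp_neg_atTop_nhds_zero.comp
      exact (sdim_tendsto hn).atTop_mul_const (by positivity)
    rw [mul_zero] at h1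
    exact (h1.eventually (gt_mem_nhds one_pos)).mono fun _ h => h.le
  have ev3 : ∀ᶠ d : ℕ in atTop, Real.log 2 ≤ 2 * ((d : ℝ) * sdim n d) * ε := by
    have h1 : Tendsto (fun d : ℕ => 2 * ((d : ℝ) * sdim n d) * ε) atTop atTop := by
      apply Tendsto.atTop_mul_const hε
      apply Tendsto.const_mul_atTop two_pos
      exact tendsto_natCast_atTop_atTop.atTop_mul_atTop₀ (sdim_tendsto hn)
    exact h1.eventually_ge_atTop _
  filter_upwards [ev1, ev2, ev3, logfact_le n one_pos, eventually_ge_atTop 1] with d hbox hlarge hlog2 hfact hd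
  have hd' : (0 : ℝ) < d := by exact_mod_cast hd
  have hs' : (0 : ℝ) < sdim n d := by exact_mod_cast sdim_pos n d
  set s : ℝ := ((sdim n d : ℕ) : ℝ) with hs
  have hg0 : gg d (E d) H ν Q f c 0 ≤ C0 := by
    refine le_trans ?_ (le_max_left _ _)
    have hQ0 : Qp Q f 0 = Q := by ext x; simp [Qp]
    unfold gg
    rw [hQ0]
    simp only [Pi.zero_apply, zero_mul, Finset.sum_const_zero, add_zero]
    rw [div_le_iff₀ (by positivity)]
    have hZ := ZZ_pos H hc hconv hinter ν hdens Q hQ d (E d) (hE d)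
    have h1 := Real.log_le_log hZ (hK1 d (E d) (hE d))
    have h2 : ((sdim n d).factorial * Real.exp (K1 * (d * sdim n d))) ^ 2 ≤
        (Real.exp (1 * (d * sdim n d)) * Real.exp (K1 * (d * sdim n d))) ^ 2 := by gcongr
    rw [← Real.exp_add] at h2
    have h3 := Real.log_le_log (by positivity) h2
    rw [Real.log_pow (x := Real.exp _), Real.log_exp] at h3
    push_cast at h3
    linarith
  obtain ⟨t, ht, hti, b, hb, hbi⟩ := vary d hd (E d) (hE d) H hc hconv hinter ν hdens Q hQ f hf K hK hfK c hcK R η (κ1 - ε) C0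
    hR0 hη0 hbox hg0 hbig
  have hQt := Qp_cont Q hQ f hf t
  have hZt := ZZ_pos H hc hconv hinter ν hdens _ hQt d (E d) (hE d)
  have hconc := conc d (E d) (hE d) H hc hconv hinter ν hdens (Qp Q f t) hQt f hf K hK hfK ε2 hε20 hε21 b hb hlarge
  set U : Set (Fin (sdim n d) → H) := {a | ∀ i, |∑ j, f i (a j) - sdim n d * b (f i)| ≤ sdim n d * ε2} with hU
  have hUc : IsClosed U := by
    rw [hU, Set.ofPred_forall]
    refine isClosed_iInter fun i => isClosed_le ?_ continuous_const
    have := hf i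
    fun_prop
  have htR : ∀ i, |t i| ≤ R := by
    intro i
    have h1 := mem_closedBall_zero_iff.1 ht
    exact (norm_le_pi_norm t i).trans h1
  -- U is contained in Gtilde
  have hUG : U ⊆ Gtilde d H G := by
    intro a ha
    apply hI
    intro g hg
    rw [emp_int]
    have h1 := ha ⟨g, hg⟩
    rw [hbi] at h1
    have h2 := hti ⟨g, hg⟩
    set τ := t ⟨g, hg⟩
    have h3 : |2 * η * τ| < ε0 / 2 := by
      apply abs_lt_of_sq_lt_sq _ (by positivity)
      nlinarith
    have h4 : ∑ j, f ⟨g, hg⟩ (a j) = ∑ j, g (a j) := rfl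
    have h5 : c ⟨g, hg⟩ = ∫ x, g x ∂(μ : Measure H) := rfl
    rw [h4, h5] at h1
    have h6 : |(∑ j, g (a j)) / s - (∫ x, g x ∂(μ : Measure H) + 2 * η * τ)| ≤ ε2 := by
      have : (∑ j, g (a j)) / s - (∫ x, g x ∂(μ : Measure H) + 2 * η * τ) =
        (∑ j, g (a j) - s * (∫ x, g x ∂(μ : Measure H) + 2 * η * τ)) / s := by field_simp
      rw [this, abs_div, abs_of_pos hs', div_le_iff₀ hs']
      linarith
    rw [abs_lt] at h3 ⊢
    rw [abs_le] at h6
    constructor <;> linarith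
  set T := ∑ i, t i * c i with hT
  -- pointwise bound on U
  have hpt : ∀ a ∈ U, VV d (E d) H (Qp Q f t) a ^ 2 * Real.exp (2 * (d * s) * (T - ε)) ≤ VV d (E d) H Q a ^ 2 := by
    intro a ha
    rw [VV_change_sq d (E d) H (Qp Q f t) Q a]
    apply mul_le_mul_of_nonneg_left _ (sq_nonneg _)
    apply Real.exp_le_exp.2
    have h1 : ∑ j, (Qp Q f t (a j) - Q (a j)) = ∑ i, t i * ∑ j, f i (a j) := by
      simp only [Qp, add_sub_cancel_left]
      rw [Finset.sum_comm]
      simp only [Finset.mul_sum]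
    have h2 : s * (T - m * R * ε2) ≤ ∑ i, t i * ∑ j, f i (a j) := by
      have : s * (T - m * R * ε2) = ∑ i, (s * (t i * c i) - s * (R * ε2)) := by
        rw [Finset.sum_sub_distrib, ← Finset.mul_sum, Finset.sum_const, Finset.card_univ, nsmul_eq_mul]
        ring
      rw [this]
      apply Finset.sum_le_sum
      intro i _
      have h3 := ha i
      rw [hbi] at h3
      have h4 : |t i * (∑ j, f i (a j) - s * (c i + 2 * η * t i))| ≤ R * (s * ε2) := by
        rw [abs_mul]
        exact mul_le_mul (htR i) h3 (abs_nonneg _) hR0.le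
      have h5 := (abs_le.1 h4).1
      have h6 : 0 ≤ s * (2 * η * t i ^ 2) := by positivity
      have h7 : t i * (∑ j, f i (a j) - s * (c i + 2 * η * t i)) =
        t i * ∑ j, f i (a j) - s * (t i * c i) - s * (2 * η * t i ^ 2) := by ring
      rw [h7] at h5
      linarith
    rw [h1]
    have h3 : s * (T - ε) ≤ ∑ i, t i * ∑ j, f i (a j) := by
      refine le_trans ?_ h2
      gcongr
    calc 2 * (d * s) * (T - ε) = 2 * d * (s * (T - ε)) := by ring
      _ ≤ _ := by gcongr
  have hZlow : Real.exp (2 * (d * s) * (κ1 - ε - T)) ≤ ZZ d (E d) H ν (Qp Q f t) := by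
    have h1 := hbox t ht
    unfold gg at h1
    rw [← sub_le_iff_le_add, le_div_iff₀ (by positivity)] at h1
    rw [← Real.le_log_iff_exp_le hZt]
    linarith
  have hfin : Real.exp (2 * (d * s) * (κ1 - 3 * ε)) ≤ ∫ a in U, VV d (E d) H Q a ^ 2 ∂(Measure.pi fun _ => ν) := by
    calc Real.exp (2 * (d * s) * (κ1 - 3 * ε)) ≤
        Real.exp (2 * (d * s) * (κ1 - ε - T)) / 2 * Real.exp (2 * (d * s) * (T - ε)) := by
          have : (2 : ℝ) = Real.exp (Real.log 2) := (Real.exp_log two_pos).symm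
          conv_rhs => rw [show ∀ x : ℝ, x / 2 = x / Real.exp (Real.log 2) from fun x => by rw [← this]]
          rw [← Real.exp_sub, ← Real.exp_add]
          apply Real.exp_le_exp.2
          linarith
      _ ≤ ZZ d (E d) H ν (Qp Q f t) / 2 * Real.exp (2 * (d * s) * (T - ε)) := by gcongr
      _ ≤ (∫ a in U, VV d (E d) H (Qp Q f t) a ^ 2 ∂(Measure.pi fun _ => ν)) * Real.exp (2 * (d * s) * (T - ε)) :=
          mul_le_mul_of_nonneg_right hconc (Real.exp_pos _).le
      _ = ∫ a in U, VV d (E d) H (Qp Q f t) a ^ 2 * Real.exp (2 * (d * s) * (T - ε)) ∂(Measure.pi fun _ => ν) :=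
          (integral_mul_const _ _).symm
      _ ≤ _ := by
          apply setIntegral_mono_on _ _ hUc.measurableSet hpt
          · exact (pi_int H hc ν (((VV_cont d (E d) H _ hQt).pow 2).mul continuous_const)).integrableOn
          · exact (pi_int H hc ν ((VV_cont d (E d) H _ hQ).pow 2)).integrableOn
  calc _ ≤ ENNReal.ofReal (∫ a in U, VV d (E d) H Q a ^ 2 ∂(Measure.pi fun _ => ν)) := ENNReal.ofReal_le_ofReal hfin
    _ = ∫⁻ a in U, ENNReal.ofReal (VV d (E d) H Q a ^ 2) ∂(Measure.pi fun _ => ν) := by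
        apply ofReal_integral_eq_lintegral_ofReal
        · exact (pi_int H hc ν ((VV_cont d (E d) H _ hQ).pow 2)).integrableOn
        · exact Eventually.of_forall fun a => sq_nonneg _
    _ = ∫⁻ a in U, absVDMQ n d (E d) H Q a ^ 2 ∂(Measure.pi fun _ => ν) := by
        simp only [ofReal_VV, ENNReal.ofReal_pow (VV_nonneg d (E d) H Q _)]
    _ ≤ _ := lintegral_mono_set hUG

lemma Ncast_pos {n d : ℕ} (hd : 1 ≤ d) : (0 : ℝ) < (d : ℝ) * sdim n d := by
  have hd' : (0 : ℝ) < d := by exact_mod_cast hd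
  have hs' : (0 : ℝ) < sdim n d := by exact_mod_cast sdim_pos n d
  positivity

lemma Jd_le_Wd {n d : ℕ} (hd : 1 ≤ d) (E : Fin (sdim n d) → (Fin n → ℕ)) (H : Set (Pt n)) (ν : Measure H)
    (hν : ν Set.univ ≤ 1) (Q : H → ℝ) (G : Set (ProbabilityMeasure H)) :
    Jd n d E H ν Q G ≤ Wd n d E H Q G := by
  have : IsFiniteMeasure ν := ⟨hν.trans_lt ENNReal.one_lt_top⟩
  have hN := Ncast_pos (n := n) hd
  unfold Jd
  set W := Wd n d E H Q G with hW
  have h1 : ∀ a ∈ Gtilde d H G, absVDMQ n d E H Q a ^ 2 ≤ W ^ (2 * ((d : ℝ) * sdim n d)) := by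
    intro a ha
    have h2 : (absVDMQ n d E H Q a) ^ (1 / (d * sdim n d) : ℝ) ≤ W := le_iSup₂_of_le a ha le_rfl
    have h3 := ENNReal.rpow_le_rpow h2 hN.le
    rw [← ENNReal.rpow_mul, one_div_mul_cancel hN.ne', ENNReal.rpow_one] at h3
    rw [mul_comm 2, ENNReal.rpow_mul, ENNReal.rpow_two]
    gcongr
  have h4 : ∫⁻ a in Gtilde d H G, (absVDMQ n d E H Q a) ^ 2 ∂(Measure.pi fun _ : Fin (sdim n d) => ν) ≤
      W ^ (2 * ((d : ℝ) * sdim n d)) := by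
    refine (setLIntegral_mono measurable_const h1).trans ?_
    rw [setLIntegral_const]
    refine mul_le_of_le_one_right zero_le ((measure_mono (Set.subset_univ _)).trans ?_)
    rw [Measure.pi_univ]
    exact Finset.prod_le_one (fun _ _ => zero_le) (fun _ _ => hν)
  rw [mul_assoc]
  refine (ENNReal.rpow_le_rpow h4 (by positivity)).trans (le_of_eq ?_)
  rw [← ENNReal.rpow_mul, mul_one_div_cancel (by positivity), ENNReal.rpow_one]

lemma JQ_le_WQ {n : ℕ} (E : ∀ d, Fin (sdim n d) → (Fin n → ℕ)) (H : Set (Pt n)) (ν : Measure H)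
    (hν : ν Set.univ ≤ 1) (Q : H → ℝ) (μ : ProbabilityMeasure H) :
    JQ n E H ν Q μ ≤ WQ n E H Q μ := by
  unfold JQ WQ
  refine iInf₂_mono fun G _ => limsup_le_limsup ?_
  filter_upwards [eventually_ge_atTop 1] with d hd
  exact Jd_le_Wd hd (E d) H ν hν Q G

lemma WQ_le {n : ℕ} (E : ∀ d, Fin (sdim n d) → (Fin n → ℕ)) (H : Set (Pt n)) (hc : IsCompact H)
    (Q : H → ℝ) (hQ : Continuous Q) (μ : ProbabilityMeasure H) (Qt : H → ℝ) (hQt : Continuous Qt) (ε : ℝ) (hε : 0 < ε) :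
    WQ n E H Q μ ≤ ENNReal.ofReal (Real.exp (∫ z, Qt z ∂(μ : Measure H) - ∫ z, Q z ∂(μ : Measure H) + ε)) *
      deltaBar n E H Qt := by
  have : CompactSpace H := isCompact_iff_compactSpace.1 hc
  set D : BoundedContinuousFunction H ℝ := BoundedContinuousFunction.mkOfCompact ⟨fun x => Qt x - Q x, by fun_prop⟩ with hD
  have hDx : ∀ x, D x = Qt x - Q x := fun x => rfl
  set x := ∫ z, Qt z ∂(μ : Measure H) - ∫ z, Q z ∂(μ : Measure H) with hx
  have hxD : ∫ z, D z ∂(μ : Measure H) = x := by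
    simp only [hDx]
    exact integral_sub (cint _ hQt) (cint _ hQ)
  set G : Set (ProbabilityMeasure H) := {σ | ∫ z, D z ∂(σ : Measure H) < x + ε} with hG
  have hGo : IsOpen G :=
    isOpen_lt (ProbabilityMeasure.continuous_integral_boundedContinuousFunction D) continuous_const
  have hμG : μ ∈ G := by
    show ∫ z, D z ∂(μ : Measure H) < x + ε
    linarith
  refine (iInf₂_le G ⟨hGo, hμG⟩).trans ?_
  unfold deltaBar
  rw [← ENNReal.limsup_const_mul_of_ne_top ENNReal.ofReal_ne_top]
  refine limsup_le_limsup ?_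
  filter_upwards [eventually_ge_atTop 1] with d hd
  have hN := Ncast_pos (n := n) hd
  have hs' : (0 : ℝ) < sdim n d := by exact_mod_cast sdim_pos n d
  refine iSup₂_le fun a ha => ?_
  have h1 : ∫ z, D z ∂(empPM (sdim_pos n d).ne' a : Measure H) < x + ε := ha
  rw [emp_int, div_lt_iff₀ hs'] at h1
  have h2 : absVDMQ n d (E d) H Q a ≤ ENNReal.ofReal (Real.exp ((x + ε) * (d * sdim n d))) * absVDMQ n d (E d) H Qt a := by
    rw [ofReal_VV, ofReal_VV, ← ENNReal.ofReal_mul (Real.exp_pos _).le, VV_change d (E d) H Qt Q a, mul_comm]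
    apply ENNReal.ofReal_le_ofReal
    apply mul_le_mul_of_nonneg_right _ (VV_nonneg _ _ _ _ _)
    apply Real.exp_le_exp.2
    calc (d : ℝ) * ∑ j, (Qt (a j) - Q (a j)) ≤ d * ((x + ε) * sdim n d) := by
          apply mul_le_mul_of_nonneg_left h1.le (by positivity)
      _ = _ := by ring
  have h3 : absVDMQ n d (E d) H Q a ≤ ENNReal.ofReal (Real.exp ((x + ε) * (d * sdim n d))) *
      ⨆ a : Fin (sdim n d) → H, absVDMQ n d (E d) H Qt a :=
    h2.trans (by gcongr; exact le_iSup (fun a => absVDMQ n d (E d) H Qt a) a)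
  refine (ENNReal.rpow_le_rpow h3 (by positivity)).trans ?_
  rw [ENNReal.mul_rpow_of_nonneg _ _ (by positivity), ENNReal.ofReal_rpow_of_pos (Real.exp_pos _), ← Real.exp_mul,
    mul_assoc, mul_one_div_cancel hN.ne', mul_one]

lemma le_JQ {n : ℕ} (hn : 1 ≤ n) (E : ∀ d, Fin (sdim n d) → (Fin n → ℕ)) (hE : ∀ d, IsEnum n d (E d))
    (H : Set (Pt n)) (hc : IsCompact H) (hconv : Convex ℝ H) (hinter : (interior H).Nonempty)
    (ν : Measure H) (hν : ν Set.univ ≤ 1) (hdens : DensityCond H ν) (Q : H → ℝ) (hQ : Continuous Q)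
    (μ : ProbabilityMeasure H) (κ : ℝ)
    (hκ : ∀ Qt : H → ℝ, Continuous Qt →
      ENNReal.ofReal (Real.exp (κ - ∫ z, Qt z ∂(μ : Measure H))) < deltaBar n E H Qt) :
    ENNReal.ofReal (Real.exp (κ - ∫ z, Q z ∂(μ : Measure H))) ≤ JQ n E H ν Q μ := by
  have : IsFiniteMeasure ν := ⟨hν.trans_lt ENNReal.one_lt_top⟩
  set q := ∫ z, Q z ∂(μ : Measure H) with hq
  have h1 : ∀ ε > 0, ENNReal.ofReal (Real.exp (κ - q - 3 * ε)) ≤ JQ n E H ν Q μ := by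
    intro ε hε
    refine le_iInf₂ fun G hG => ?_
    have h2 := lower hn E hE H hc hconv hinter ν hν hdens Q hQ μ κ (by
      intro Qt hQt ε' hε'
      have := bz E hE H hc hconv hinter ν hdens Qt hQt _ (hκ Qt hQt) (ε' / 3) (by positivity)
      filter_upwards [this] with d hd
      convert hd using 2
      ring) G hG.1 hG.2 ε hε
    refine le_limsup_of_frequently_le ?_
    refine (h2.and (eventually_ge_atTop 1)).frequently.mono ?_
    rintro d ⟨h3, hd⟩
    have hN := Ncast_pos (n := n) hd
    unfold Jd
    rw [mul_assoc]
    refine le_trans (le_of_eq ?_) (ENNReal.rpow_le_rpow h3 (by positivity))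
    rw [ENNReal.ofReal_rpow_of_pos (Real.exp_pos _), ← Real.exp_mul]
    have hs' : ((sdim n d : ℕ) : ℝ) ≠ 0 := by exact_mod_cast (sdim_pos n d).ne'
    have hd' : (d : ℝ) ≠ 0 := by
      have : d ≠ 0 := by omega
      exact_mod_cast this
    congr 2
    rw [hq]
    field_simp
  have h4 : Tendsto (fun ε : ℝ => ENNReal.ofReal (Real.exp (κ - q - 3 * ε))) (𝓝[>] 0)
      (𝓝 (ENNReal.ofReal (Real.exp (κ - q - 3 * 0)))) := by
    apply Tendsto.mono_left _ nhdsWithin_le_nhds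
    apply ENNReal.tendsto_ofReal
    apply Continuous.tendsto
    fun_prop
  rw [mul_zero, sub_zero] at h4
  exact le_of_tendsto h4 (eventually_nhdsWithin_of_forall fun ε hε => h1 ε hε)

/-- **Corollary (weighted main result).** Let `H ⊂ ℂⁿ` be a compact convex set with nonempty
interior and suppose `(H, ν)` satisfies the density condition. Then for every continuous
`Q : H → ℝ` (with `w = e^{-Q}`) and every `μ ∈ 𝓜(H)`,
`J^Q(μ) = W^Q(μ) = (inf { δ̄^{e^{-Q̃}}(H) · exp(∫_H Q̃ dμ) : Q̃ : H → ℝ continuous }) · exp(-∫_H Q dμ)`. -/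
theorem JQ_eq_WQ_eq_inf_weighted_transfinite
    (n : ℕ) (hn : 1 ≤ n)
    (E : ∀ d, Fin (sdim n d) → (Fin n → ℕ)) (hE : ∀ d, IsEnum n d (E d))
    (H : Set (Pt n)) (hHcomp : IsCompact H) (hHconv : Convex ℝ H)
    (hHint : (interior H).Nonempty)
    (ν : Measure H) (hν : ν Set.univ ≤ 1) (hdens : DensityCond H ν)
    (Q : H → ℝ) (hQ : Continuous Q)
    (μ : ProbabilityMeasure H) :
    JQ n E H ν Q μ = WQ n E H Q μ ∧
    WQ n E H Q μ =
      (⨅ (Qt : H → ℝ) (_ : Continuous Qt),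
        deltaBar n E H Qt * ENNReal.ofReal (Real.exp (∫ z, Qt z ∂(μ : Measure H)))) *
      ENNReal.ofReal (Real.exp (-∫ z, Q z ∂(μ : Measure H))) := by
  set q := ∫ z, Q z ∂(μ : Measure H) with hq
  set I := ⨅ (Qt : H → ℝ) (_ : Continuous Qt),
        deltaBar n E H Qt * ENNReal.ofReal (Real.exp (∫ z, Qt z ∂(μ : Measure H))) with hI
  have hw0 : ENNReal.ofReal (Real.exp (-q)) ≠ 0 := by
    simpa using Real.exp_pos (-q)
  have hwt : ENNReal.ofReal (Real.exp (-q)) ≠ ⊤ := ENNReal.ofReal_ne_top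
  have hJW := JQ_le_WQ E H ν hν Q μ
  have hWI : WQ n E H Q μ ≤ I * ENNReal.ofReal (Real.exp (-q)) := by
    rw [← ENNReal.div_le_iff hw0 hwt]
    refine le_iInf₂ fun Qt hQt => ?_
    rw [ENNReal.div_le_iff hw0 hwt]
    set y := ∫ z, Qt z ∂(μ : Measure H) with hy
    have h1 : Tendsto (fun ε : ℝ => ENNReal.ofReal (Real.exp (y - q + ε)) * deltaBar n E H Qt) (𝓝[>] 0)
        (𝓝 (ENNReal.ofReal (Real.exp (y - q + 0)) * deltaBar n E H Qt)) := by
      apply ENNReal.Tendsto.mul_const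
      · apply Tendsto.mono_left _ nhdsWithin_le_nhds
        apply ENNReal.tendsto_ofReal
        apply Continuous.tendsto (f := fun ε => Real.exp (y - q + ε))
        fun_prop
      · left
        simpa using Real.exp_pos (y - q + 0)
    have h2 := ge_of_tendsto h1 (eventually_nhdsWithin_of_forall fun ε hε =>
      WQ_le E H hHcomp Q hQ μ Qt hQt ε hε)
    refine h2.trans (le_of_eq ?_)
    rw [add_zero, sub_eq_add_neg, Real.exp_add, ENNReal.ofReal_mul (Real.exp_pos _).le]
    ring
  have hIJ : I * ENNReal.ofReal (Real.exp (-q)) ≤ JQ n E H ν Q μ := by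
    rw [← ENNReal.le_div_iff_mul_le (Or.inl hw0) (Or.inl hwt)]
    refine le_of_forall_lt_imp_le_of_dense fun x hx => ?_
    rw [ENNReal.le_div_iff_mul_le (Or.inl hw0) (Or.inl hwt)]
    rcases eq_or_ne x 0 with h0 | h0
    · simp [h0]
    have hxt : x ≠ ⊤ := hx.ne_top
    have hxpos := ENNReal.toReal_pos h0 hxt
    set κ := Real.log x.toReal with hκ
    have hxe : x = ENNReal.ofReal (Real.exp κ) := by
      rw [hκ, Real.exp_log hxpos, ENNReal.ofReal_toReal hxt]
    rw [hxe, ← ENNReal.ofReal_mul (Real.exp_pos _).le, ← Real.exp_add, ← sub_eq_add_neg]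
    refine le_JQ hn E hE H hHcomp hHconv hHint ν hν hdens Q hQ μ κ ?_
    intro Qt hQt
    by_contra hcon
    push Not at hcon
    have h1 : I ≤ deltaBar n E H Qt * ENNReal.ofReal (Real.exp (∫ z, Qt z ∂(μ : Measure H))) := iInf₂_le Qt hQt
    have h2 : I ≤ x := by
      refine h1.trans ((mul_le_mul_left hcon _).trans (le_of_eq ?_))
      rw [hxe, ← ENNReal.ofReal_mul (Real.exp_pos _).le, ← Real.exp_add, sub_add_cancel]
    exact absurd hx (not_lt.2 h2)
  exact ⟨le_antisymm hJW (hWI.trans hIJ), le_antisymm hWI (hIJ.trans hJW)⟩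

end
end

section
/- Let Q : H → ℝ be continuous and w = e^{−Q}. Then for every μ ∈ 𝓜(H): J(μ) = J^Q(μ) · exp(∫_H Q dμ) and W(μ) = W^Q(μ) · exp(∫_H Q dμ). -/
open MeasureTheory Filter Topology ENNReal

noncomputable section

lemma abstract_le {X : Type*} [TopologicalSpace X] (x : X) (F₁ F₂ : Set X → ℕ → ℝ≥0∞)
    (mono₂ : ∀ G G' d, G ⊆ G' → F₂ G d ≤ F₂ G' d) (I : ℝ)
    (h : ∀ ε : ℝ, 0 < ε → ∃ U : Set X, IsOpen U ∧ x ∈ U ∧ ∀ G, G ⊆ U → ∀ d : ℕ, 1 ≤ d →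
      F₁ G d ≤ F₂ G d * ENNReal.ofReal (Real.exp (I + ε))) :
    (⨅ G ∈ {G : Set X | IsOpen G ∧ x ∈ G}, limsup (F₁ G) atTop) ≤
      (⨅ G ∈ {G : Set X | IsOpen G ∧ x ∈ G}, limsup (F₂ G) atTop) *
        ENNReal.ofReal (Real.exp I) := by
  have key : ∀ ε : ℝ, 0 < ε → (⨅ G ∈ {G : Set X | IsOpen G ∧ x ∈ G}, limsup (F₁ G) atTop) ≤
      (⨅ G ∈ {G : Set X | IsOpen G ∧ x ∈ G}, limsup (F₂ G) atTop) *
        ENNReal.ofReal (Real.exp (I + ε)) := by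
    intro ε hε
    obtain ⟨U, hU, hxU, hb⟩ := h ε hε
    have c0 : ENNReal.ofReal (Real.exp (I + ε)) ≠ 0 := by
      simp [Real.exp_pos]
    have ct : ENNReal.ofReal (Real.exp (I + ε)) ≠ ⊤ := ENNReal.ofReal_ne_top
    rw [← ENNReal.div_le_iff c0 ct]
    refine le_iInf₂ fun G hG => ?_
    rw [ENNReal.div_le_iff c0 ct]
    refine (iInf₂_le (G ∩ U) ⟨hG.1.inter hU, hG.2, hxU⟩).trans ?_
    have hl : limsup (fun d => ENNReal.ofReal (Real.exp (I + ε)) * F₂ G d) atTop =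
        ENNReal.ofReal (Real.exp (I + ε)) * limsup (F₂ G) atTop :=
      ENNReal.limsup_const_mul_of_ne_top ct
    rw [mul_comm, ← hl]
    refine limsup_le_limsup ?_
    filter_upwards [eventually_ge_atTop 1] with d hd
    rw [mul_comm]
    exact (hb _ Set.inter_subset_right d hd).trans
      (mul_le_mul_left (mono₂ _ _ d Set.inter_subset_left) _)
  have ht : Tendsto (fun ε : ℝ => (⨅ G ∈ {G : Set X | IsOpen G ∧ x ∈ G}, limsup (F₂ G) atTop) *
        ENNReal.ofReal (Real.exp (I + ε))) (𝓝[>] 0)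
      (𝓝 ((⨅ G ∈ {G : Set X | IsOpen G ∧ x ∈ G}, limsup (F₂ G) atTop) *
        ENNReal.ofReal (Real.exp I))) := by
    refine ENNReal.Tendsto.const_mul ?_ (Or.inl (by simp [Real.exp_pos]))
    have : Continuous fun ε : ℝ => ENNReal.ofReal (Real.exp (I + ε)) :=
      ENNReal.continuous_ofReal.comp (by fun_prop)
    have h2 := (this.tendsto 0).mono_left (nhdsWithin_le_nhds (s := Set.Ioi 0))
    simpa using h2
  refine ge_of_tendsto ht ?_
  filter_upwards [self_mem_nhdsWithin] with ε hε
  exact key ε hε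

lemma integral_empPM {X : Type*} [MeasurableSpace X] {s : ℕ} (hs : s ≠ 0)
    (a : Fin s → X) (f : X → ℝ) (hf : StronglyMeasurable f) :
    ∫ z, f z ∂(empPM hs a : Measure X) = (s : ℝ)⁻¹ * ∑ j, f (a j) := by
  change ∫ z, f z ∂(emp a) = _
  rw [emp, integral_smul_measure, integral_finset_sum_measure]
  · simp [integral_dirac' _ _ hf]
  · intro i _
    exact integrable_dirac' hf (by simp)

lemma absVDMQ_measurable (n d : ℕ) (E : Fin (sdim n d) → (Fin n → ℕ)) (H : Set (Pt n))
    (Q : H → ℝ) (hQ : Continuous Q) : Measurable (absVDMQ n d E H Q) := by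
  have : Continuous (absVDMQ n d E H Q) := by
    unfold absVDMQ VDM
    refine ENNReal.continuous_ofReal.comp ?_
    refine Continuous.mul (Continuous.norm (Continuous.matrix_det ?_)) (by fun_prop)
    refine continuous_matrix fun i j => ?_
    simp only [Matrix.of_apply]
    fun_prop
  exact this.measurable

lemma exists_nhd {n : ℕ} (H : Set (Pt n)) (hH : IsCompact H) (R : H → ℝ) (hR : Continuous R)
    (μ : ProbabilityMeasure H) (ε : ℝ) (hε : 0 < ε) :
    ∃ U : Set (ProbabilityMeasure H), IsOpen U ∧ μ ∈ U ∧
      ∀ ρ ∈ U, ∫ z, R z ∂(ρ : Measure H) < ∫ z, R z ∂(μ : Measure H) + ε := by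
  haveI : CompactSpace H := isCompact_iff_compactSpace.mp hH
  let f : BoundedContinuousFunction H ℝ := BoundedContinuousFunction.mkOfCompact ⟨R, hR⟩
  have hc : Continuous fun ρ : ProbabilityMeasure H => ∫ z, f z ∂(ρ : Measure H) := by
    rw [continuous_iff_continuousAt]
    intro ρ
    exact (ProbabilityMeasure.tendsto_iff_forall_integral_tendsto.mp tendsto_id) f
  refine ⟨{ρ | ∫ z, f z ∂(ρ : Measure H) < ∫ z, R z ∂(μ : Measure H) + ε},
    isOpen_lt hc continuous_const, ?_, fun ρ hρ => hρ⟩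
  change ∫ z, R z ∂(μ : Measure H) < ∫ z, R z ∂(μ : Measure H) + ε
  linarith

lemma absVDMQ_le {n d : ℕ} (E : Fin (sdim n d) → (Fin n → ℕ)) (H : Set (Pt n))
    (Q₁ Q₂ : H → ℝ) (h₁ : Continuous Q₁) (h₂ : Continuous Q₂) (a : Fin (sdim n d) → H) (C : ℝ)
    (h : ∫ z, (Q₂ z - Q₁ z) ∂(empPM (sdim_pos n d).ne' a : Measure H) ≤ C) :
    absVDMQ n d E H Q₁ a ≤ absVDMQ n d E H Q₂ a *
      ENNReal.ofReal (Real.exp (d * sdim n d * C)) := by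
  rw [integral_empPM _ _ (fun z => Q₂ z - Q₁ z) (h₂.sub h₁).stronglyMeasurable] at h
  have hs : (0 : ℝ) < sdim n d := by exact_mod_cast sdim_pos n d
  rw [inv_mul_le_iff₀ hs, Finset.sum_sub_distrib] at h
  unfold absVDMQ
  rw [← ENNReal.ofReal_mul (by positivity), mul_assoc]
  refine ENNReal.ofReal_le_ofReal (mul_le_mul_of_nonneg_left ?_ (norm_nonneg _))
  rw [← Real.exp_sum, ← Real.exp_sum, ← Real.exp_add, Real.exp_le_exp,
    ← Finset.mul_sum, ← Finset.mul_sum]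
  have := mul_le_mul_of_nonneg_left h (Nat.cast_nonneg (α := ℝ) d)
  linarith

lemma J_le (n : ℕ) (E : ∀ d, Fin (sdim n d) → (Fin n → ℕ))
    (H : Set (Pt n)) (hH : IsCompact H) (ν : Measure H)
    (Q₁ Q₂ : H → ℝ) (h₁ : Continuous Q₁) (h₂ : Continuous Q₂) (μ : ProbabilityMeasure H) :
    JQ n E H ν Q₁ μ ≤ JQ n E H ν Q₂ μ *
      ENNReal.ofReal (Real.exp (∫ z, (Q₂ z - Q₁ z) ∂(μ : Measure H))) := by
  refine abstract_le μ (fun G d => Jd n d (E d) H ν Q₁ G) (fun G d => Jd n d (E d) H ν Q₂ G)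
    ?_ _ ?_
  · intro G G' d hG
    refine ENNReal.rpow_le_rpow (lintegral_mono_set fun a ha => hG ha) (by positivity)
  · intro ε hε
    obtain ⟨U, hU, hμ, hb⟩ := exists_nhd H hH (fun z => Q₂ z - Q₁ z) (h₂.sub h₁) μ ε hε
    refine ⟨U, hU, hμ, fun G hG d hd => ?_⟩
    set C := ∫ z, (Q₂ z - Q₁ z) ∂(μ : Measure H) + ε with hC
    have hs : (0 : ℝ) < sdim n d := by exact_mod_cast sdim_pos n d
    have hd' : (0 : ℝ) < d := by exact_mod_cast hd
    have hm := (absVDMQ_measurable n d (E d) H Q₂ h₂).pow_const 2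
    have e : ENNReal.ofReal (Real.exp C) =
        (ENNReal.ofReal (Real.exp (d * sdim n d * C)) ^ 2) ^ (1 / (2 * d * sdim n d) : ℝ) := by
      rw [← ENNReal.ofReal_pow (Real.exp_pos _).le,
        ENNReal.ofReal_rpow_of_nonneg (by positivity) (by positivity), ← Real.exp_nat_mul,
        ← Real.exp_mul]
      congr 2
      push_cast
      field_simp
    simp only [Jd]
    rw [e, ← ENNReal.mul_rpow_of_nonneg _ _ (by positivity)]
    refine ENNReal.rpow_le_rpow ?_ (by positivity)
    rw [← lintegral_mul_const _ hm]
    refine setLIntegral_mono (hm.mul_const _) fun a ha => ?_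
    rw [← mul_pow]
    exact pow_le_pow_left' (absVDMQ_le (E d) H Q₁ Q₂ h₁ h₂ a C (hb _ (hG ha)).le) 2

lemma W_le (n : ℕ) (E : ∀ d, Fin (sdim n d) → (Fin n → ℕ))
    (H : Set (Pt n)) (hH : IsCompact H)
    (Q₁ Q₂ : H → ℝ) (h₁ : Continuous Q₁) (h₂ : Continuous Q₂) (μ : ProbabilityMeasure H) :
    WQ n E H Q₁ μ ≤ WQ n E H Q₂ μ *
      ENNReal.ofReal (Real.exp (∫ z, (Q₂ z - Q₁ z) ∂(μ : Measure H))) := by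
  refine abstract_le μ (fun G d => Wd n d (E d) H Q₁ G) (fun G d => Wd n d (E d) H Q₂ G)
    ?_ _ ?_
  · intro G G' d hG
    exact biSup_mono fun a ha => hG ha
  · intro ε hε
    obtain ⟨U, hU, hμ, hb⟩ := exists_nhd H hH (fun z => Q₂ z - Q₁ z) (h₂.sub h₁) μ ε hε
    refine ⟨U, hU, hμ, fun G hG d hd => ?_⟩
    set C := ∫ z, (Q₂ z - Q₁ z) ∂(μ : Measure H) + ε with hC
    have hs : (0 : ℝ) < sdim n d := by exact_mod_cast sdim_pos n d
    have hd' : (0 : ℝ) < d := by exact_mod_cast hd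
    have e : ENNReal.ofReal (Real.exp C) =
        (ENNReal.ofReal (Real.exp (d * sdim n d * C))) ^ (1 / (d * sdim n d) : ℝ) := by
      rw [ENNReal.ofReal_rpow_of_nonneg (by positivity) (by positivity), ← Real.exp_mul]
      congr 2
      field_simp
    simp only [Wd]
    refine iSup₂_le fun a ha => ?_
    have h3 := ENNReal.rpow_le_rpow (z := (1 / (d * sdim n d) : ℝ))
      (absVDMQ_le (E d) H Q₁ Q₂ h₁ h₂ a C (hb _ (hG ha)).le) (by positivity)
    rw [ENNReal.mul_rpow_of_nonneg _ _ (by positivity), ← e] at h3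
    refine h3.trans (mul_le_mul_left ?_ _)
    exact le_iSup₂ (f := fun a (_ : a ∈ Gtilde d H G) =>
      (absVDMQ n d (E d) H Q₂ a) ^ (1 / (d * sdim n d) : ℝ)) a ha

lemma combine {x y : ℝ≥0∞} {I : ℝ} (h₁ : x ≤ y * ENNReal.ofReal (Real.exp I))
    (h₂ : y ≤ x * ENNReal.ofReal (Real.exp (-I))) : x = y * ENNReal.ofReal (Real.exp I) := by
  refine le_antisymm h₁ ((mul_le_mul_left h₂ _).trans ?_)
  rw [mul_assoc, ← ENNReal.ofReal_mul (Real.exp_pos _).le, ← Real.exp_add]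
  simp

/-- **Proposition (weighted vs. unweighted functionals).** Let `Q : H → ℝ` be continuous and
`w = e^{-Q}`. Then for every `μ ∈ 𝓜(H)`: `J(μ) = J^Q(μ) · exp(∫_H Q dμ)` and
`W(μ) = W^Q(μ) · exp(∫_H Q dμ)`. -/
theorem J_eq_JQ_mul_exp_and_W_eq_WQ_mul_exp
    (n : ℕ) (hn : 1 ≤ n)
    (E : ∀ d, Fin (sdim n d) → (Fin n → ℕ)) (hE : ∀ d, IsEnum n d (E d))
    (H : Set (Pt n)) (hHcomp : IsCompact H)
    (ν : Measure H) (hν : ν Set.univ ≤ 1)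
    (Q : H → ℝ) (hQ : Continuous Q)
    (μ : ProbabilityMeasure H) :
    JQ n E H ν 0 μ = JQ n E H ν Q μ * ENNReal.ofReal (Real.exp (∫ z, Q z ∂(μ : Measure H))) ∧
    WQ n E H 0 μ = WQ n E H Q μ * ENNReal.ofReal (Real.exp (∫ z, Q z ∂(μ : Measure H))) := by
  have c0 : Continuous (0 : H → ℝ) := continuous_const
  constructor
  · refine combine ?_ ?_
    · simpa using J_le n E H hHcomp ν 0 Q c0 hQ μ
    · simpa [integral_neg] using J_le n E H hHcomp ν Q 0 hQ c0 μ
  · refine combine ?_ ?_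
    · simpa using W_le n E H hHcomp 0 Q c0 hQ μ
    · simpa [integral_neg] using W_le n E H hHcomp Q 0 hQ c0 μ

end
end
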